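/- There exists a polynomial map f : ℝ² → ℝ² (both coordinate functions real polynomials in two variables, of degree at least 2) that has infinitely many distinct sinks (infinitely many pairwise disjoint attracting periodic orbits) and a period doubling Cantor attractor. -/

import Mathlib

/-!
Let `c` be the Feigenbaum parameter of the family `x ↦ c - x²`, obtained from nested windows of
parameters on which more and more renormalizations are unimodal. For polynomials `A` and `B`, the
line `v = 0` is invariant under `f (v, x) = (v² A, c - x² + v² B)`, which acts on it by `c - x²`
and contracts superexponentially towards it. The nested renormalization intervals cut out the
adding machine of `c - x²`: they shrink to points because the renormalizations expand cross-ratios.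
Since `f` is nonsingular almost everywhere, almost every orbit near the line avoids the repelling
periodic points and accumulates on the Cantor set.

The sinks come from a heteroclinic cycle of four saddles at the corners of a square, chosen
invariant under the quarter turn of the square. A passage of length `N` near a saddle with
eigenvalues `t⁻¹` and `t` is, in rescaled coordinates, close to the saddle's linear part, and four
passages separated by quarter turns form a contraction of a small box. Each large `N` gives an
attracting periodic orbit in this way, and different `N` give different points.

To combine the two, the square map is altered, by a polynomial weight that is tiny on the square,
so that on a line outside the square it becomes a quadratic polynomial to second order. An affine
chart turns this line into `v = 0` and the altered map into some `f` as above. The weight breaks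
the symmetry, but the four rotated copies of the altered map are all close to the square map, and
only this is needed for the passages.
-/

open Filter Set

/-- `f : ℝ² → ℝ²` is a polynomial map of degree at least 2. -/
def IsPolyMapDegTwo (f : ℝ × ℝ → ℝ × ℝ) : Prop :=
  ∃ P Q : MvPolynomial (Fin 2) ℝ,
    2 ≤ max P.totalDegree Q.totalDegree ∧
    ∀ p : ℝ × ℝ,
      f p = (MvPolynomial.eval ![p.1, p.2] P, MvPolynomial.eval ![p.1, p.2] Q)

/-- `p` is a sink of `f`. -/
def IsSink (f : ℝ × ℝ → ℝ × ℝ) (p : ℝ × ℝ) (n : ℕ) : Prop :=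
  1 ≤ n ∧ f^[n] p = p ∧
    ∃ W : Set (ℝ × ℝ), IsOpen W ∧ p ∈ W ∧
      ∀ x ∈ W, Tendsto (fun k => f^[k * n] x) atTop (nhds p)

/-- The forward orbit of a point. -/
def fwdOrbit (f : ℝ × ℝ → ℝ × ℝ) (p : ℝ × ℝ) : Set (ℝ × ℝ) :=
  Set.range fun k => f^[k] p

/-- `f` has infinitely many distinct sinks: a sequence of sinks with pairwise disjoint
periodic orbits. -/
def HasInfinitelyManySinks (f : ℝ × ℝ → ℝ × ℝ) : Prop :=
  ∃ (p : ℕ → ℝ × ℝ) (n : ℕ → ℕ),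
    (∀ i, IsSink f (p i) (n i)) ∧
    Pairwise fun i j => Disjoint (fwdOrbit f (p i)) (fwdOrbit f (p j))

/-- `A` is a period doubling Cantor attractor of `f`. -/
def IsPDCantorAttractor (f : ℝ × ℝ → ℝ × ℝ) (A : Set (ℝ × ℝ)) : Prop :=
  IsCompact A ∧ f '' A = A ∧
    (∃ e : A ≃ₜ ℤ_[2], ∀ (x : A) (hx : f ↑x ∈ A), e ⟨f ↑x, hx⟩ = e x + 1) ∧
    ∃ U : Set (ℝ × ℝ), IsOpen U ∧ A ⊆ U ∧
      ∀ᵐ x ∂MeasureTheory.volume, x ∈ U →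
        (omegaLimit atTop (fun n : ℕ => f^[n]) {x} ∩ A).Nonempty

/-! ### Infinite renormalization in the quadratic family -/

/-- The profile `ψ_k` of the `k`-th renormalization of `x ↦ c - x²`, in the variable `t = x²`. -/
def quadProfile (c : ℝ) : ℕ → ℝ → ℝ
  | 0, t => c - t
  | k + 1, t => -quadProfile c k (quadProfile c k t ^ 2)

/-- The `k`-th renormalization of `x ↦ c - x²`. It is not rescaled, and it is reflected at every
step, `f_{k+1} = -(f_k ∘ f_k)`, so that each `f_k` is even with its maximum at `0`. -/
def quadRenorm (c : ℝ) (k : ℕ) (x : ℝ) : ℝ := quadProfile c k (x ^ 2)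

/-- The radius `q_k` of the `k`-th renormalization interval `[-q_k, q_k]`: `-q_0` is the left fixed
point of `x ↦ c - x²`, and `q_{k+1}` is the fixed point of `f_k` in `[0, q_k]` (the supremum is over
a singleton in the cases of interest). -/
noncomputable def renormRadius (c : ℝ) : ℕ → ℝ
  | 0 => (1 + √(1 + 4 * c)) / 2
  | k + 1 => sSup {p ∈ Icc 0 (renormRadius c k) | quadRenorm c k p = p}

theorem quadRenorm_zero (c x : ℝ) : quadRenorm c 0 x = c - x ^ 2 := rfl

theorem quadRenorm_succ (c : ℝ) (k : ℕ) (x : ℝ) :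
    quadRenorm c (k + 1) x = -quadRenorm c k (quadRenorm c k x) := rfl

theorem quadRenorm_neg (c : ℝ) (k : ℕ) (x : ℝ) : quadRenorm c k (-x) = quadRenorm c k x := by
  simp only [quadRenorm, neg_sq]

theorem quadRenorm_abs (c : ℝ) (k : ℕ) (x : ℝ) : quadRenorm c k |x| = quadRenorm c k x := by
  simp only [quadRenorm, sq_abs]

theorem contDiff_quadProfile_uncurry (k : ℕ) {n : WithTop ℕ∞} :
    ContDiff ℝ n fun z : ℝ × ℝ ↦ quadProfile z.1 k z.2 := by
  induction k with
  | zero => exact contDiff_fst.sub contDiff_snd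
  | succ k ih => exact (ih.comp (contDiff_fst.prodMk (ih.pow 2))).neg

theorem continuous_quadRenorm_uncurry (k : ℕ) : Continuous fun z : ℝ × ℝ ↦ quadRenorm z.1 k z.2 :=
  (contDiff_quadProfile_uncurry k (n := 0)).continuous.comp
    (continuous_fst.prodMk (continuous_snd.pow 2))

theorem continuous_quadProfile (c : ℝ) (k : ℕ) : Continuous (quadProfile c k) :=
  (contDiff_quadProfile_uncurry k (n := 0)).continuous.comp (Continuous.prodMk_right c)

theorem continuous_quadRenorm (c : ℝ) (k : ℕ) : Continuous (quadRenorm c k) :=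
  (continuous_quadProfile c k).comp (continuous_pow 2)

theorem differentiable_quadRenorm (c : ℝ) (k : ℕ) : Differentiable ℝ (quadRenorm c k) :=
  ((contDiff_quadProfile_uncurry k (n := 1)).comp
    (contDiff_prodMk_right c)).differentiable one_ne_zero |>.comp (differentiable_pow 2)

/-- `f` decreases strictly on `[0, q]`, down to the value `-q`. For an even `f` with `0 < f 0 ≤ q`
this makes `f` a unimodal self-map of `[-q, q]` fixing `-q`. -/
structure IsUnimodal (f : ℝ → ℝ) (q : ℝ) : Prop where
  pos : 0 < q
  strictAntiOn : StrictAntiOn f (Icc 0 q)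
  map_radius : f q = -q

namespace IsUnimodal

variable {f : ℝ → ℝ} {p q x y : ℝ}

theorem map_le_map (h : IsUnimodal f q) (hx : 0 ≤ x) (hxy : x ≤ y) (hy : y ≤ q) : f y ≤ f x :=
  h.strictAntiOn.antitoneOn ⟨hx, hxy.trans hy⟩ ⟨hx.trans hxy, hy⟩ hxy

theorem map_lt_map (h : IsUnimodal f q) (hx : 0 ≤ x) (hxy : x < y) (hy : y ≤ q) : f y < f x :=
  h.strictAntiOn ⟨hx, hxy.le.trans hy⟩ ⟨hx.trans hxy.le, hy⟩ hxy

theorem exists_map_eq_self (h : IsUnimodal f q) (hf : Continuous f) (h0 : 0 < f 0) :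
    ∃ p ∈ Ioo 0 q, f p = p := by
  have hq := h.pos
  obtain ⟨p, hp, hfp : f p - p = 0⟩ : (0 : ℝ) ∈ (fun x ↦ f x - x) '' Ioo 0 q :=
    intermediate_value_Ioo' hq.le (by fun_prop)
      ⟨by linarith [h.map_radius], by simpa using h0⟩
  exact ⟨p, hp, sub_eq_zero.1 hfp⟩

theorem eq_of_map_eq_self (h : IsUnimodal f q) (hx : x ∈ Icc 0 q) (hy : y ∈ Icc 0 q)
    (hfx : f x = x) (hfy : f y = y) : x = y := by
  rcases lt_trichotomy x y with hxy | hxy | hxy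
  · linarith [h.map_lt_map hx.1 hxy hy.2]
  · exact hxy
  · linarith [h.map_lt_map hy.1 hxy hx.2]

theorem neg_comp_self (h : IsUnimodal f q) (hp : p ∈ Ioo 0 q) (hfp : f p = p) (h0 : f 0 ≤ q) :
    IsUnimodal (fun x ↦ -f (f x)) p where
  pos := hp.1
  strictAntiOn := by
    have map_mem : ∀ x ∈ Icc 0 p, f x ∈ Icc 0 q := fun x hx ↦
      ⟨by linarith [h.map_le_map hx.1 hx.2 hp.2.le, hp.1],
        (h.map_le_map le_rfl hx.1 (hx.2.trans hp.2.le)).trans h0⟩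
    intro x hx y hy hxy
    exact neg_lt_neg (h.map_lt_map (map_mem y hy).1 (h.map_lt_map hx.1 hxy (hy.2.trans hp.2.le))
      (map_mem x hx).2)
  map_radius := by rw [hfp, hfp]

theorem map_map_zero_neg (h : IsUnimodal f q) (hf : Continuous f) (h0 : 0 < f 0) (h0q : f 0 ≤ q)
    (hfix : f (f (f 0)) = -f (f 0)) : f (f 0) < 0 := by
  by_contra! ht
  obtain ⟨p, hp, hfp⟩ := h.exists_map_eq_self hf h0
  have hpt : p < f (f 0) := by
    by_contra! hle
    linarith [h.map_le_map ht hle hp.2.le, hp.1]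
  have hp0 : p ≤ f 0 := hfp.symm.trans_le (h.map_le_map le_rfl hp.1.le hp.2.le)
  linarith [h.map_le_map hp.1.le hp0 h0q]

end IsUnimodal

theorem isUnimodal_quadRenorm_zero {c : ℝ} (hc : 0 ≤ c) :
    IsUnimodal (quadRenorm c 0) (renormRadius c 0) where
  pos := by simp only [renormRadius]; positivity
  strictAntiOn x hx y _ hxy := by
    simp only [quadRenorm_zero]
    nlinarith [hx.1]
  map_radius := by
    simp only [quadRenorm_zero, renormRadius]
    linear_combination (-1 / 4) * Real.sq_sqrt (show 0 ≤ 1 + 4 * c by linarith)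

theorem IsUnimodal.renormRadius_succ {c : ℝ} {k : ℕ}
    (h : IsUnimodal (quadRenorm c k) (renormRadius c k)) (h0 : 0 < quadRenorm c k 0) :
    renormRadius c (k + 1) ∈ Ioo 0 (renormRadius c k) ∧
      quadRenorm c k (renormRadius c (k + 1)) = renormRadius c (k + 1) := by
  obtain ⟨p, hp, hfp⟩ := h.exists_map_eq_self (continuous_quadRenorm c k) h0
  have hset : {x ∈ Icc 0 (renormRadius c k) | quadRenorm c k x = x} = {p} :=
    eq_singleton_iff_unique_mem.2 ⟨⟨Ioo_subset_Icc_self hp, hfp⟩,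
      fun x hx ↦ h.eq_of_map_eq_self hx.1 (Ioo_subset_Icc_self hp) hx.2 hfp⟩
  rw [renormRadius, hset, csSup_singleton]
  exact ⟨hp, hfp⟩

theorem IsUnimodal.renorm_succ {c : ℝ} {k : ℕ}
    (h : IsUnimodal (quadRenorm c k) (renormRadius c k)) (h0 : 0 < quadRenorm c k 0)
    (h0q : quadRenorm c k 0 ≤ renormRadius c k) :
    IsUnimodal (quadRenorm c (k + 1)) (renormRadius c (k + 1)) :=
  have ⟨hmem, hfix⟩ := h.renormRadius_succ h0
  h.neg_comp_self hmem hfix h0q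

theorem exists_first_zero {h : ℝ → ℝ} {a b : ℝ} (hc : ContinuousOn h (Icc a b)) (hab : a ≤ b)
    (ha : 0 < h a) (hb : h b < 0) : ∃ z ∈ Ioo a b, h z = 0 ∧ ∀ x ∈ Ico a z, 0 < h x := by
  have hcomp : IsCompact (Icc a b ∩ h ⁻¹' Iic 0) :=
    isCompact_Icc.of_isClosed_subset (hc.preimage_isClosed_of_isClosed isClosed_Icc isClosed_Iic)
      inter_subset_left
  obtain ⟨z, ⟨⟨haz, hzb⟩, hz⟩, hleast⟩ := hcomp.exists_isLeast ⟨b, ⟨hab, le_rfl⟩, hb.le⟩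
  have hpos : ∀ x ∈ Ico a z, 0 < h x := fun x hx ↦ by
    by_contra! hle
    exact hx.2.not_ge (hleast ⟨⟨hx.1, hx.2.le.trans hzb⟩, hle⟩)
  obtain ⟨w, hw, hw0⟩ : (0 : ℝ) ∈ h '' Icc a z :=
    intermediate_value_Icc' haz (hc.mono (Icc_subset_Icc_right hzb)) ⟨hz, ha.le⟩
  obtain rfl : w = z := hw.2.eq_of_not_lt fun hlt ↦ (hpos w ⟨hw.1, hlt⟩).ne' hw0
  exact ⟨w, ⟨haz.lt_of_ne fun e ↦ by subst e; exact ha.ne' hw0,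
    hzb.lt_of_ne fun e ↦ by subst e; exact hb.ne hw0⟩, hw0, hpos⟩

theorem exists_last_zero {h : ℝ → ℝ} {a b : ℝ} (hc : ContinuousOn h (Icc a b)) (hab : a ≤ b)
    (ha : h a < 0) (hb : 0 < h b) : ∃ z ∈ Ioo a b, h z = 0 ∧ ∀ x ∈ Ioc z b, 0 < h x := by
  obtain ⟨z, hz, hz0, hpos⟩ := exists_first_zero (h := fun x ↦ h (-x)) (a := -b) (b := -a)
    (hc.comp continuousOn_neg fun x hx ↦ ⟨le_neg_of_le_neg hx.2, neg_le_of_neg_le hx.1⟩)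
    (neg_le_neg hab) (by simpa) (by simpa)
  refine ⟨-z, ⟨lt_neg_of_lt_neg hz.2, neg_lt_of_neg_lt hz.1⟩, hz0, fun x hx ↦ ?_⟩
  simpa using hpos (-x) ⟨neg_le_neg hx.2, neg_lt_of_neg_lt hx.1⟩

theorem eventually_quadRenorm_quadRenorm_zero_pos {k : ℕ} {a : ℝ} (ha : quadRenorm a k 0 = 0) :
    ∀ᶠ c in nhds a, 0 < quadRenorm c k 0 → 0 < quadRenorm c k (quadRenorm c k 0) := by
  obtain ⟨K, t, ht, hK⟩ := (contDiff_quadProfile_uncurry k).contDiffAt.exists_lipschitzOnWith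
    (x := (a, (0 : ℝ)))
  have hcont : Continuous fun c ↦ quadRenorm c k 0 :=
    (continuous_quadRenorm_uncurry k).comp (Continuous.prodMk_left 0)
  have hlim : ∀ {φ : ℝ → ℝ}, Continuous φ → φ a = 0 → ∀ᶠ c in nhds a, (c, φ c) ∈ t :=
    fun hφ h0 ↦ (continuous_id.prodMk hφ).tendsto' a (a, 0) (by simp [h0]) ht
  have hsmall : ∀ᶠ c in nhds a, quadRenorm c k 0 < 1 / (K + 1) :=
    (hcont.tendsto' a 0 ha).eventually_lt_const (by positivity)
  filter_upwards [hlim (φ := fun _ ↦ 0) continuous_const rfl,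
    hlim (φ := fun c ↦ quadRenorm c k 0 ^ 2) (hcont.pow 2) (by simp [ha]), hsmall]
    with c h0 hv hlt hpos
  have hdist := (abs_le.1 (hK.dist_le_mul _ hv _ h0)).1
  have hprod : dist (c, quadRenorm c k 0 ^ 2) (c, 0) = quadRenorm c k 0 ^ 2 := by
    simp [Prod.dist_eq, sq_nonneg]
  rw [hprod] at hdist
  rw [lt_div_iff₀ (by positivity)] at hlt
  have hzero : quadProfile c k 0 = quadRenorm c k 0 := by simp [quadRenorm]
  change _ ≤ quadRenorm c k (quadRenorm c k 0) - quadProfile c k 0 at hdist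
  nlinarith

/-- A window `[a, b]` of parameters for which the `k`-th renormalization is unimodal, its critical
value running from `0` at `a` (superattracting) up to `q_k` at `b` (full unimodal map). -/
structure RenormWindow (k : ℕ) (a b : ℝ) : Prop where
  lt : a < b
  isUnimodal : ∀ c ∈ Icc a b, IsUnimodal (quadRenorm c k) (renormRadius c k)
  critValue_le : ∀ c ∈ Icc a b, quadRenorm c k 0 ≤ renormRadius c k
  critValue_pos : ∀ c ∈ Ioc a b, 0 < quadRenorm c k 0
  critValue_left : quadRenorm a k 0 = 0
  critValue_right : quadRenorm b k 0 = renormRadius b k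

theorem renormWindow_zero : RenormWindow 0 0 2 where
  lt := two_pos
  isUnimodal c hc := isUnimodal_quadRenorm_zero hc.1
  critValue_le c hc := by
    have hsqrt : 2 * c - 1 ≤ √(1 + 4 * c) := Real.le_sqrt_of_sq_le (by nlinarith [hc.1, hc.2])
    simp only [quadRenorm_zero, renormRadius]
    linarith
  critValue_pos c hc := by simpa [quadRenorm_zero] using hc.1
  critValue_left := by simp [quadRenorm_zero]
  critValue_right := by
    simp only [quadRenorm_zero, renormRadius]
    rw [show (1 : ℝ) + 4 * 2 = 3 ^ 2 by norm_num, Real.sqrt_sq (by norm_num)]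
    norm_num

namespace RenormWindow

variable {k : ℕ} {a b : ℝ}

theorem critValue_succ_le (h : RenormWindow k a b) {c : ℝ} (hc : c ∈ Ioc a b) :
    quadRenorm c (k + 1) 0 ≤ renormRadius c k := by
  have hu := h.isUnimodal c (Ioc_subset_Icc_self hc)
  have hle := h.critValue_le c (Ioc_subset_Icc_self hc)
  rw [quadRenorm_succ]
  linarith [hu.map_le_map (h.critValue_pos c hc).le hle le_rfl, hu.map_radius]

theorem exists_critValue_succ_neg (h : RenormWindow k a b) :
    ∃ c ∈ Ioo a b, quadRenorm c (k + 1) 0 < 0 := by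
  have hev := (eventually_quadRenorm_quadRenorm_zero_pos h.critValue_left).filter_mono
    (nhdsWithin_le_nhds (s := Ioi a))
  obtain ⟨c, hpos, hc⟩ := (hev.and (Ioo_mem_nhdsGT h.lt)).exists
  exact ⟨c, hc, neg_neg_of_pos (hpos (h.critValue_pos c (Ioo_subset_Ioc_self hc)))⟩

theorem critValue_succ_lt_quadRenorm (h : RenormWindow k a b) {c : ℝ} (hc : c ∈ Ioc a b)
    (hneg : quadRenorm c (k + 1) 0 < 0) :
    quadRenorm c (k + 1) 0 < quadRenorm c k (quadRenorm c (k + 1) 0) := by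
  have hu := h.isUnimodal c (Ioc_subset_Icc_self hc)
  have hle := h.critValue_le c (Ioc_subset_Icc_self hc)
  have hv := h.critValue_pos c hc
  rw [quadRenorm_succ] at hneg ⊢
  rw [quadRenorm_neg]
  have hvv := hu.map_le_map le_rfl hv.le hle
  linarith [hu.map_le_map (by linarith) hvv hle]

theorem renormRadius_succ (h : RenormWindow k a b) {c : ℝ} (hc : c ∈ Ioc a b) :
    renormRadius c (k + 1) ∈ Ioo 0 (renormRadius c k) ∧
      quadRenorm c k (renormRadius c (k + 1)) = renormRadius c (k + 1) :=
  (h.isUnimodal c (Ioc_subset_Icc_self hc)).renormRadius_succ (h.critValue_pos c hc)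

theorem critValue_succ_le_renormRadius_succ (h : RenormWindow k a b) {c : ℝ} (hc : c ∈ Ioc a b)
    (hle : quadRenorm c (k + 1) 0 ≤ quadRenorm c k (quadRenorm c (k + 1) 0)) :
    quadRenorm c (k + 1) 0 ≤ renormRadius c (k + 1) := by
  obtain ⟨hq, hfq⟩ := h.renormRadius_succ hc
  by_contra! hlt
  linarith [(h.isUnimodal c (Ioc_subset_Icc_self hc)).map_lt_map hq.1.le hlt
    (h.critValue_succ_le hc)]

/-- The parameter `b'` is the first at which the critical value of `f_{k+1}` reaches the fixed point
`q_{k+1}` of `f_k`, and `a'` is the last zero of that critical value before `b'`. -/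
theorem exists_next (h : RenormWindow k a b) : ∃ a' b', a < a' ∧ b' ≤ b ∧
    RenormWindow (k + 1) a' b' := by
  have hcont : Continuous fun c ↦ quadRenorm c (k + 1) 0 :=
    (continuous_quadRenorm_uncurry (k + 1)).comp (Continuous.prodMk_left 0)
  have hcont' : Continuous fun c ↦ quadRenorm c k (quadRenorm c (k + 1) 0)
      - quadRenorm c (k + 1) 0 :=
    ((continuous_quadRenorm_uncurry k).comp (continuous_id.prodMk hcont)).sub hcont
  have hub := h.isUnimodal b (right_mem_Icc.2 h.lt.le)
  obtain ⟨a₁, ha₁, hneg⟩ := h.exists_critValue_succ_neg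
  have hneg_b : quadRenorm b k (quadRenorm b (k + 1) 0) - quadRenorm b (k + 1) 0 < 0 := by
    rw [quadRenorm_succ, h.critValue_right, hub.map_radius, neg_neg, hub.map_radius]
    linarith [hub.pos]
  obtain ⟨b', hb', hfix, hbefore⟩ := exists_first_zero hcont'.continuousOn ha₁.2.le
    (sub_pos.2 (h.critValue_succ_lt_quadRenorm (Ioo_subset_Ioc_self ha₁) hneg)) hneg_b
  have hmem : ∀ {c}, c ∈ Icc a₁ b' → c ∈ Ioc a b := fun hc ↦
    ⟨ha₁.1.trans_le hc.1, hc.2.trans hb'.2.le⟩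
  have hb'mem : b' ∈ Ioc a b := hmem (right_mem_Icc.2 hb'.1.le)
  have hub' := h.isUnimodal b' (Ioc_subset_Icc_self hb'mem)
  have hpos_b' : 0 < quadRenorm b' (k + 1) 0 := by
    refine neg_pos.2 (hub'.map_map_zero_neg (continuous_quadRenorm b' k)
      (h.critValue_pos b' hb'mem) (h.critValue_le b' (Ioc_subset_Icc_self hb'mem)) ?_)
    simpa only [quadRenorm_succ, quadRenorm_neg, sub_eq_zero] using hfix
  obtain ⟨a', ha', hzero, hafter⟩ := exists_last_zero hcont.continuousOn hb'.1.le hneg hpos_b'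
  have hmem' : ∀ {c}, c ∈ Icc a' b' → c ∈ Ioc a b := fun hc ↦ hmem ⟨ha'.1.le.trans hc.1, hc.2⟩
  have hge : ∀ c ∈ Icc a' b',
      0 ≤ quadRenorm c k (quadRenorm c (k + 1) 0) - quadRenorm c (k + 1) 0 := fun c hc ↦ by
    rcases hc.2.eq_or_lt with rfl | hlt
    · exact hfix.ge
    · exact (hbefore c ⟨ha'.1.le.trans hc.1, hlt⟩).le
  obtain ⟨hq, hfq⟩ := h.renormRadius_succ hb'mem
  exact ⟨a', b', ha₁.1.trans ha'.1, hb'.2.le, ha'.2,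
    fun c hc ↦ (h.isUnimodal c (Ioc_subset_Icc_self (hmem' hc))).renorm_succ
      (h.critValue_pos c (hmem' hc)) (h.critValue_le c (Ioc_subset_Icc_self (hmem' hc))),
    fun c hc ↦ h.critValue_succ_le_renormRadius_succ (hmem' hc) (sub_nonneg.1 (hge c hc)),
    hafter, hzero,
    hub'.eq_of_map_eq_self ⟨hpos_b'.le, h.critValue_succ_le hb'mem⟩
      (Ioo_subset_Icc_self hq) (sub_eq_zero.1 hfix) hfq⟩

end RenormWindow

/-- The Feigenbaum condition on the parameter `c`: all the renormalizations of `x ↦ c - x²` are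
unimodal, with critical value strictly between `0` and the radius. -/
structure InfinitelyRenormalizable (c : ℝ) : Prop where
  isUnimodal (k : ℕ) : IsUnimodal (quadRenorm c k) (renormRadius c k)
  critValue_pos (k : ℕ) : 0 < quadRenorm c k 0
  critValue_lt (k : ℕ) : quadRenorm c k 0 < renormRadius c k

theorem exists_infinitelyRenormalizable : ∃ c : ℝ, InfinitelyRenormalizable c := by
  choose next hleft hright using fun (k : ℕ) (w : {w : ℝ × ℝ // RenormWindow k w.1 w.2}) ↦
    show ∃ w' : {w' : ℝ × ℝ // RenormWindow (k + 1) w'.1 w'.2},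
        w.1.1 < w'.1.1 ∧ w'.1.2 ≤ w.1.2 from
      have ⟨a', b', ha, hb, h⟩ := w.2.exists_next
      ⟨⟨(a', b'), h⟩, ha, hb⟩
  let window (k : ℕ) : {w : ℝ × ℝ // RenormWindow k w.1 w.2} :=
    Nat.rec ⟨(0, 2), renormWindow_zero⟩ next k
  have hmono : StrictMono fun k ↦ (window k).1.1 := strictMono_nat_of_lt_succ fun k ↦ hleft k _
  have hanti : Antitone fun k ↦ (window k).1.2 := antitone_nat_of_succ_le fun k ↦ hright k _
  have hc := mem_iInter.1 (hmono.monotone.ciSup_mem_iInter_Icc_of_antitone hanti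
    fun k ↦ (window k).2.lt.le)
  set c := ⨆ k, (window k).1.1
  have hcpos (k : ℕ) : 0 < quadRenorm c k 0 :=
    (window k).2.critValue_pos c ⟨(hmono k.lt_succ_self).trans_le (hc (k + 1)).1, (hc k).2⟩
  refine ⟨c, fun k ↦ (window k).2.isUnimodal c (hc k), hcpos, fun k ↦
    ((window k).2.critValue_le c (hc k)).lt_of_ne fun heq ↦ ?_⟩
  -- A full map `f_k` has `f_{k+1} 0 = q_k`, which exceeds `q_{k+1}`.
  have hu := (window k).2.isUnimodal c (hc k)
  have hnext : quadRenorm c (k + 1) 0 = renormRadius c k := by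
    rw [quadRenorm_succ, heq, hu.map_radius, neg_neg]
  exact (hu.renormRadius_succ (hcpos k)).1.2.not_ge
    (hnext.symm.trans_le ((window (k + 1)).2.critValue_le c (hc (k + 1))))
/-! ### Cross-ratios and the geometry of infinite renormalization -/

theorem sub_mul_sub_pos_of_strict {g : ℝ → ℝ} {s : Set ℝ} {a b c d : ℝ}
    (hg : StrictMonoOn g s ∨ StrictAntiOn g s) (ha : a ∈ s) (hb : b ∈ s) (hc : c ∈ s) (hd : d ∈ s)
    (hab : a < b) (hcd : c < d) : 0 < (g b - g a) * (g d - g c) := by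
  rcases hg with hg | hg
  · exact mul_pos (sub_pos.2 (hg ha hb hab)) (sub_pos.2 (hg hc hd hcd))
  · exact mul_pos_of_neg_of_neg (sub_neg.2 (hg ha hb hab)) (sub_neg.2 (hg hc hd hcd))

/-- `g` is strictly monotone or antitone on `s` and increases the cross-ratio
`(d - a) (c - b) / ((b - a) (d - c))` of every quadruple `a < b < c < d` in `s`, as do maps with
negative Schwarzian derivative. -/
structure CrossRatioExpanding (g : ℝ → ℝ) (s : Set ℝ) : Prop where
  strict : StrictMonoOn g s ∨ StrictAntiOn g s
  crossRatio_le : ∀ ⦃a⦄, a ∈ s → ∀ ⦃b⦄, b ∈ s → ∀ ⦃c⦄, c ∈ s → ∀ ⦃d⦄, d ∈ s →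
    a < b → b < c → c < d →
    (d - a) * (c - b) * ((g b - g a) * (g d - g c)) ≤
      (g d - g a) * (g c - g b) * ((b - a) * (d - c))

namespace CrossRatioExpanding

variable {g h : ℝ → ℝ} {s t : Set ℝ} {a b c d : ℝ}

theorem mono (hg : CrossRatioExpanding g t) (hst : s ⊆ t) : CrossRatioExpanding g s where
  strict := hg.strict.imp (·.mono hst) (·.mono hst)
  crossRatio_le _ ha _ hb _ hc _ hd := hg.crossRatio_le (hst ha) (hst hb) (hst hc) (hst hd)

theorem const_mul (hg : CrossRatioExpanding g s) {r : ℝ} (hr : r ≠ 0) :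
    CrossRatioExpanding (fun x ↦ r * g x) s where
  strict := by
    rcases hr.lt_or_gt with hr | hr
    · exact hg.strict.symm.imp (fun h x hx y hy hxy ↦ mul_lt_mul_of_neg_left (h hx hy hxy) hr)
        (fun h x hx y hy hxy ↦ mul_lt_mul_of_neg_left (h hx hy hxy) hr)
    · exact hg.strict.imp (fun h x hx y hy hxy ↦ mul_lt_mul_of_pos_left (h hx hy hxy) hr)
        (fun h x hx y hy hxy ↦ mul_lt_mul_of_pos_left (h hx hy hxy) hr)
  crossRatio_le a ha b hb c hc d hd hab hbc hcd := by
    linear_combination r ^ 2 * hg.crossRatio_le ha hb hc hd hab hbc hcd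

theorem crossRatio_le_map (hg : CrossRatioExpanding g t)
    (hh : StrictMonoOn h s ∨ StrictAntiOn h s) (hst : MapsTo h s t) (ha : a ∈ s) (hb : b ∈ s)
    (hc : c ∈ s) (hd : d ∈ s) (hab : a < b) (hbc : b < c) (hcd : c < d) :
    (h d - h a) * (h c - h b) * ((g (h b) - g (h a)) * (g (h d) - g (h c))) ≤
      (g (h d) - g (h a)) * (g (h c) - g (h b)) * ((h b - h a) * (h d - h c)) := by
  rcases hh with hh | hh
  · exact hg.crossRatio_le (hst ha) (hst hb) (hst hc) (hst hd)
      (hh ha hb hab) (hh hb hc hbc) (hh hc hd hcd)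
  · linear_combination hg.crossRatio_le (hst hd) (hst hc) (hst hb) (hst ha)
      (hh hc hd hcd) (hh hb hc hbc) (hh ha hb hab)

theorem comp (hg : CrossRatioExpanding g t) (hh : CrossRatioExpanding h s) (hst : MapsTo h s t) :
    CrossRatioExpanding (g ∘ h) s := by
  have strict : StrictMonoOn (g ∘ h) s ∨ StrictAntiOn (g ∘ h) s := by
    rcases hg.strict with hg | hg <;> rcases hh.strict with hh | hh
    exacts [.inl (hg.comp hh hst), .inr (hg.comp_strictAntiOn hh hst),
      .inr (hg.comp_strictMonoOn hh hst), .inl (hg.comp hh hst)]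
  refine ⟨strict, fun a ha b hb c hc d hd hab hbc hcd ↦ ?_⟩
  have inner := hh.crossRatio_le ha hb hc hd hab hbc hcd
  have outer := hg.crossRatio_le_map hh.strict hst ha hb hc hd hab hbc hcd
  have h_pos := sub_mul_sub_pos_of_strict hh.strict ha hb hc hd hab hcd
  have gh_pos := sub_mul_sub_pos_of_strict strict ha hb hc hd hab hcd
  have id_pos : 0 < (b - a) * (d - c) := mul_pos (sub_pos.2 hab) (sub_pos.2 hcd)
  refine le_of_mul_le_mul_right ?_ h_pos
  simp only [Function.comp_apply] at gh_pos ⊢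
  linear_combination mul_le_mul_of_nonneg_left inner gh_pos.le +
    mul_le_mul_of_nonneg_left outer id_pos.le

end CrossRatioExpanding

theorem crossRatioExpanding_id (s : Set ℝ) : CrossRatioExpanding id s :=
  ⟨.inl strictMonoOn_id, fun _ _ _ _ _ _ _ _ _ _ _ ↦ le_rfl⟩

theorem crossRatioExpanding_const_sub (r : ℝ) (s : Set ℝ) :
    CrossRatioExpanding (fun x ↦ r - x) s :=
  ⟨.inr fun _ _ _ _ h ↦ sub_lt_sub_left h r, fun _ _ _ _ _ _ _ _ _ _ _ ↦ le_of_eq (by ring)⟩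

theorem crossRatioExpanding_quad_Ici (c : ℝ) : CrossRatioExpanding (quadRenorm c 0) (Ici 0) where
  strict := .inr fun x (hx : 0 ≤ x) y _ hxy ↦ by
    simp only [quadRenorm_zero]
    nlinarith
  crossRatio_le a (_ : 0 ≤ a) b (_ : 0 ≤ b) e (_ : 0 ≤ e) d (_ : 0 ≤ d) hab hbe hed := by
    simp only [quadRenorm_zero]
    have h₁ : 0 ≤ (d - a) * (e - b) * ((b - a) * (d - e)) := by
      apply mul_nonneg <;> apply mul_nonneg <;> linarith
    have h₂ : 0 ≤ (d - b) * (e - a) := mul_nonneg (by linarith) (by linarith)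
    linear_combination mul_nonneg h₁ h₂

theorem crossRatioExpanding_quad_Iic (c : ℝ) : CrossRatioExpanding (quadRenorm c 0) (Iic 0) := by
  convert (crossRatioExpanding_quad_Ici c).comp (crossRatioExpanding_const_sub 0 (Iic 0))
    (fun x hx ↦ by simpa using hx) using 1
  ext x
  simp [quadRenorm_neg]

theorem subset_Ici_or_subset_Iic_of_even {f : ℝ → ℝ} {s : Set ℝ} (hf : f.Even)
    (hs : s.OrdConnected) (hinj : InjOn f s) : s ⊆ Ici 0 ∨ s ⊆ Iic 0 := by
  by_contra! h
  obtain ⟨x, hx, hx0⟩ := not_subset.1 h.1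
  obtain ⟨y, hy, hy0⟩ := not_subset.1 h.2
  simp only [mem_Ici, mem_Iic, not_le] at hx0 hy0
  have hm : 0 < min (-x) y := lt_min (by linarith) hy0
  have hmx := min_le_left (-x) y
  have hmy := min_le_right (-x) y
  have := hinj (hs.out hx hy ⟨by linarith, hmy⟩) (hs.out hx hy ⟨by linarith, by linarith⟩)
    (hf (min (-x) y)).symm
  linarith

theorem crossRatioExpanding_iterate (c : ℝ) (m : ℕ) {s : Set ℝ} (hs : IsPreconnected s)
    (hinj : InjOn (quadRenorm c 0)^[m] s) : CrossRatioExpanding (quadRenorm c 0)^[m] s := by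
  induction m generalizing s with
  | zero => exact crossRatioExpanding_id s
  | succ m ih =>
    rw [Function.iterate_succ] at hinj ⊢
    have base : CrossRatioExpanding (quadRenorm c 0) s := by
      rcases subset_Ici_or_subset_Iic_of_even (quadRenorm_neg c 0) hs.ordConnected
        (InjOn.of_comp hinj) with h | h
      exacts [(crossRatioExpanding_quad_Ici c).mono h, (crossRatioExpanding_quad_Iic c).mono h]
    exact (ih (hs.image _ (continuous_quadRenorm c 0).continuousOn) hinj.image_of_comp).comp base
      (mapsTo_image _ _)

theorem iterate_quadRenorm_zero (c : ℝ) (k : ℕ) (x : ℝ) :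
    (quadRenorm c 0)^[2 ^ k] x = (-1) ^ k * quadRenorm c k x := by
  induction k generalizing x with
  | zero => simp
  | succ k ih =>
    have sign : quadRenorm c k ((-1) ^ k * quadRenorm c k x) =
        quadRenorm c k (quadRenorm c k x) := by
      rcases neg_one_pow_eq_or ℝ k with h | h <;> rw [h]
      · rw [one_mul]
      · rw [neg_one_mul, quadRenorm_neg]
    rw [pow_succ, mul_two, Function.iterate_add_apply, ih, ih, sign, quadRenorm_succ]
    ring

namespace InfinitelyRenormalizable

variable {c : ℝ}

theorem radius_pos (h : InfinitelyRenormalizable c) (k : ℕ) : 0 < renormRadius c k :=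
  (h.isUnimodal k).pos

theorem radius_succ_lt (h : InfinitelyRenormalizable c) (k : ℕ) :
    renormRadius c (k + 1) < renormRadius c k :=
  ((h.isUnimodal k).renormRadius_succ (h.critValue_pos k)).1.2

theorem map_radius_succ (h : InfinitelyRenormalizable c) (k : ℕ) :
    quadRenorm c k (renormRadius c (k + 1)) = renormRadius c (k + 1) :=
  ((h.isUnimodal k).renormRadius_succ (h.critValue_pos k)).2

theorem radius_succ_lt_critValue (h : InfinitelyRenormalizable c) (k : ℕ) :
    renormRadius c (k + 1) < quadRenorm c k 0 := by
  simpa only [h.map_radius_succ k] using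
    (h.isUnimodal k).map_lt_map le_rfl (h.radius_pos (k + 1)) (h.radius_succ_lt k).le

theorem crossRatioExpanding (h : InfinitelyRenormalizable c) (k : ℕ) :
    CrossRatioExpanding (quadRenorm c k) (Icc 0 (renormRadius c k)) := by
  have eq : (fun x ↦ (-1) ^ k * (quadRenorm c 0)^[2 ^ k] x) = quadRenorm c k := by
    ext x
    rw [iterate_quadRenorm_zero, ← mul_assoc, ← mul_pow]
    simp
  have inj : InjOn (quadRenorm c 0)^[2 ^ k] (Icc 0 (renormRadius c k)) := by
    intro x hx y hy hxy
    rw [iterate_quadRenorm_zero, iterate_quadRenorm_zero] at hxy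
    exact (h.isUnimodal k).strictAntiOn.injOn hx hy (mul_left_cancel₀ (by simp) hxy)
  simpa only [eq] using (crossRatioExpanding_iterate c _ isPreconnected_Icc inj).const_mul
    (r := (-1) ^ k) (by simp)

end InfinitelyRenormalizable

/-- The value `Q_k > q_k` up to which the profile `ψ_k` extends monotonically past its critical
value `ψ_k 0`. -/
noncomputable def outerRadius (c : ℝ) : ℕ → ℝ
  | 0 => 2 * renormRadius c 0
  | k + 1 => renormRadius c k

/-- The profile `ψ_k` extends past `0` to a decreasing cross-ratio expanding map on
`[-τ, q_k ^ 2]` with `ψ_k (-τ) = Q_k`; this is the Koebe space around the critical value. -/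
structure ProfileExtension (c : ℝ) (k : ℕ) (τ : ℝ) : Prop where
  pos : 0 < τ
  strictAntiOn : StrictAntiOn (quadProfile c k) (Icc (-τ) (renormRadius c k ^ 2))
  crossRatioExpanding : CrossRatioExpanding (quadProfile c k) (Icc (-τ) (renormRadius c k ^ 2))
  map_left : quadProfile c k (-τ) = outerRadius c k

namespace InfinitelyRenormalizable

variable {c : ℝ} {k : ℕ} {τ y : ℝ}

theorem radius_lt_outerRadius (h : InfinitelyRenormalizable c) (k : ℕ) :
    renormRadius c k < outerRadius c k := by
  cases k with
  | zero => simpa only [outerRadius] using lt_mul_of_one_lt_left (h.radius_pos 0) one_lt_two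
  | succ k => exact h.radius_succ_lt k

theorem profileExtension_zero (h : InfinitelyRenormalizable c) :
    ProfileExtension c 0 (2 * renormRadius c 0 - c) where
  pos := by linarith [h.critValue_lt 0, h.radius_pos 0, quadRenorm_zero c 0]
  strictAntiOn _ _ _ _ hxy := sub_lt_sub_left hxy c
  crossRatioExpanding := crossRatioExpanding_const_sub c _
  map_left := by simp only [quadProfile, outerRadius]; ring

theorem _root_.ProfileExtension.exists_succ (hτ : ProfileExtension c k τ)
    (h : InfinitelyRenormalizable c) : ∃ σ, ProfileExtension c (k + 1) σ := by
  have hp := h.radius_pos (k + 1)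
  have hpq := h.radius_succ_lt k
  obtain ⟨s, ⟨hsτ, hs0⟩, hs⟩ : renormRadius c k ∈ quadProfile c k '' Icc (-τ) 0 := by
    refine intermediate_value_Icc' (by linarith [hτ.pos]) (continuous_quadProfile c k).continuousOn
      ⟨?_, hτ.map_left.symm ▸ (h.radius_lt_outerRadius k).le⟩
    simpa [quadRenorm] using (h.critValue_lt k).le
  have hs_neg : s < 0 := hs0.lt_of_ne <| by
    rintro rfl
    exact (h.critValue_lt k).ne (by simpa [quadRenorm] using hs)
  have fixed : quadProfile c k (renormRadius c (k + 1) ^ 2) = renormRadius c (k + 1) :=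
    h.map_radius_succ k
  have sub : Icc s (renormRadius c (k + 1) ^ 2) ⊆ Icc (-τ) (renormRadius c k ^ 2) :=
    Icc_subset_Icc hsτ (by gcongr)
  have left : s ∈ Icc s (renormRadius c (k + 1) ^ 2) := ⟨le_rfl, hs0.trans (sq_nonneg _)⟩
  have right : renormRadius c (k + 1) ^ 2 ∈ Icc s (renormRadius c (k + 1) ^ 2) :=
    ⟨by nlinarith, le_rfl⟩
  have maps : MapsTo (quadProfile c k) (Icc s (renormRadius c (k + 1) ^ 2))
      (Icc 0 (renormRadius c k)) := fun t ht ↦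
    ⟨by linarith [hτ.strictAntiOn.antitoneOn (sub ht) (sub right) ht.2],
      by linarith [hτ.strictAntiOn.antitoneOn (sub left) (sub ht) ht.1]⟩
  refine ⟨-s, neg_pos.2 hs_neg, ?_, ?_, ?_⟩ <;> rw [neg_neg]
  · intro x hx y hy hxy
    exact neg_lt_neg ((h.isUnimodal k).strictAntiOn (maps hy) (maps hx)
      (hτ.strictAntiOn (sub hx) (sub hy) hxy))
  · convert (((h.crossRatioExpanding k).comp (hτ.crossRatioExpanding.mono sub) maps).const_mul
      (r := -1) (by norm_num)) using 1
    ext t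
    simp [quadProfile, quadRenorm]
  · have : quadProfile c (k + 1) s = -quadRenorm c k (quadProfile c k s) := rfl
    rw [this, hs, (h.isUnimodal k).map_radius, neg_neg, outerRadius]

theorem exists_profileExtension (h : InfinitelyRenormalizable c) (k : ℕ) :
    ∃ τ, ProfileExtension c k τ := by
  induction k with
  | zero => exact ⟨_, h.profileExtension_zero⟩
  | succ k ih => exact ih.elim fun _ hτ ↦ hτ.exists_succ h

/-- The cross-ratio inequality for `ψ_k` at `-τ, 0, q_{k+1} ^ 2, y ^ 2`. -/
theorem crossRatio_critValue_le (h : InfinitelyRenormalizable c)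
    (hy : y ∈ Ioc (renormRadius c (k + 1)) (renormRadius c k)) :
    renormRadius c (k + 1) ^ 2 * (outerRadius c k - quadRenorm c k 0) *
        (renormRadius c (k + 1) - quadRenorm c k y) ≤
      (outerRadius c k - quadRenorm c k y) * (quadRenorm c k 0 - renormRadius c (k + 1)) *
        (y ^ 2 - renormRadius c (k + 1) ^ 2) := by
  obtain ⟨τ, hτ⟩ := h.exists_profileExtension k
  have hp := h.radius_pos (k + 1)
  have hpy : renormRadius c (k + 1) ^ 2 < y ^ 2 := by gcongr; exact hy.1
  have hyq : y ^ 2 ≤ renormRadius c k ^ 2 := by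
    have := hp.trans hy.1
    gcongr
    exact hy.2
  have ψ0 : quadProfile c k 0 = quadRenorm c k 0 := by simp [quadRenorm]
  have ψp : quadProfile c k (renormRadius c (k + 1) ^ 2) = renormRadius c (k + 1) :=
    h.map_radius_succ k
  have cross := hτ.crossRatioExpanding.crossRatio_le (a := -τ) ⟨le_rfl, by nlinarith [hτ.pos]⟩
    (b := 0) ⟨by linarith [hτ.pos], by positivity⟩ (c := renormRadius c (k + 1) ^ 2)
    ⟨by nlinarith [hτ.pos], by linarith⟩ (d := y ^ 2) ⟨by nlinarith [hτ.pos], hyq⟩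
    (by linarith [hτ.pos]) (by positivity) hpy
  rw [hτ.map_left, ψ0, ψp] at cross
  have hfy : quadRenorm c k y < renormRadius c (k + 1) := by
    simpa only [h.map_radius_succ k] using (h.isUnimodal k).map_lt_map hp.le hy.1 hy.2
  have drop : 0 ≤ y ^ 2 * renormRadius c (k + 1) ^ 2 *
      ((outerRadius c k - quadRenorm c k 0) * (renormRadius c (k + 1) - quadRenorm c k y)) := by
    have := h.critValue_lt k
    have := h.radius_lt_outerRadius k
    exact mul_nonneg (by positivity) (mul_nonneg (by linarith) (by linarith))
  refine le_of_mul_le_mul_left ?_ hτ.pos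
  change _ * ((_ - _) * (quadRenorm c k y - _)) ≤ (quadRenorm c k y - _) * _ * _ at cross
  linear_combination cross + drop

theorem four_mul_le_of_crossRatio {p q v Q : ℝ} (hp : 0 < p) (hpv : p < v) (hvq : v < q)
    (hQ : 4 * q ≤ 3 * Q) (h : p ^ 2 * (Q - v) ≤ (Q + q) * (v - p) * (q - p)) : 4 * p ≤ 3 * q := by
  have hQq : 0 < Q - q := by linarith
  have ratio : (Q + q) * (v - p) ≤ 7 * (Q - q) * (q - p) := by gcongr; linarith
  have square : p ^ 2 ≤ 7 * (q - p) ^ 2 := by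
    refine le_of_mul_le_mul_left ?_ hQq
    calc (Q - q) * p ^ 2 ≤ p ^ 2 * (Q - v) := by rw [mul_comm]; gcongr
      _ ≤ (Q + q) * (v - p) * (q - p) := h
      _ ≤ 7 * (Q - q) * (q - p) * (q - p) := by
        gcongr
        linarith
      _ = (Q - q) * (7 * (q - p) ^ 2) := by ring
  by_contra! hlt
  nlinarith

theorem four_mul_radius_le (h : InfinitelyRenormalizable c) (k : ℕ) :
    4 * renormRadius c k ≤ 3 * outerRadius c k := by
  induction k with
  | zero => simp only [outerRadius]; linarith [h.radius_pos 0]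
  | succ k ih =>
    have hp := h.radius_pos (k + 1)
    change 4 * renormRadius c (k + 1) ≤ 3 * renormRadius c k
    refine four_mul_le_of_crossRatio hp (h.radius_succ_lt_critValue k)
      (h.critValue_lt k) ih (le_of_mul_le_mul_right ?_ (add_pos (h.radius_pos k) hp))
    have cross := h.crossRatio_critValue_le (right_mem_Ioc.2 (h.radius_succ_lt k))
    rw [(h.isUnimodal k).map_radius] at cross
    linear_combination cross

theorem four_mul_radius_succ_le (h : InfinitelyRenormalizable c) (k : ℕ) :
    4 * renormRadius c (k + 1) ≤ 3 * renormRadius c k :=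
  h.four_mul_radius_le (k + 1)

theorem tendsto_radius (h : InfinitelyRenormalizable c) :
    Tendsto (renormRadius c) atTop (nhds 0) := by
  have bound (k : ℕ) : renormRadius c k ≤ (3 / 4) ^ k * renormRadius c 0 := by
    refine le_geom (u := renormRadius c) (by norm_num) k fun i _ ↦ ?_
    linarith [h.four_mul_radius_succ_le i]
  refine squeeze_zero (fun k ↦ (h.radius_pos k).le) bound ?_
  simpa using (tendsto_pow_atTop_nhds_zero_of_lt_one (r := (3 / 4 : ℝ)) (by norm_num)
    (by norm_num)).mul_const (renormRadius c 0)

theorem radius_succ_le_five_mul (h : InfinitelyRenormalizable c) (k : ℕ) :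
    renormRadius c (k + 1) ≤ 5 * (quadRenorm c k 0 - renormRadius c (k + 1)) := by
  have hp := h.radius_pos (k + 1)
  have hpv := h.radius_succ_lt_critValue k
  have hvq := h.critValue_lt k
  have hw := h.critValue_pos (k + 1)
  have hwp := h.critValue_lt (k + 1)
  have hQ := h.four_mul_radius_le k
  have cross := h.crossRatio_critValue_le ⟨hpv, hvq.le⟩
  have hfv : quadRenorm c k (quadRenorm c k 0) = -quadRenorm c (k + 1) 0 := by
    rw [quadRenorm_succ, neg_neg]
  rw [hfv] at cross
  set p := renormRadius c (k + 1)
  set v := quadRenorm c k 0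
  set w := quadRenorm c (k + 1) 0
  set Q := outerRadius c k
  have cube : p ^ 3 ≤ 8 * ((v - p) ^ 2 * (v + p)) := by
    have hQv : Q / 4 ≤ Q - v := by linarith
    refine le_of_mul_le_mul_left ?_ (by linarith : 0 < Q / 4)
    calc Q / 4 * p ^ 3 ≤ (Q - v) * p ^ 3 := by gcongr
      _ ≤ (Q - v) * (p ^ 2 * (p + w)) := by
        have : 0 ≤ Q - v := by linarith
        gcongr
        nlinarith
      _ ≤ (Q + w) * ((v - p) ^ 2 * (v + p)) := by linear_combination cross
      _ ≤ (2 * Q) * ((v - p) ^ 2 * (v + p)) := by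
        have : 0 ≤ v + p := by linarith
        gcongr
        linarith
      _ = Q / 4 * (8 * ((v - p) ^ 2 * (v + p))) := by ring
  by_contra! hlt
  have near : (v - p) ^ 2 * (v + p) ≤ (p / 5) ^ 2 * (11 / 5 * p) := by gcongr <;> linarith
  nlinarith [pow_pos hp 3]

end InfinitelyRenormalizable
/-! ### Renormalization intervals and the adding machine -/

/-- The residue in `{0, …, 2 ^ k - 1}` of a `2`-adic integer modulo `2 ^ k`. -/
noncomputable def dyadicResidue (a : ℤ_[2]) (k : ℕ) : ℕ := (PadicInt.toZModPow k a).val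

theorem dyadicResidue_lt (a : ℤ_[2]) (k : ℕ) : dyadicResidue a k < 2 ^ k := ZMod.val_lt _

theorem dyadicResidue_zero_right (a : ℤ_[2]) : dyadicResidue a 0 = 0 := by
  simpa using dyadicResidue_lt a 0

theorem dyadicResidue_zero_left (k : ℕ) : dyadicResidue 0 k = 0 := by simp [dyadicResidue]

theorem dyadicResidue_succ_mod (a : ℤ_[2]) (k : ℕ) :
    dyadicResidue a (k + 1) % 2 ^ k = dyadicResidue a k := by
  unfold dyadicResidue
  rw [← PadicInt.cast_toZModPow k (k + 1) k.le_succ a, ZMod.cast_eq_val, ZMod.val_natCast]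

theorem dyadicResidue_succ (a : ℤ_[2]) (k : ℕ) :
    dyadicResidue a (k + 1) = dyadicResidue a k ∨
      dyadicResidue a (k + 1) = dyadicResidue a k + 2 ^ k := by
  have lt := dyadicResidue_lt a (k + 1)
  have digit := Nat.mod_add_div (dyadicResidue a (k + 1)) (2 ^ k)
  rw [dyadicResidue_succ_mod] at digit
  have : dyadicResidue a (k + 1) / 2 ^ k < 2 := Nat.div_lt_of_lt_mul (by rwa [pow_succ] at lt)
  interval_cases dyadicResidue a (k + 1) / 2 ^ k <;> omega

theorem dyadicResidue_mono (a : ℤ_[2]) : Monotone (dyadicResidue a) :=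
  monotone_nat_of_le_succ fun k ↦ by
    rcases dyadicResidue_succ a k with h | h <;> simp [h]

theorem dyadicResidue_add_natCast (a : ℤ_[2]) (n k : ℕ) :
    dyadicResidue (a + n) k = (dyadicResidue a k + n) % 2 ^ k := by
  unfold dyadicResidue
  rw [map_add, map_natCast, ZMod.val_add, ZMod.val_natCast, Nat.add_mod_mod]

theorem eventually_dyadicResidue_eq (a : ℤ_[2]) (k : ℕ) :
    ∀ᶠ b in nhds a, dyadicResidue b k = dyadicResidue a k := by
  refine Metric.eventually_nhds_iff.2 ⟨(2 : ℝ) ^ (-(k : ℤ)), by positivity, fun b hb ↦ ?_⟩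
  have close : ‖b - a‖ ≤ ((2 : ℕ) : ℝ) ^ (-(k : ℤ)) := by
    rw [← dist_eq_norm]
    exact_mod_cast hb.le
  rw [PadicInt.norm_le_pow_iff_mem_span_pow, ← PadicInt.ker_toZModPow, RingHom.mem_ker, map_sub,
    sub_eq_zero] at close
  rw [dyadicResidue, close, dyadicResidue]

theorem eq_of_dyadicResidue_eq {a b : ℤ_[2]} (h : ∀ k, dyadicResidue a k = dyadicResidue b k) :
    a = b :=
  PadicInt.ext_of_toZModPow.1 fun k ↦ ZMod.val_injective _ (h k)

theorem exists_first_dyadicResidue_ne {a b : ℤ_[2]} (hab : a ≠ b) :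
    ∃ k, dyadicResidue a k = dyadicResidue b k ∧
      dyadicResidue a (k + 1) ≠ dyadicResidue b (k + 1) := by
  obtain ⟨k, hk⟩ := Nat.exists_not_and_succ_of_not_zero_of_exists
    (p := fun k ↦ dyadicResidue a k ≠ dyadicResidue b k) (by simp [dyadicResidue_zero_right])
    (by contrapose! hab; exact eq_of_dyadicResidue_eq hab)
  exact ⟨k, not_not.1 hk.1, hk.2⟩

/-- The `i`-th image of the `k`-th renormalization interval `[-q_k, q_k]` under `x ↦ c - x²`; these
are disjoint for `i < 2 ^ k` and permuted cyclically. -/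
def renormInterval (c : ℝ) (k i : ℕ) : Set ℝ :=
  (quadRenorm c 0)^[i] '' Icc (-renormRadius c k) (renormRadius c k)

theorem continuous_iterate_quad (c : ℝ) (i : ℕ) : Continuous (quadRenorm c 0)^[i] :=
  (continuous_quadRenorm c 0).iterate i

theorem iterate_quad_abs (c x : ℝ) {i : ℕ} (hi : 1 ≤ i) :
    (quadRenorm c 0)^[i] |x| = (quadRenorm c 0)^[i] x := by
  obtain ⟨j, rfl⟩ := Nat.exists_eq_add_of_le' hi
  rw [Function.iterate_succ_apply, Function.iterate_succ_apply, quadRenorm_abs]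

theorem abs_iterate_quadRenorm_zero (c : ℝ) (k : ℕ) (x : ℝ) :
    |(quadRenorm c 0)^[2 ^ k] x| = |quadRenorm c k x| := by
  rw [iterate_quadRenorm_zero, abs_mul, abs_pow, abs_neg, abs_one, one_pow, one_mul]

theorem isCompact_renormInterval (c : ℝ) (k i : ℕ) : IsCompact (renormInterval c k i) :=
  isCompact_Icc.image (continuous_iterate_quad c i)

theorem middle_le_of_crossRatio {x y z p q v w : ℝ} (hx : 0 ≤ x) (hy : 0 ≤ y) (hz : 0 ≤ z)
    (hp : 0 < p) (hpq : 4 * p ≤ 3 * q) (hv : v < q) (hw : 0 < w) (hwp : w < p)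
    (hpv : p ≤ 5 * (v - p))
    (h : (x + y + z) * y * ((v - p) * (q - w)) ≤ (v + q) * (p + w) * (x * z)) :
    y ≤ 9 / 10 * (x + y + z) := by
  have hq : 0 < q := by linarith
  have hvp : 0 ≤ v - p := by linarith
  have lower : (x + y + z) * y * (p / 5 * (q / 4)) ≤ (x + y + z) * y * ((v - p) * (q - w)) := by
    gcongr <;> linarith
  have upper : (v + q) * (p + w) * (x * z) ≤ (2 * q) * (2 * p) * (x * z) := by
    gcongr <;> linarith
  have product : (x + y + z) * y ≤ 80 * (x * z) := by
    refine le_of_mul_le_mul_left ?_ (mul_pos hp hq)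
    linear_combination 20 * (lower.trans (h.trans upper))
  by_contra! hlt
  nlinarith [sq_nonneg (x - z), mul_nonneg hx hy, mul_nonneg hz hy]

theorem diam_image_Icc_le {g : ℝ → ℝ} {a b : ℝ} (hab : a ≤ b)
    (hg : StrictMonoOn g (Icc a b) ∨ StrictAntiOn g (Icc a b)) :
    Metric.diam (g '' Icc a b) ≤ |g b - g a| := by
  have image : g '' Icc a b ⊆ uIcc (g b) (g a) := by
    rw [uIcc_comm, ← uIcc_of_le hab] at *
    rcases hg with hg | hg
    exacts [hg.monotoneOn.image_uIcc_subset, hg.antitoneOn.image_uIcc_subset]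
  exact Metric.diam_le_of_forall_dist_le (abs_nonneg _) fun x hx y hy ↦
    Real.dist_le_of_mem_uIcc (image hx) (image hy)

namespace InfinitelyRenormalizable

variable {c x : ℝ} {k : ℕ}

theorem zero_mem_Icc_radius (h : InfinitelyRenormalizable c) (k : ℕ) :
    (0 : ℝ) ∈ Icc (-renormRadius c k) (renormRadius c k) :=
  ⟨neg_nonpos.2 (h.radius_pos k).le, (h.radius_pos k).le⟩

theorem map_mem_Icc_of_abs_le (h : InfinitelyRenormalizable c) (hx : |x| ≤ renormRadius c k) :
    quadRenorm c k x ∈ Icc (-renormRadius c k) (quadRenorm c k 0) := by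
  rw [← quadRenorm_abs c k x, ← (h.isUnimodal k).map_radius]
  exact ⟨(h.isUnimodal k).map_le_map (abs_nonneg x) hx le_rfl,
    (h.isUnimodal k).map_le_map le_rfl (abs_nonneg x) hx⟩

theorem map_mem_Icc_of_abs_le_succ (h : InfinitelyRenormalizable c)
    (hx : |x| ≤ renormRadius c (k + 1)) :
    quadRenorm c k x ∈ Icc (renormRadius c (k + 1)) (quadRenorm c k 0) := by
  refine ⟨?_, (h.map_mem_Icc_of_abs_le (hx.trans (h.radius_succ_lt k).le)).2⟩
  rw [← quadRenorm_abs]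
  simpa only [h.map_radius_succ k] using
    (h.isUnimodal k).map_le_map (abs_nonneg x) hx (h.radius_succ_lt k).le

theorem abs_map_le (h : InfinitelyRenormalizable c) (hx : |x| ≤ renormRadius c k) :
    |quadRenorm c k x| ≤ renormRadius c k :=
  abs_le.2 ⟨(h.map_mem_Icc_of_abs_le hx).1,
    (h.map_mem_Icc_of_abs_le hx).2.trans (h.critValue_lt k).le⟩

theorem renormInterval_add_two_pow_subset (h : InfinitelyRenormalizable c) (k i : ℕ) :
    renormInterval c k (i + 2 ^ k) ⊆ renormInterval c k i := by
  rintro _ ⟨x, hx, rfl⟩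
  rw [Function.iterate_add_apply]
  refine mem_image_of_mem _ (abs_le.1 ?_)
  rw [abs_iterate_quadRenorm_zero]
  exact h.abs_map_le (abs_le.2 hx)

theorem renormInterval_succ_subset (h : InfinitelyRenormalizable c) (k i : ℕ) :
    renormInterval c (k + 1) i ⊆ renormInterval c k i := by
  have := h.radius_succ_lt k
  exact image_mono (Icc_subset_Icc (by linarith) (by linarith))

theorem renormInterval_dyadicResidue_succ_subset (h : InfinitelyRenormalizable c) (a : ℤ_[2])
    (k : ℕ) : renormInterval c (k + 1) (dyadicResidue a (k + 1)) ⊆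
      renormInterval c k (dyadicResidue a k) := by
  rcases dyadicResidue_succ a k with hk | hk <;> rw [hk]
  · exact h.renormInterval_succ_subset k _
  · exact (h.renormInterval_succ_subset k _).trans (h.renormInterval_add_two_pow_subset k _)

theorem exists_factor_iterate (h : InfinitelyRenormalizable c) {i : ℕ} (hi : i ≤ 2 ^ k) :
    ∃ R : ℝ → ℝ, (∀ x, R ((quadRenorm c 0)^[i] x) = quadRenorm c k x) ∧
      CrossRatioExpanding (quadRenorm c 0)^[i] (Icc 0 (renormRadius c k)) ∧
      CrossRatioExpanding R ((quadRenorm c 0)^[i] '' Icc 0 (renormRadius c k)) := by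
  have factor (x : ℝ) : (quadRenorm c 0)^[2 ^ k - i] ((quadRenorm c 0)^[i] x) =
      (-1) ^ k * quadRenorm c k x := by
    rw [← Function.iterate_add_apply, Nat.sub_add_cancel hi, iterate_quadRenorm_zero]
  have inj : InjOn ((quadRenorm c 0)^[2 ^ k - i] ∘ (quadRenorm c 0)^[i])
      (Icc 0 (renormRadius c k)) := fun x hx y hy hxy ↦ by
    rw [Function.comp_apply, Function.comp_apply, factor, factor] at hxy
    exact (h.isUnimodal k).strictAntiOn.injOn hx hy (mul_left_cancel₀ (by simp) hxy)
  refine ⟨fun y ↦ (-1) ^ k * (quadRenorm c 0)^[2 ^ k - i] y, fun x ↦ ?_,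
    crossRatioExpanding_iterate c i isPreconnected_Icc (InjOn.of_comp inj),
    (crossRatioExpanding_iterate c _
      (isPreconnected_Icc.image _ (continuous_iterate_quad c i).continuousOn)
      inj.image_of_comp).const_mul (by simp)⟩
  simp only [factor]
  rw [← mul_assoc, ← mul_pow]
  simp

theorem abs_iterate_sub_le (h : InfinitelyRenormalizable c) {i : ℕ} (hi : i ≤ 2 ^ k) :
    |(quadRenorm c 0)^[i] (quadRenorm c k 0) - (quadRenorm c 0)^[i] (renormRadius c (k + 1))| ≤
      9 / 10 * |(quadRenorm c 0)^[i] (renormRadius c k) - (quadRenorm c 0)^[i] 0| := by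
  obtain ⟨R, hR, hg, hR'⟩ := h.exists_factor_iterate hi
  have hp := h.radius_pos (k + 1)
  have hpv := h.radius_succ_lt_critValue k
  have hvq := h.critValue_lt k
  have mem0 := left_mem_Icc.2 (h.radius_pos k).le
  have memp : renormRadius c (k + 1) ∈ Icc 0 (renormRadius c k) := ⟨hp.le, (hpv.trans hvq).le⟩
  have memv : quadRenorm c k 0 ∈ Icc 0 (renormRadius c k) := ⟨(hp.trans hpv).le, hvq.le⟩
  have memq := right_mem_Icc.2 (h.radius_pos k).le
  have cross := hR'.crossRatio_le_map hg.strict (mapsTo_image _ _) mem0 memp memv memq hp hpv hvq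
  have hfv : quadRenorm c k (quadRenorm c k 0) = -quadRenorm c (k + 1) 0 := by
    rw [quadRenorm_succ, neg_neg]
  simp only [hR, hfv, h.map_radius_succ, (h.isUnimodal k).map_radius] at cross
  set g := (quadRenorm c 0)^[i]
  have bound := fun {x y z : ℝ} (hx : 0 ≤ x) (hy : 0 ≤ y) (hz : 0 ≤ z) ↦
    middle_le_of_crossRatio hx hy hz hp (h.four_mul_radius_succ_le k) hvq
      (h.critValue_pos (k + 1)) (h.critValue_lt (k + 1)) (h.radius_succ_le_five_mul k)
  rcases hg.strict with hm | hm
  · have h₁ := hm mem0 memp hp; have h₂ := hm memp memv hpv; have h₃ := hm memv memq hvq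
    rw [abs_of_pos (by linarith), abs_of_pos (by linarith)]
    refine (bound (sub_nonneg.2 h₁.le) (sub_nonneg.2 h₂.le) (sub_nonneg.2 h₃.le) ?_).trans_eq
      (by ring)
    linear_combination cross
  · have h₁ := hm mem0 memp hp; have h₂ := hm memp memv hpv; have h₃ := hm memv memq hvq
    rw [abs_of_neg (by linarith), abs_of_neg (by linarith), neg_sub]
    refine (bound (sub_nonneg.2 h₁.le) (sub_nonneg.2 h₂.le) (sub_nonneg.2 h₃.le) ?_).trans_eq
      (by ring)
    linear_combination cross

theorem renormInterval_add_two_pow_subset_image (h : InfinitelyRenormalizable c) {i : ℕ}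
    (hi : 1 ≤ i) : renormInterval c (k + 1) (i + 2 ^ k) ⊆
      (quadRenorm c 0)^[i] '' Icc (renormRadius c (k + 1)) (quadRenorm c k 0) := by
  rintro _ ⟨x, hx, rfl⟩
  have hfx := h.map_mem_Icc_of_abs_le_succ (abs_le.2 hx)
  refine ⟨quadRenorm c k x, hfx, ?_⟩
  rw [Function.iterate_add_apply, ← iterate_quad_abs c ((quadRenorm c 0)^[2 ^ k] x) hi,
    abs_iterate_quadRenorm_zero,
    abs_of_pos ((h.radius_pos (k + 1)).trans_le hfx.1)]

theorem diam_renormInterval_le (h : InfinitelyRenormalizable c) {i : ℕ} (hi : 1 ≤ i)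
    (hik : i ≤ 2 ^ k) : Metric.diam (renormInterval c (k + 1) (i + 2 ^ k)) ≤
      9 / 10 * Metric.diam (renormInterval c k i) := by
  obtain ⟨-, -, hg, -⟩ := h.exists_factor_iterate hik
  have sub : Icc (renormRadius c (k + 1)) (quadRenorm c k 0) ⊆ Icc 0 (renormRadius c k) :=
    Icc_subset_Icc (h.radius_pos (k + 1)).le (h.critValue_lt k).le
  calc Metric.diam (renormInterval c (k + 1) (i + 2 ^ k))
      ≤ Metric.diam ((quadRenorm c 0)^[i] '' Icc (renormRadius c (k + 1)) (quadRenorm c k 0)) :=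
        Metric.diam_mono (h.renormInterval_add_two_pow_subset_image hi)
          (isCompact_Icc.image (continuous_iterate_quad c i)).isBounded
    _ ≤ _ := diam_image_Icc_le (h.radius_succ_lt_critValue k).le (hg.mono sub).strict
    _ ≤ _ := h.abs_iterate_sub_le hik
    _ ≤ 9 / 10 * Metric.diam (renormInterval c k i) := by
        gcongr
        exact Metric.dist_le_diam_of_mem (isCompact_renormInterval c k i).isBounded
          ⟨_, right_mem_Icc.2 ((neg_lt_self (h.radius_pos k)).le), rfl⟩
          ⟨_, h.zero_mem_Icc_radius k, rfl⟩

theorem tendsto_diam_renormInterval_const (h : InfinitelyRenormalizable c) (m : ℕ) :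
    Tendsto (fun k ↦ Metric.diam (renormInterval c k m)) atTop (nhds 0) := by
  have cont := (continuous_iterate_quad c m).continuousAt (x := 0)
  rw [Metric.tendsto_atTop]
  intro ε hε
  obtain ⟨δ, hδ, near⟩ := Metric.continuousAt_iff.1 cont (ε / 4) (by positivity)
  obtain ⟨K, hK⟩ := Metric.tendsto_atTop.1 h.tendsto_radius δ hδ
  refine ⟨K, fun k hk ↦ ?_⟩
  have hq := hK k hk
  rw [Real.dist_eq, sub_zero, abs_of_pos (h.radius_pos k)] at hq
  have near' : ∀ x ∈ Icc (-renormRadius c k) (renormRadius c k),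
      dist ((quadRenorm c 0)^[m] x) ((quadRenorm c 0)^[m] 0) < ε / 4 := fun x hx ↦
    near (by rw [Real.dist_eq, sub_zero]; exact (abs_le.2 hx).trans_lt hq)
  rw [Real.dist_eq, sub_zero, abs_of_nonneg Metric.diam_nonneg]
  refine (Metric.diam_le_of_forall_dist_le (C := ε / 2) (by positivity) ?_).trans_lt (by linarith)
  rintro _ ⟨x, hx, rfl⟩ _ ⟨y, hy, rfl⟩
  linarith [dist_triangle_right ((quadRenorm c 0)^[m] x) ((quadRenorm c 0)^[m] y)
    ((quadRenorm c 0)^[m] 0), near' x hx, near' y hy]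

theorem tendsto_diam_renormInterval_of_frequently (h : InfinitelyRenormalizable c) {a : ℤ_[2]}
    (ha : ∃ᶠ k in atTop, 1 ≤ dyadicResidue a k ∧
      dyadicResidue a (k + 1) = dyadicResidue a k + 2 ^ k) :
    Tendsto (fun k ↦ Metric.diam (renormInterval c k (dyadicResidue a k))) atTop (nhds 0) := by
  have anti : Antitone fun k ↦ Metric.diam (renormInterval c k (dyadicResidue a k)) :=
    antitone_nat_of_succ_le fun k ↦ Metric.diam_mono
      (h.renormInterval_dyadicResidue_succ_subset a k) (isCompact_renormInterval c k _).isBounded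
  have lim := tendsto_atTop_ciInf anti ⟨0, by rintro _ ⟨k, rfl⟩; exact Metric.diam_nonneg⟩
  set ℓ := ⨅ k, Metric.diam (renormInterval c k (dyadicResidue a k))
  have contraction : ℓ - 9 / 10 * ℓ ≤ 0 := by
    refine le_of_tendsto_of_frequently
      ((lim.comp (tendsto_add_atTop_nat 1)).sub (lim.const_mul (9 / 10))) (ha.mono fun k hk ↦ ?_)
    simp only [Function.comp_apply, hk.2]
    linarith [h.diam_renormInterval_le hk.1 (dyadicResidue_lt a k).le]
  have nonneg : 0 ≤ ℓ := le_ciInf fun k ↦ Metric.diam_nonneg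
  rwa [show ℓ = 0 by linarith] at lim

theorem tendsto_diam_renormInterval (h : InfinitelyRenormalizable c) (a : ℤ_[2]) :
    Tendsto (fun k ↦ Metric.diam (renormInterval c k (dyadicResidue a k))) atTop (nhds 0) := by
  by_cases ha : ∃ᶠ k in atTop, 1 ≤ dyadicResidue a k ∧
      dyadicResidue a (k + 1) = dyadicResidue a k + 2 ^ k
  · exact h.tendsto_diam_renormInterval_of_frequently ha
  obtain ⟨K, hK⟩ := eventually_atTop.1 (not_frequently.1 ha)
  obtain ⟨m, hm⟩ : ∃ m, ∀ᶠ k in atTop, dyadicResidue a k = m := by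
    by_cases zero : ∀ k, dyadicResidue a k = 0
    · exact ⟨0, .of_forall zero⟩
    push Not at zero
    obtain ⟨k₀, hk₀⟩ := zero
    refine ⟨dyadicResidue a (max K k₀), eventually_atTop.2 ⟨max K k₀, fun k hk ↦ ?_⟩⟩
    induction k, hk using Nat.le_induction with
    | base => rfl
    | succ k hk ih =>
      have pos := dyadicResidue_mono a ((le_max_right _ _).trans hk)
      have := hK k ((le_max_left _ _).trans hk)
      have := dyadicResidue_succ a k
      omega
  exact (h.tendsto_diam_renormInterval_const m).congr' (hm.mono fun k hk ↦ by simp only [hk])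

theorem existsUnique_mem_renormInterval (h : InfinitelyRenormalizable c) (a : ℤ_[2]) :
    ∃! x, ∀ k, x ∈ renormInterval c k (dyadicResidue a k) := by
  obtain ⟨x, hx⟩ := IsCompact.nonempty_iInter_of_sequence_nonempty_isCompact_isClosed
    (fun k ↦ renormInterval c k (dyadicResidue a k)) (h.renormInterval_dyadicResidue_succ_subset a)
    (fun k ↦ ⟨_, 0, h.zero_mem_Icc_radius k, rfl⟩) (isCompact_renormInterval c _ _)
    fun k ↦ (isCompact_renormInterval c k _).isClosed
  rw [mem_iInter] at hx
  refine ⟨x, hx, fun y hy ↦ dist_le_zero.1 ?_⟩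
  exact ge_of_tendsto (h.tendsto_diam_renormInterval a) (.of_forall fun k ↦
    Metric.dist_le_diam_of_mem (isCompact_renormInterval c k _).isBounded (hy k) (hx k))

/-- The point of the Feigenbaum Cantor set of `x ↦ c - x²` with `2`-adic address `a`. -/
noncomputable def cantorPoint (h : InfinitelyRenormalizable c) (a : ℤ_[2]) : ℝ :=
  (h.existsUnique_mem_renormInterval a).choose

theorem cantorPoint_mem (h : InfinitelyRenormalizable c) (a : ℤ_[2]) (k : ℕ) :
    h.cantorPoint a ∈ renormInterval c k (dyadicResidue a k) :=
  (h.existsUnique_mem_renormInterval a).choose_spec.1 k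

theorem eq_cantorPoint (h : InfinitelyRenormalizable c) {a : ℤ_[2]}
    (hx : ∀ k, x ∈ renormInterval c k (dyadicResidue a k)) : x = h.cantorPoint a :=
  (h.existsUnique_mem_renormInterval a).choose_spec.2 x hx

theorem cantorPoint_zero (h : InfinitelyRenormalizable c) : h.cantorPoint 0 = 0 :=
  (h.eq_cantorPoint fun k ↦ by
    rw [dyadicResidue_zero_left]
    exact ⟨0, h.zero_mem_Icc_radius k, rfl⟩).symm

theorem map_cantorPoint (h : InfinitelyRenormalizable c) (a : ℤ_[2]) :
    quadRenorm c 0 (h.cantorPoint a) = h.cantorPoint (a + 1) := by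
  refine h.eq_cantorPoint fun k ↦ ?_
  have residue : dyadicResidue (a + 1) k = (dyadicResidue a k + 1) % 2 ^ k := by
    simpa using dyadicResidue_add_natCast a 1 k
  have image : quadRenorm c 0 (h.cantorPoint a) ∈ renormInterval c k (dyadicResidue a k + 1) := by
    obtain ⟨x, hx, hxa⟩ := h.cantorPoint_mem a k
    exact ⟨x, hx, by rw [Function.iterate_succ_apply', hxa]⟩
  rw [residue]
  rcases (Nat.succ_le_of_lt (dyadicResidue_lt a k)).lt_or_eq with lt | eq
  · rwa [Nat.mod_eq_of_lt lt]
  · rw [Nat.succ_eq_add_one] at eq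
    rw [eq, Nat.mod_self]
    rw [eq, ← zero_add (2 ^ k)] at image
    exact h.renormInterval_add_two_pow_subset k 0 image

theorem iterate_cantorPoint (h : InfinitelyRenormalizable c) (n : ℕ) (a : ℤ_[2]) :
    (quadRenorm c 0)^[n] (h.cantorPoint a) = h.cantorPoint (a + n) := by
  induction n with
  | zero => simp
  | succ n ih => rw [Function.iterate_succ_apply', ih, h.map_cantorPoint, Nat.cast_succ, add_assoc]

theorem continuous_cantorPoint (h : InfinitelyRenormalizable c) : Continuous h.cantorPoint := by
  refine continuous_iff_continuousAt.2 fun a ↦ Metric.continuousAt_iff'.2 fun ε hε ↦ ?_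
  obtain ⟨k, hk⟩ := ((h.tendsto_diam_renormInterval a).eventually_lt_const hε).exists
  filter_upwards [eventually_dyadicResidue_eq a k] with b hb
  exact (Metric.dist_le_diam_of_mem (isCompact_renormInterval c k _).isBounded
    (hb ▸ h.cantorPoint_mem b k) (h.cantorPoint_mem a k)).trans_lt hk

theorem radius_succ_le_abs_cantorPoint (h : InfinitelyRenormalizable c) {a : ℤ_[2]}
    (ha : dyadicResidue a (k + 1) = 2 ^ k) :
    renormRadius c (k + 1) ≤ |h.cantorPoint a| ∧ |h.cantorPoint a| < renormRadius c k := by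
  obtain ⟨x, hx, hxa⟩ := ha ▸ h.cantorPoint_mem a (k + 1)
  have hfx := h.map_mem_Icc_of_abs_le_succ (abs_le.2 hx)
  rw [← hxa, abs_iterate_quadRenorm_zero, abs_of_pos ((h.radius_pos (k + 1)).trans_le hfx.1)]
  exact ⟨hfx.1, hfx.2.trans_lt (h.critValue_lt k)⟩

theorem abs_cantorPoint_le (h : InfinitelyRenormalizable c) {a : ℤ_[2]}
    (ha : dyadicResidue a k = 0) : |h.cantorPoint a| ≤ renormRadius c k := by
  obtain ⟨x, hx, hxa⟩ := ha ▸ h.cantorPoint_mem a k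
  rw [← hxa]
  exact abs_le.2 hx

theorem abs_cantorPoint_lt (h : InfinitelyRenormalizable c) {a : ℤ_[2]}
    (ha : dyadicResidue a k = 0) : |h.cantorPoint a| < renormRadius c k := by
  rcases dyadicResidue_succ a k with h₁ | h₁
  · exact (h.abs_cantorPoint_le (h₁.trans ha)).trans_lt (h.radius_succ_lt k)
  · exact (h.radius_succ_le_abs_cantorPoint (by rw [h₁, ha, zero_add])).2

theorem injective_cantorPoint (h : InfinitelyRenormalizable c) :
    Function.Injective h.cantorPoint := by
  intro a b hab
  by_contra hne
  obtain ⟨k, eq, ne⟩ := exists_first_dyadicResidue_ne hne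
  -- Shifting both addresses by `n` makes them vanish modulo `2 ^ k`.
  obtain ⟨n, hn⟩ : ∃ n, dyadicResidue a k + n = 2 ^ k :=
    ⟨_, Nat.add_sub_cancel' (dyadicResidue_lt a k).le⟩
  have a_zero : dyadicResidue (a + n) k = 0 := by
    rw [dyadicResidue_add_natCast, hn, Nat.mod_self]
  have b_zero : dyadicResidue (b + n) k = 0 := by
    rw [dyadicResidue_add_natCast, ← eq, hn, Nat.mod_self]
  have shifted_ne : dyadicResidue (a + n) (k + 1) ≠ dyadicResidue (b + n) (k + 1) := by
    rw [dyadicResidue_add_natCast, dyadicResidue_add_natCast]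
    exact fun mod ↦ ne ((Nat.ModEq.add_right_cancel' n mod).eq_of_lt_of_lt
      (dyadicResidue_lt _ _) (dyadicResidue_lt _ _))
  have shifted_eq : h.cantorPoint (a + n) = h.cantorPoint (b + n) := by
    rw [← h.iterate_cantorPoint, ← h.iterate_cantorPoint, hab]
  rcases dyadicResidue_succ (a + n) k with ha | ha <;>
    rcases dyadicResidue_succ (b + n) k with hb | hb <;>
    rw [a_zero] at ha <;> rw [b_zero] at hb
  · exact shifted_ne (ha.trans hb.symm)
  · have outside := (h.radius_succ_le_abs_cantorPoint (hb.trans (zero_add _))).1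
    rw [← shifted_eq] at outside
    exact (h.abs_cantorPoint_lt ha).not_ge outside
  · have outside := (h.radius_succ_le_abs_cantorPoint (ha.trans (zero_add _))).1
    rw [shifted_eq] at outside
    exact (h.abs_cantorPoint_lt hb).not_ge outside
  · exact shifted_ne (ha.trans hb.symm)

end InfinitelyRenormalizable

namespace CrossRatioExpanding

open Topology

variable {g : ℝ → ℝ} {s : Set ℝ} {a b c d D : ℝ}

theorem crossRatio_le_of_hasDerivAt (hg : CrossRatioExpanding g s) (hD : HasDerivAt g D b)
    (ha : a ∈ s) (hs : Icc b d ⊆ s) (hab : a < b) (hbd : b < d) :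
    (d - a) * ((g b - g a) * (g d - g b)) ≤ (g d - g a) * D * ((b - a) * (d - b)) := by
  have slope_lim := hD.tendsto_slope.mono_left (nhdsGT_le_nhdsNE b)
  have id_lim : Tendsto (fun y : ℝ ↦ y) (𝓝[>] b) (𝓝 b) := nhdsWithin_le_nhds
  have map_lim : Tendsto g (𝓝[>] b) (𝓝 (g b)) :=
    hD.continuousAt.tendsto.mono_left nhdsWithin_le_nhds
  refine le_of_tendsto_of_tendsto (((map_lim.const_sub (g d)).const_mul _).const_mul (d - a))
    ((slope_lim.const_mul (g d - g a)).mul ((id_lim.const_sub d).const_mul (b - a))) ?_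
  filter_upwards [Ioo_mem_nhdsGT hbd] with y hy
  have hyb : 0 < y - b := sub_pos.2 hy.1
  have cross := hg.crossRatio_le ha (hs ⟨le_rfl, hbd.le⟩) (hs ⟨hy.1.le, hy.2.le⟩)
    (hs ⟨hbd.le, le_rfl⟩) hab hy.1 hy.2
  rw [slope_def_field, mul_div_assoc', div_mul_eq_mul_div, le_div_iff₀ hyb]
  linarith

theorem crossRatio_le_of_hasDerivAt_left (hg : CrossRatioExpanding g s) (hD : HasDerivAt g D a)
    (hs : Icc a c ⊆ s) (hd : d ∈ s) (hac : a < c) (hcd : c < d) :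
    (d - a) * (c - a) * (D * (g d - g c)) ≤ (g d - g a) * (g c - g a) * (d - c) := by
  have slope_lim := hD.tendsto_slope.mono_left (nhdsGT_le_nhdsNE a)
  have id_lim : Tendsto (fun y : ℝ ↦ y) (𝓝[>] a) (𝓝 a) := nhdsWithin_le_nhds
  have map_lim : Tendsto g (𝓝[>] a) (𝓝 (g a)) :=
    hD.continuousAt.tendsto.mono_left nhdsWithin_le_nhds
  refine le_of_tendsto_of_tendsto
    (((id_lim.const_sub c).const_mul (d - a)).mul (slope_lim.mul_const (g d - g c)))
    (((map_lim.const_sub (g c)).const_mul (g d - g a)).mul_const (d - c)) ?_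
  filter_upwards [Ioo_mem_nhdsGT hac] with y hy
  have hya : 0 < y - a := sub_pos.2 hy.1
  have cross := hg.crossRatio_le (hs ⟨le_rfl, hac.le⟩) (hs ⟨hy.1.le, hy.2.le⟩)
    (hs ⟨hac.le, le_rfl⟩) hd hy.1 hy.2 hcd
  rw [slope_def_field, div_mul_eq_mul_div, mul_div_assoc', div_le_iff₀ hya]
  linarith

end CrossRatioExpanding

theorem hasDerivAt_quadRenorm (c : ℝ) (k : ℕ) (x : ℝ) :
    HasDerivAt (quadRenorm c k) (deriv (quadRenorm c k) x) x :=
  (differentiable_quadRenorm c k x).hasDerivAt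

theorem deriv_quadRenorm_neg (c : ℝ) (k : ℕ) (x : ℝ) :
    deriv (quadRenorm c k) (-x) = -deriv (quadRenorm c k) x := by
  rw [← neg_eq_iff_eq_neg, ← deriv_comp_neg]
  simp only [quadRenorm_neg]

namespace InfinitelyRenormalizable

open Topology

variable {c : ℝ} {k : ℕ} {l r l' r' x : ℝ}

theorem hasDerivAt_map_map (h : InfinitelyRenormalizable c) (k : ℕ) :
    HasDerivAt (quadRenorm c k ∘ quadRenorm c k)
      (deriv (quadRenorm c k) (renormRadius c (k + 1)) ^ 2) (renormRadius c (k + 1)) := by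
  rw [sq]
  refine HasDerivAt.comp _ ?_ (hasDerivAt_quadRenorm c k _)
  rw [h.map_radius_succ k]
  exact hasDerivAt_quadRenorm c k _

theorem hasDerivAt_succ_neg_radius (h : InfinitelyRenormalizable c) (k : ℕ) :
    HasDerivAt (quadRenorm c (k + 1))
      (deriv (quadRenorm c k) (renormRadius c (k + 1)) ^ 2) (-renormRadius c (k + 1)) := by
  have deriv_eq : deriv (quadRenorm c (k + 1)) (renormRadius c (k + 1)) =
      -deriv (quadRenorm c k) (renormRadius c (k + 1)) ^ 2 := (h.hasDerivAt_map_map k).neg.deriv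
  have hderiv := hasDerivAt_quadRenorm c (k + 1) (-renormRadius c (k + 1))
  rwa [deriv_quadRenorm_neg, deriv_eq, neg_neg] at hderiv

theorem exists_map_eq_zero (h : InfinitelyRenormalizable c) (k : ℕ) :
    ∃ z ∈ Ioo (renormRadius c (k + 1)) (quadRenorm c k 0), quadRenorm c k z = 0 := by
  refine intermediate_value_Ioo' (h.radius_succ_lt_critValue k).le
    (continuous_quadRenorm c k).continuousOn ⟨?_, ?_⟩
  · linarith [h.critValue_pos (k + 1), quadRenorm_succ c k 0]
  · rw [h.map_radius_succ k]
    exact h.radius_pos (k + 1)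

theorem one_lt_deriv_sq (h : InfinitelyRenormalizable c) (k : ℕ) :
    1 < deriv (quadRenorm c k) (renormRadius c (k + 1)) ^ 2 := by
  obtain ⟨z, ⟨hpz, hzv⟩, hz⟩ := h.exists_map_eq_zero k
  have hp := h.radius_pos (k + 1)
  have hv' := h.critValue_pos (k + 1)
  have hzq : z < renormRadius c k := hzv.trans (h.critValue_lt k)
  have maps : MapsTo (quadRenorm c k) (Icc 0 z) (Icc 0 (renormRadius c k)) := fun x hx ↦ by
    have hzx := (h.isUnimodal k).map_le_map hx.1 hx.2 hzq.le
    have hx0 := (h.isUnimodal k).map_le_map le_rfl hx.1 (hx.2.trans hzq.le)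
    exact ⟨by linarith, by linarith [h.critValue_lt k]⟩
  have expanding : CrossRatioExpanding (quadRenorm c k ∘ quadRenorm c k) (Icc 0 z) :=
    (h.crossRatioExpanding k).comp
      ((h.crossRatioExpanding k).mono (Icc_subset_Icc_right hzq.le)) maps
  have cross := expanding.crossRatio_le_of_hasDerivAt (h.hasDerivAt_map_map k) (a := 0) (d := z)
    ⟨le_rfl, (hp.trans hpz).le⟩ (Icc_subset_Icc_left hp.le) hp hpz
  have map_zero : quadRenorm c k (quadRenorm c k 0) = -quadRenorm c (k + 1) 0 := by
    rw [quadRenorm_succ, neg_neg]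
  simp only [Function.comp_apply, hz, map_zero, h.map_radius_succ k, sub_neg_eq_add, sub_zero]
    at cross
  by_contra! hD
  have hle : (quadRenorm c k 0 + quadRenorm c (k + 1) 0) *
      deriv (quadRenorm c k) (renormRadius c (k + 1)) ^ 2 ≤
        quadRenorm c k 0 + quadRenorm c (k + 1) 0 :=
    mul_le_of_le_one_right (by linarith) hD
  have hle' := mul_le_mul_of_nonneg_right hle (mul_nonneg hp.le (sub_pos.2 hpz).le)
  nlinarith [mul_pos (pow_pos hp 2) (sub_pos.2 hzv), mul_pos hv' (pow_pos (sub_pos.2 hpz) 2),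
    mul_nonneg hv'.le (mul_nonneg (hp.trans hpz).le (sub_pos.2 hzv).le)]

theorem lt_map_zero (h : InfinitelyRenormalizable c) (hqx : -renormRadius c 0 < x)
    (hxq : x < renormRadius c 1) : x < quadRenorm c 0 x := by
  have hq := (h.isUnimodal 0).map_radius
  have hp := h.map_radius_succ 0
  rw [quadRenorm_zero] at hq hp ⊢
  have factor : (renormRadius c 0 + renormRadius c 1) *
      (renormRadius c 1 - renormRadius c 0 + 1) = 0 := by linarith
  have eq := (mul_eq_zero.1 factor).resolve_left (add_pos (h.radius_pos 0) (h.radius_pos 1)).ne'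
  nlinarith [mul_pos (neg_lt_iff_pos_add.1 hqx) (sub_pos.2 hxq)]

theorem crossRatioExpanding_neg (h : InfinitelyRenormalizable c) (k : ℕ) :
    CrossRatioExpanding (quadRenorm c k) (Icc (-renormRadius c k) 0) := by
  convert (h.crossRatioExpanding k).comp
    (crossRatioExpanding_const_sub 0 (Icc (-renormRadius c k) 0))
    (fun x hx ↦ ⟨by linarith [hx.2], by linarith [hx.1]⟩) using 1
  ext x
  rw [Function.comp_apply, zero_sub, quadRenorm_neg]

theorem map_succ_ne_self (h : InfinitelyRenormalizable c)
    (hx : x ∈ Ioo (-renormRadius c (k + 1)) 0) : quadRenorm c (k + 1) x ≠ x := by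
  intro hfix
  have hD := h.one_lt_deriv_sq k
  have hv := h.critValue_pos (k + 1)
  have cross := (h.crossRatioExpanding_neg (k + 1)).crossRatio_le_of_hasDerivAt_left
    (h.hasDerivAt_succ_neg_radius k) (Icc_subset_Icc_right hx.2.le)
    ⟨neg_nonpos.2 (h.radius_pos _).le, le_rfl⟩ hx.1 hx.2
  rw [hfix, quadRenorm_neg, (h.isUnimodal (k + 1)).map_radius] at cross
  set D := deriv (quadRenorm c k) (renormRadius c (k + 1)) ^ 2
  have hxp : 0 < x - -renormRadius c (k + 1) := sub_pos.2 hx.1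
  have cross' : renormRadius c (k + 1) * (D * (quadRenorm c (k + 1) 0 - x)) ≤
      (quadRenorm c (k + 1) 0 + renormRadius c (k + 1)) * -x :=
    le_of_mul_le_mul_left (by linarith) hxp
  have hgap : 0 < quadRenorm c (k + 1) 0 - x := by linarith [hx.2]
  have expand := mul_lt_mul_of_pos_left (lt_mul_of_one_lt_left hgap hD) (h.radius_pos (k + 1))
  nlinarith

theorem lt_map (h : InfinitelyRenormalizable c) (hqx : -renormRadius c k < x)
    (hxp : x < renormRadius c (k + 1)) : x < quadRenorm c k x := by
  cases k with
  | zero => exact h.lt_map_zero hqx hxp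
  | succ k =>
    rcases le_or_gt 0 x with hx | hx
    · refine hxp.trans ?_
      simpa only [h.map_radius_succ (k + 1)] using
        (h.isUnimodal (k + 1)).map_lt_map hx hxp (h.radius_succ_lt (k + 1)).le
    · by_contra! hle
      obtain ⟨y, hy, hfy : quadRenorm c (k + 1) y - y = 0⟩ :=
        intermediate_value_Ico hx.le
          ((continuous_quadRenorm c (k + 1)).sub continuous_id).continuousOn
          ⟨sub_nonpos.2 hle, by simpa only [Pi.sub_apply, id, sub_zero] using h.critValue_pos _⟩
      exact h.map_succ_ne_self ⟨hqx.trans_le hy.1, hy.2⟩ (sub_eq_zero.1 hfy)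

end InfinitelyRenormalizable

/-- A compact neighbourhood `[l, r]` of `[0, f_k 0]` inside `(-q_k, q_k)` that `f_k` maps into its
interior. -/
structure TrappingInterval (c : ℝ) (k : ℕ) (l r : ℝ) : Prop where
  neg_radius_lt : -renormRadius c k < l
  left_neg : l < 0
  critValue_lt : quadRenorm c k 0 < r
  lt_radius : r < renormRadius c k
  mapsTo : MapsTo (quadRenorm c k) (Icc l r) (Ioo l r)

namespace InfinitelyRenormalizable

open Topology

variable {c : ℝ} {k : ℕ} {l r l' r' x : ℝ}

theorem exists_trappingInterval (h : InfinitelyRenormalizable c) (k : ℕ) {m : ℝ}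
    (hm : -renormRadius c k < m) : ∃ l r, l < m ∧ TrappingInterval c k l r := by
  have hu := h.isUnimodal k
  have hv := h.critValue_pos k
  obtain ⟨r, hvr, hrq⟩ := exists_between (h.critValue_lt k)
  have hr : -renormRadius c k < quadRenorm c k r := by
    simpa only [hu.map_radius] using hu.map_lt_map (hv.trans hvr).le hrq le_rfl
  obtain ⟨l, hql, hl⟩ := exists_between (lt_min (lt_min hr (neg_lt_zero.2 hu.pos)) hm)
  rw [lt_min_iff, lt_min_iff] at hl
  refine ⟨l, r, hl.2, hql, hl.1.2, hvr, hrq, fun x hx ↦ ⟨?_, ?_⟩⟩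
  · rcases le_or_gt 0 x with hx0 | hx0
    · exact hl.1.1.trans_le (hu.map_le_map hx0 hx.2 hrq.le)
    · exact hx.1.trans_lt (h.lt_map (hql.trans_le hx.1) (hx0.trans (h.radius_pos (k + 1))))
  · exact (h.map_mem_Icc_of_abs_le
      (abs_le.2 ⟨hql.le.trans hx.1, hx.2.trans hrq.le⟩)).2.trans_lt hvr

theorem abs_iterate_lt (h : InfinitelyRenormalizable c) (hx : |x| < renormRadius c k) (n : ℕ) :
    |(quadRenorm c k)^[n] x| < renormRadius c k := by
  induction n with
  | zero => exact hx
  | succ n ih =>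
    have low := (h.isUnimodal k).map_lt_map (abs_nonneg _) ih le_rfl
    rw [quadRenorm_abs, (h.isUnimodal k).map_radius] at low
    rw [Function.iterate_succ_apply']
    exact abs_lt.2 ⟨low, (h.map_mem_Icc_of_abs_le ih.le).2.trans_lt (h.critValue_lt k)⟩

theorem exists_iterate_mem_Ioo (h : InfinitelyRenormalizable c) (hl : l < 0)
    (hr : quadRenorm c k 0 < r) (hx : |x| < renormRadius c k) :
    ∃ n, (quadRenorm c k)^[n] x ∈ Ioo l r := by
  by_contra! hcon
  set y : ℕ → ℝ := fun n ↦ (quadRenorm c k)^[n + 1] x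
  have y_succ (n : ℕ) : y (n + 1) = quadRenorm c k (y n) := Function.iterate_succ_apply' _ _ _
  have y_le (n : ℕ) : y n ≤ l := by
    by_contra! hlt
    refine hcon (n + 1) ⟨hlt, lt_of_le_of_lt ?_ hr⟩
    rw [Function.iterate_succ_apply']
    exact (h.map_mem_Icc_of_abs_le (h.abs_iterate_lt hx n).le).2
  have lt_y (n : ℕ) : -renormRadius c k < y n := (abs_lt.1 (h.abs_iterate_lt hx (n + 1))).1
  have lt_radius {t : ℝ} (ht : t ≤ l) : t < renormRadius c (k + 1) :=
    (ht.trans_lt hl).trans (h.radius_pos (k + 1))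
  have mono : Monotone y := monotone_nat_of_le_succ fun n ↦ by
    simpa only [y_succ] using (h.lt_map (lt_y n) (lt_radius (y_le n))).le
  have lim := tendsto_atTop_ciSup mono ⟨l, forall_mem_range.2 y_le⟩
  have fixed : quadRenorm c k (⨆ n, y n) = ⨆ n, y n :=
    tendsto_nhds_unique (((continuous_quadRenorm c k).tendsto _).comp lim)
      ((lim.comp (tendsto_add_atTop_nat 1)).congr y_succ)
  exact (h.lt_map ((lt_y 0).trans_le (mono.ge_of_tendsto lim 0))
    (lt_radius (le_of_tendsto' lim y_le))).ne' fixed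

end InfinitelyRenormalizable

section PseudoOrbit

open Topology

variable {E : Type*} [TopologicalSpace E] [AddCommGroup E] [IsTopologicalAddGroup E]
  {f : E → E} {y : ℕ → E} {s : E}

theorem mapClusterPt_map_of_pseudoOrbit (hf : Continuous f)
    (hy : Tendsto (fun n ↦ y (n + 1) - f (y n)) atTop (𝓝 0)) (hs : MapClusterPt s atTop y) :
    MapClusterPt (f s) atTop y := by
  rw [mapClusterPt_iff_ultrafilter] at hs ⊢
  obtain ⟨U, hU, hUs⟩ := hs
  refine ⟨U.map (· + 1), (tendsto_add_atTop_nat 1).mono_left hU, ?_⟩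
  rw [Ultrafilter.coe_map, tendsto_map'_iff]
  have lim := (hy.mono_left hU).add ((hf.tendsto s).comp hUs)
  rw [zero_add] at lim
  exact lim.congr fun n ↦ sub_add_cancel (y (n + 1)) (f (y n))

theorem exists_mapClusterPt_map_eq_of_pseudoOrbit [T2Space E] {K : Set E} (hK : IsCompact K)
    (hyK : ∀ n, y n ∈ K) (hf : Continuous f)
    (hy : Tendsto (fun n ↦ y (n + 1) - f (y n)) atTop (𝓝 0)) (hs : MapClusterPt s atTop y) :
    ∃ t, MapClusterPt t atTop y ∧ f t = s := by
  rw [mapClusterPt_iff_ultrafilter] at hs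
  obtain ⟨U, hU, hUs⟩ := hs
  have pred_lim : Tendsto (· - 1) (U : Filter ℕ) atTop := (tendsto_sub_atTop_nat 1).mono_left hU
  obtain ⟨t, -, ht⟩ := hK.ultrafilter_le_nhds (U.map fun n ↦ y (n - 1))
    (le_principal_iff.2 (Eventually.of_forall (f := (U : Filter ℕ)) fun n ↦ hyK (n - 1)))
  have y_lim : Tendsto (fun n ↦ y (n - 1)) U (𝓝 t) := ht
  refine ⟨t, mapClusterPt_iff_ultrafilter.2 ⟨U.map (· - 1), pred_lim, y_lim⟩, ?_⟩
  have y_succ_lim : Tendsto (fun n ↦ y (n - 1 + 1)) U (𝓝 s) := by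
    refine hUs.congr' ?_
    filter_upwards [hU (eventually_ge_atTop 1)] with n hn
    rw [Nat.sub_add_cancel hn]
  refine tendsto_nhds_unique ((hf.tendsto t).comp y_lim) ?_
  have lim := y_succ_lim.sub (hy.comp pred_lim)
  rw [sub_zero] at lim
  exact lim.congr fun n ↦ sub_sub_cancel (y (n - 1 + 1)) (f (y (n - 1)))

end PseudoOrbit

namespace InfinitelyRenormalizable

open Topology

variable {c : ℝ} {k : ℕ} {l r l' r' : ℝ} {S : Set ℝ}

theorem radius_succ_le_abs_of_mapsTo (h : InfinitelyRenormalizable c) (hl : l < 0)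
    (hr : quadRenorm c (k + 1) 0 < r) (hS : MapsTo (quadRenorm c k) S S)
    (hSlr : ∀ s ∈ S, -s ∉ Ioo l r) {s : ℝ} (hs : s ∈ S) : renormRadius c (k + 1) ≤ |s| := by
  by_contra! hlt
  obtain ⟨n, hn⟩ := h.exists_iterate_mem_Ioo hl hr ((abs_neg s).trans_lt hlt)
  have maps : MapsTo (quadRenorm c (k + 1)) (-S) (-S) := fun x hx ↦ by
    rw [Set.mem_neg, quadRenorm_succ, neg_neg, ← quadRenorm_neg c k x]
    exact hS (hS hx)
  have mem := maps.iterate n (x := -s) (by rwa [Set.mem_neg, neg_neg])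
  exact hSlr _ mem (by rwa [neg_neg])

theorem subset_singleton_radius_succ (h : InfinitelyRenormalizable c) (hS : IsCompact S)
    (hSq : ∀ s ∈ S, |s| < renormRadius c k) (hSS : S ⊆ quadRenorm c k '' S)
    (hSp : ∀ s ∈ S, renormRadius c (k + 1) ≤ |s|) : S ⊆ {renormRadius c (k + 1)} := by
  rcases S.eq_empty_or_nonempty with rfl | hne
  · exact empty_subset _
  have hu := h.isUnimodal k
  obtain ⟨m, hm, hmin⟩ := hS.exists_isLeast hne
  have neg_lt : -renormRadius c (k + 1) < m := by
    by_contra! hle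
    obtain ⟨t, ht, rfl⟩ := hSS hm
    rcases le_abs'.1 (hSp t ht) with htp | htp
    · have hlt := h.lt_map (abs_lt.1 (hSq t ht)).1 (by linarith [h.radius_pos (k + 1)])
      exact (hmin ht).not_gt hlt
    · obtain ⟨u, hu', rfl⟩ := hSS ht
      have hle' := hu.map_le_map (by linarith [h.radius_pos (k + 1)])
        (h.map_mem_Icc_of_abs_le (hSq u hu').le).2 (h.critValue_lt k).le
      linarith [quadRenorm_succ c k 0, h.critValue_lt (k + 1)]
  have radius_le : ∀ s ∈ S, renormRadius c (k + 1) ≤ s := fun s hs ↦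
    (le_abs'.1 (hSp s hs)).resolve_left (neg_lt.trans_le (hmin hs)).not_ge
  intro s hs
  refine le_antisymm ?_ (radius_le s hs)
  obtain ⟨t, ht, rfl⟩ := hSS hs
  simpa only [h.map_radius_succ k] using hu.map_le_map (h.radius_pos (k + 1)).le (radius_le t ht)
    (abs_lt.1 (hSq t ht)).2.le

theorem tendsto_of_pseudoOrbit (h : InfinitelyRenormalizable c) (hl : -renormRadius c k < l)
    (hr : r < renormRadius c k) (hl' : l' < 0) (hr' : quadRenorm c (k + 1) 0 < r') {y : ℕ → ℝ}
    (hy : ∀ n, y n ∈ Icc l r)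
    (hpseudo : Tendsto (fun n ↦ y (n + 1) - quadRenorm c k (y n)) atTop (𝓝 0))
    (hnot : ∀ᶠ n in atTop, -y n ∉ Ioo l' r') :
    Tendsto y atTop (𝓝 (renormRadius c (k + 1))) := by
  have hcont := continuous_quadRenorm c k
  set S : Set ℝ := {s | MapClusterPt s atTop y}
  have subset : S ⊆ Icc l r := fun s hs ↦
    isClosed_Icc.mem_of_mapClusterPt hs (Eventually.of_forall hy)
  have avoids : ∀ s ∈ S, -s ∉ Ioo l' r' := fun s hs hmem ↦
    (mapClusterPt_iff_frequently.1 hs _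
      (continuous_neg.continuousAt.preimage_mem_nhds (isOpen_Ioo.mem_nhds hmem))) hnot
  have singleton : S ⊆ {renormRadius c (k + 1)} := h.subset_singleton_radius_succ
    (isCompact_Icc.of_isClosed_subset isClosed_setOfPred_clusterPt subset)
    (fun s hs ↦ abs_lt.2 ⟨hl.trans_le (subset hs).1, (subset hs).2.trans_lt hr⟩)
    (fun s hs ↦ exists_mapClusterPt_map_eq_of_pseudoOrbit isCompact_Icc hy hcont hpseudo hs)
    (fun s hs ↦ h.radius_succ_le_abs_of_mapsTo (S := S) hl' hr'
      (fun s hs ↦ mapClusterPt_map_of_pseudoOrbit hcont hpseudo hs) avoids hs)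
  exact isCompact_Icc.tendsto_nhds_of_unique_mapClusterPt (Eventually.of_forall hy)
    fun s _ hs ↦ singleton hs

end InfinitelyRenormalizable

section Saddle

open MeasureTheory Topology

/-- The linear map `(v, x) ↦ (0, μ * x)`: the derivative of a map of the plane at a saddle whose
first direction is superattracting and whose second direction has multiplier `μ`. -/
noncomputable def sndScale (μ : ℝ) : ℝ × ℝ →L[ℝ] ℝ × ℝ :=
  ContinuousLinearMap.prod 0 (μ • ContinuousLinearMap.snd ℝ ℝ ℝ)

theorem sndScale_apply (μ : ℝ) (z : ℝ × ℝ) : sndScale μ z = (0, μ * z.2) := by simp [sndScale]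

theorem sndScale_comp (μ ν : ℝ) : (sndScale μ).comp (sndScale ν) = sndScale (μ * ν) := by
  ext <;> simp [sndScale]

theorem measure_prod_eq_zero_of_subsingleton_sections {α β : Type*} [MeasurableSpace α]
    [MeasurableSpace β] {μ : Measure α} {ν : Measure β} [SFinite ν] [NullSingletonClass ν]
    {s : Set (α × β)} (hs : MeasurableSet s) (h : ∀ a, (Prod.mk a ⁻¹' s).Subsingleton) :
    μ.prod ν s = 0 :=
  (Measure.measure_prod_null hs).2 (Eventually.of_forall fun a ↦ (h a).measure_zero ν)

variable {F : ℝ × ℝ → ℝ × ℝ} {μ : ℝ} {κ : NNReal} {s : Set (ℝ × ℝ)} {P z z' : ℝ × ℝ}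

theorem abs_sub_le_of_approximatesLinearOn (hF : ApproximatesLinearOn F (sndScale μ) s κ)
    (hz : z ∈ s) (hz' : z' ∈ s) (hle : |z.1 - z'.1| ≤ |z.2 - z'.2|) :
    |(F z).1 - (F z').1| ≤ κ * |z.2 - z'.2| ∧
      (|μ| - κ) * |z.2 - z'.2| ≤ |(F z).2 - (F z').2| := by
  have norm_eq : ‖z - z'‖ = |z.2 - z'.2| := by
    rw [Prod.norm_def]
    exact max_eq_right hle
  have bound := hF z hz z' hz'
  rw [norm_eq, sndScale_apply] at bound
  have fst := (norm_fst_le _).trans bound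
  have snd := (norm_snd_le _).trans bound
  simp only [Prod.fst_sub, Prod.snd_sub, Real.norm_eq_abs, sub_zero] at fst snd
  refine ⟨fst, ?_⟩
  have := abs_sub_abs_le_abs_sub (μ * (z.2 - z'.2)) ((F z).2 - (F z').2)
  rw [abs_mul, abs_sub_comm (μ * _)] at this
  linarith

theorem pow_mul_abs_sub_le_of_approximatesLinearOn (hF : ApproximatesLinearOn F (sndScale μ) s κ)
    (hκ : 2 * κ ≤ |μ|) (hz : ∀ m, F^[m] z ∈ s) (hz' : ∀ m, F^[m] z' ∈ s)
    (hle : |z.1 - z'.1| ≤ |z.2 - z'.2|) (m : ℕ) :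
    |(F^[m] z).1 - (F^[m] z').1| ≤ |(F^[m] z).2 - (F^[m] z').2| ∧
      (|μ| - κ) ^ m * |z.2 - z'.2| ≤ |(F^[m] z).2 - (F^[m] z').2| := by
  induction m with
  | zero => simpa using hle
  | succ m ih =>
    rw [Function.iterate_succ_apply', Function.iterate_succ_apply']
    obtain ⟨fst, snd⟩ := abs_sub_le_of_approximatesLinearOn hF (hz m) (hz' m) ih.1
    refine ⟨fst.trans (le_trans ?_ snd), le_trans ?_ snd⟩
    · gcongr
      linarith
    · rw [pow_succ', mul_assoc]
      exact mul_le_mul_of_nonneg_left ih.2 (by linarith [κ.coe_nonneg])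

theorem exists_volume_forall_iterate_mem_closedBall_eq_zero (hF : Continuous F)
    (hd : HasStrictFDerivAt F (sndScale μ) P) (hμ : 1 < |μ|) :
    ∃ ρ > 0, volume {z | ∀ m, F^[m] z ∈ Metric.closedBall P ρ} = 0 := by
  have κ_pos : 0 < (|μ| - 1) / 2 := by linarith
  obtain ⟨s, hs, hsF⟩ :=
    hd.approximates_deriv_on_nhds (c := ⟨(|μ| - 1) / 2, κ_pos.le⟩) (Or.inr κ_pos)
  obtain ⟨ρ, hρ, hρs⟩ := Metric.nhds_basis_closedBall.mem_iff.1 hs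
  refine ⟨ρ, hρ, measure_prod_eq_zero_of_subsingleton_sections ?_ fun v x hx x' hx' ↦ ?_⟩
  · rw [ofPred_forall]
    exact MeasurableSet.iInter fun m ↦
      (hF.iterate m).measurable Metric.isClosed_closedBall.measurableSet
  by_contra hne
  have growth := pow_mul_abs_sub_le_of_approximatesLinearOn hsF
    (show 2 * ((|μ| - 1) / 2) ≤ |μ| by linarith) (fun m ↦ hρs (hx m)) (fun m ↦ hρs (hx' m))
    (by simp)
  have bounded (m : ℕ) : |(F^[m] (v, x)).2 - (F^[m] (v, x')).2| ≤ 2 * ρ := by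
    calc |(F^[m] (v, x)).2 - (F^[m] (v, x')).2|
      _ ≤ dist (F^[m] (v, x)) (F^[m] (v, x')) := le_max_right _ _
      _ ≤ 2 * ρ := (dist_triangle_right _ _ P).trans ((add_le_add (hx m) (hx' m)).trans_eq
        (two_mul ρ).symm)
  have sub_pos : 0 < |x - x'| := abs_pos.2 (sub_ne_zero.2 hne)
  obtain ⟨m, hm⟩ := pow_unbounded_of_one_lt (2 * ρ / |x - x'|)
    (show 1 < |μ| - (|μ| - 1) / 2 by linarith)
  rw [div_lt_iff₀ sub_pos] at hm
  exact hm.not_ge ((growth m).2.trans (bounded m))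

theorem ae_not_tendsto_of_saddle (hF : Continuous F) (hd : HasStrictFDerivAt F (sndScale μ) P)
    (hμ : 1 < |μ|) (hqmp : Measure.QuasiMeasurePreserving F) :
    ∀ᵐ z, ¬Tendsto (fun m ↦ F^[m] z) atTop (𝓝 P) := by
  obtain ⟨ρ, hρ, hnull⟩ := exists_volume_forall_iterate_mem_closedBall_eq_zero hF hd hμ
  have leaves : ∀ᵐ z, ∀ N, ¬∀ m, F^[m] (F^[N] z) ∈ Metric.closedBall P ρ :=
    ae_all_iff.2 fun N ↦ (hqmp.iterate N).ae (measure_eq_zero_iff_ae_notMem.1 hnull)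
  filter_upwards [leaves] with z hz lim
  obtain ⟨N, hN⟩ := eventually_atTop.1 (lim.eventually (Metric.closedBall_mem_nhds P hρ))
  exact hz N fun m ↦ by
    rw [← Function.iterate_add_apply]
    exact hN _ (Nat.le_add_left N m)

end Saddle

section QuadExtension

open MeasureTheory Topology

/-- The skew extension `(v, x) ↦ (v² A(v, x), c - x² + v² B(v, x))` of the quadratic map `c - x²`:
the line `v = 0` is invariant, carries the quadratic map, and is transversally superattracting. -/
noncomputable def quadExtension (A B : ℝ × ℝ → ℝ) (c : ℝ) (z : ℝ × ℝ) : ℝ × ℝ :=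
  (z.1 ^ 2 * A z, quadRenorm c 0 z.2 + z.1 ^ 2 * B z)

variable {A B : ℝ × ℝ → ℝ} {c : ℝ}

theorem continuous_quadExtension (hA : Continuous A) (hB : Continuous B) :
    Continuous (quadExtension A B c) := by
  have := continuous_quadRenorm c 0
  unfold quadExtension
  fun_prop

theorem iterate_quadExtension_zero (n : ℕ) (x : ℝ) :
    (quadExtension A B c)^[n] (0, x) = (0, (quadRenorm c 0)^[n] x) := by
  have semiconj : Function.Semiconj (Prod.mk (0 : ℝ)) (quadRenorm c 0) (quadExtension A B c) :=
    fun x ↦ by simp [quadExtension]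
  exact ((semiconj.iterate_right n).eq x).symm

theorem hasStrictFDerivAt_quadExtension (hA : ContDiff ℝ 1 A) (hB : ContDiff ℝ 1 B) (x : ℝ) :
    HasStrictFDerivAt (quadExtension A B c) (sndScale (-2 * x)) (0, x) := by
  have hA' := hA.contDiffAt.hasStrictFDerivAt (x := ((0 : ℝ), x)) one_ne_zero
  have hB' := hB.contDiffAt.hasStrictFDerivAt (x := ((0 : ℝ), x)) one_ne_zero
  have fst : HasStrictFDerivAt Prod.fst (ContinuousLinearMap.fst ℝ ℝ ℝ) ((0 : ℝ), x) :=
    hasStrictFDerivAt_fst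
  have snd : HasStrictFDerivAt Prod.snd (ContinuousLinearMap.snd ℝ ℝ ℝ) ((0 : ℝ), x) :=
    hasStrictFDerivAt_snd
  unfold quadExtension
  simp only [quadRenorm_zero]
  refine (((fst.pow 2).mul hA').prodMk
    (((snd.pow 2).const_sub c).add ((fst.pow 2).mul hB'))).congr_fderiv ?_
  ext <;> simp [sndScale]

theorem hasStrictFDerivAt_iterate_quadExtension (hA : ContDiff ℝ 1 A) (hB : ContDiff ℝ 1 B)
    (n : ℕ) (x : ℝ) :
    HasStrictFDerivAt (quadExtension A B c)^[n + 1] (sndScale (deriv (quadRenorm c 0)^[n + 1] x))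
      (0, x) := by
  have deriv_zero (y : ℝ) : deriv (quadRenorm c 0) y = -2 * y := by
    simp [funext (quadRenorm_zero c)]
  induction n with
  | zero =>
    rw [zero_add, Function.iterate_one, Function.iterate_one, deriv_zero]
    exact hasStrictFDerivAt_quadExtension hA hB x
  | succ n ih =>
    have last := hasStrictFDerivAt_quadExtension (c := c) hA hB ((quadRenorm c 0)^[n + 1] x)
    rw [← iterate_quadExtension_zero (A := A) (B := B)] at last
    have diff := differentiable_quadRenorm c 0
    rw [Function.iterate_succ' _ (n + 1), Function.iterate_succ' (quadRenorm c 0) (n + 1),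
      deriv_comp _ (diff _) ((diff.iterate (n + 1)) x), deriv_zero, ← sndScale_comp]
    exact last.comp _ ih

end QuadExtension

section AsymptoticOrbit

open Topology
open scoped Pointwise

theorem tendsto_uncurry_of_eqOn_isCompact {ι X Y Z : Type*} [TopologicalSpace X]
    [TopologicalSpace Y] [TopologicalSpace Z] {G : X × Y → Z} (hG : Continuous G) {x₀ : X} {z₀ : Z}
    {K : Set Y} (hK : IsCompact K) (hG₀ : ∀ y ∈ K, G (x₀, y) = z₀) {L : Filter ι} {u : ι → X × Y}
    (hu : Tendsto (fun i ↦ (u i).1) L (𝓝 x₀)) (huK : ∀ i, (u i).2 ∈ K) :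
    Tendsto (fun i ↦ G (u i)) L (𝓝 z₀) := by
  refine tendsto_def.2 fun s hs ↦ ?_
  have near : ∀ᶠ x in 𝓝 x₀, ∀ y ∈ K, G (x, y) ∈ s :=
    hK.eventually_forall_of_forall_eventually fun y hy ↦
      hG.continuousAt.eventually_mem (by rwa [hG₀ y hy])
  filter_upwards [hu.eventually near] with i hi using hi _ (huK i)

theorem eventually_forall_add_mul_mem_of_pseudoOrbit {E : Type*} [TopologicalSpace E]
    [AddCommGroup E] [IsTopologicalAddGroup E] {g : E → E} (hg : Continuous g) {K V : Set E}
    (hK : IsCompact K) (hV : IsOpen V) (hVK : V ⊆ K) (hgK : MapsTo g K V) {w : ℕ → E} {p : ℕ}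
    (hw : Tendsto (fun n ↦ w (n + p) - g (w n)) atTop (𝓝 0)) :
    ∀ᶠ n in atTop, w n ∈ K → ∀ i, w (n + i * p) ∈ K := by
  obtain ⟨W, hW, hWV⟩ :=
    compact_open_separated_add_right (hK.image hg) hV (image_subset_iff.2 hgK)
  obtain ⟨M, hM⟩ := eventually_atTop.1 (hw.eventually_mem hW)
  filter_upwards [eventually_ge_atTop M] with n hn hwn i
  induction i with
  | zero => simpa using hwn
  | succ i ih =>
    have mem := hWV (add_mem_add (mem_image_of_mem g ih) (hM (n + i * p) (by lia)))
    rw [add_sub_cancel] at mem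
    rw [show n + (i + 1) * p = n + i * p + p by ring]
    exact hVK mem

theorem neg_one_pow_mul_self_mul (k : ℕ) (x : ℝ) : (-1) ^ k * ((-1) ^ k * x) = x := by
  rw [← mul_assoc, ← mul_pow]
  simp

theorem quadRenorm_neg_one_pow_mul (c : ℝ) (k j : ℕ) (x : ℝ) :
    quadRenorm c k ((-1) ^ j * x) = quadRenorm c k x := by
  rcases neg_one_pow_eq_or ℝ j with h | h <;> rw [h]
  · rw [one_mul]
  · rw [neg_one_mul, quadRenorm_neg]

variable {c : ℝ} {w : ℕ → ℝ}

theorem tendsto_sub_quadRenorm (j : ℕ)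
    (hw : ∀ n, Tendsto (fun k ↦ w (k + n) - (quadRenorm c 0)^[n] (w k)) atTop (𝓝 0)) :
    Tendsto (fun k ↦ (-1) ^ j * w (k + 2 ^ j) - quadRenorm c j ((-1) ^ j * w k)) atTop (𝓝 0) := by
  have lim := (hw (2 ^ j)).const_mul ((-1) ^ j)
  rw [mul_zero] at lim
  refine lim.congr fun k ↦ ?_
  rw [iterate_quadRenorm_zero, mul_sub, neg_one_pow_mul_self_mul, quadRenorm_neg_one_pow_mul]

theorem tendsto_add_mul_two_pow (N j : ℕ) : Tendsto (fun m ↦ N + m * 2 ^ j) atTop atTop :=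
  tendsto_atTop_mono
    (fun _ ↦ (Nat.le_mul_of_pos_right _ (by positivity)).trans (Nat.le_add_left _ _)) tendsto_id

theorem InfinitelyRenormalizable.exists_forall_mem_Icc_succ (h : InfinitelyRenormalizable c)
    {j N : ℕ} {l r l' r' : ℝ} (hT : TrappingInterval c j l r)
    (hT' : TrappingInterval c (j + 1) l' r')
    (hw : ∀ n, Tendsto (fun k ↦ w (k + n) - (quadRenorm c 0)^[n] (w k)) atTop (𝓝 0))
    (hnot : ¬Tendsto (fun m ↦ w (N + m * 2 ^ j)) atTop (𝓝 ((-1) ^ j * renormRadius c (j + 1))))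
    (hN : ∀ m, (-1) ^ j * w (N + m * 2 ^ j) ∈ Icc l r) :
    ∃ N', ∀ m, (-1) ^ (j + 1) * w (N' + m * 2 ^ (j + 1)) ∈ Icc l' r' := by
  have to_top := tendsto_add_mul_two_pow N j
  have pseudo : Tendsto (fun m ↦ (-1) ^ j * w (N + (m + 1) * 2 ^ j) -
      quadRenorm c j ((-1) ^ j * w (N + m * 2 ^ j))) atTop (𝓝 0) := by
    refine ((tendsto_sub_quadRenorm j hw).comp to_top).congr fun m ↦ ?_
    rw [Function.comp_apply, show N + m * 2 ^ j + 2 ^ j = N + (m + 1) * 2 ^ j by ring]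
  have returns : ∃ᶠ m in atTop, -((-1) ^ j * w (N + m * 2 ^ j)) ∈ Ioo l' r' := by
    by_contra hnever
    have lim := h.tendsto_of_pseudoOrbit hT.neg_radius_lt hT.lt_radius hT'.left_neg
      hT'.critValue_lt hN pseudo (not_frequently.1 hnever)
    refine hnot ((lim.const_mul ((-1) ^ j)).congr fun m ↦ neg_one_pow_mul_self_mul _ _)
  have stays := eventually_forall_add_mul_mem_of_pseudoOrbit
    (w := fun n ↦ (-1) ^ (j + 1) * w n) (continuous_quadRenorm c (j + 1)) isCompact_Icc
    isOpen_Ioo Ioo_subset_Icc_self hT'.mapsTo (tendsto_sub_quadRenorm (j + 1) hw)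
  obtain ⟨m, hm, hstay⟩ := (returns.and_eventually (to_top.eventually stays)).exists
  refine ⟨N + m * 2 ^ j, hstay (Ioo_subset_Icc_self ?_)⟩
  rwa [pow_succ, mul_neg_one, neg_mul]

theorem InfinitelyRenormalizable.mapClusterPt_zero (h : InfinitelyRenormalizable c) {l r : ℝ}
    (hT : TrappingInterval c 0 l r)
    (hw : ∀ n, Tendsto (fun k ↦ w (k + n) - (quadRenorm c 0)^[n] (w k)) atTop (𝓝 0))
    (hnot : ∀ j N, ¬Tendsto (fun m ↦ w (N + m * 2 ^ j)) atTop
      (𝓝 ((-1) ^ j * renormRadius c (j + 1))))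
    (hwlr : ∀ n, w n ∈ Icc l r) : MapClusterPt 0 atTop w := by
  have trapped (j : ℕ) : ∃ N l r, TrappingInterval c j l r ∧
      ∀ m, (-1) ^ j * w (N + m * 2 ^ j) ∈ Icc l r := by
    induction j with
    | zero => exact ⟨0, l, r, hT, fun m ↦ by simpa using hwlr m⟩
    | succ j ih =>
      obtain ⟨N, l, r, hlr, hN⟩ := ih
      obtain ⟨l', r', -, hlr'⟩ :=
        h.exists_trappingInterval (j + 1) (neg_lt_zero.2 (h.radius_pos (j + 1)))
      obtain ⟨N', hN'⟩ := h.exists_forall_mem_Icc_succ hlr hlr' hw (hnot j N) hN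
      exact ⟨N', l', r', hlr', hN'⟩
  rw [mapClusterPt_iff_frequently]
  intro s hs
  obtain ⟨η, hη, hηs⟩ := Metric.mem_nhds_iff.1 hs
  obtain ⟨j, hj⟩ := (h.tendsto_radius.eventually_lt_const hη).exists
  obtain ⟨N, l, r, hlr, hN⟩ := trapped j
  refine (tendsto_add_mul_two_pow N j).frequently (Frequently.of_forall fun m ↦ hηs ?_)
  have abs_lt_radius : |(-1) ^ j * w (N + m * 2 ^ j)| < renormRadius c j :=
    abs_lt.2 ⟨hlr.neg_radius_lt.trans_le (hN m).1, (hN m).2.trans_lt hlr.lt_radius⟩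
  rw [abs_mul, abs_neg_one_pow, one_mul] at abs_lt_radius
  simpa using abs_lt_radius.trans hj

end AsymptoticOrbit

section PeriodDoublingAttractor

open MeasureTheory Topology

variable {A B : ℝ × ℝ → ℝ} {c : ℝ}

theorem InfinitelyRenormalizable.ae_not_tendsto_quadExtension (h : InfinitelyRenormalizable c)
    (hA : ContDiff ℝ 1 A) (hB : ContDiff ℝ 1 B)
    (hqmp : Measure.QuasiMeasurePreserving (quadExtension A B c)) :
    ∀ᵐ z, ∀ j N, ¬Tendsto (fun m ↦ (quadExtension A B c)^[N + m * 2 ^ j] z) atTop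
      (𝓝 (0, (-1) ^ j * renormRadius c (j + 1))) := by
  refine ae_all_iff.2 fun j ↦ ae_all_iff.2 fun N ↦ ?_
  have one_lt_multiplier :
      1 < |deriv (quadRenorm c 0)^[2 ^ j] ((-1) ^ j * renormRadius c (j + 1))| := by
    rw [← one_lt_sq_iff_one_lt_abs, funext (iterate_quadRenorm_zero c j),
      deriv_const_mul _ (differentiable_quadRenorm c j _), mul_pow, ← pow_mul, mul_comm j,
      pow_mul, neg_one_sq, one_pow, one_mul]
    rcases neg_one_pow_eq_or ℝ j with sign | sign <;> rw [sign]
    · simpa using h.one_lt_deriv_sq j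
    · simpa [deriv_quadRenorm_neg] using h.one_lt_deriv_sq j
  have hd : HasStrictFDerivAt (quadExtension A B c)^[2 ^ j]
      (sndScale (deriv (quadRenorm c 0)^[2 ^ j] ((-1) ^ j * renormRadius c (j + 1))))
      (0, (-1) ^ j * renormRadius c (j + 1)) := by
    obtain ⟨n, hn⟩ := Nat.exists_eq_succ_of_ne_zero (pow_ne_zero j two_ne_zero)
    rw [hn]
    exact hasStrictFDerivAt_iterate_quadExtension hA hB n _
  have escape := ae_not_tendsto_of_saddle
    ((continuous_quadExtension hA.continuous hB.continuous).iterate _) hd one_lt_multiplier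
    (hqmp.iterate _)
  filter_upwards [(hqmp.iterate N).ae escape] with z hz lim
  refine hz (lim.congr fun m ↦ ?_)
  rw [← Function.iterate_mul, ← Function.iterate_add_apply, mul_comm m, add_comm N]

theorem TrappingInterval.exists_forall_quadExtension_mem {l r : ℝ} (hT : TrappingInterval c 0 l r)
    (hA : Continuous A) (hB : Continuous B) :
    ∃ ε > 0, ∀ z ∈ Ioo (-ε) ε ×ˢ Ioo l r, quadExtension A B c z ∈ Ioo (-ε) ε ×ˢ Ioo l r ∧
      |(quadExtension A B c z).1| ≤ 1 / 2 * |z.1| := by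
  have near : ∀ᶠ v in 𝓝 (0 : ℝ), ∀ x ∈ Icc l r,
      |v * A (v, x)| ≤ 1 / 2 ∧ (quadExtension A B c (v, x)).2 ∈ Ioo l r := by
    refine isCompact_Icc.eventually_forall_of_forall_eventually fun x hx ↦ ?_
    have fst_cont : Continuous fun z : ℝ × ℝ ↦ |z.1 * A z| := by fun_prop
    have snd_cont := (continuous_quadExtension (c := c) hA hB).snd
    refine (Tendsto.eventually_le_const (u := 1 / 2) (by simp) fst_cont.continuousAt).and
      (snd_cont.continuousAt.eventually_mem (isOpen_Ioo.mem_nhds ?_))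
    simpa [quadExtension] using hT.mapsTo hx
  obtain ⟨ε, hε, hball⟩ := Metric.eventually_nhds_iff.1 near
  refine ⟨ε, hε, fun z hz ↦ ?_⟩
  have hz₁ : |z.1| < ε := abs_lt.2 hz.1
  obtain ⟨fst, snd⟩ := hball (y := z.1) (by simpa using hz₁) z.2 (Ioo_subset_Icc_self hz.2)
  have contracts : |(quadExtension A B c z).1| ≤ 1 / 2 * |z.1| :=
    calc |z.1 ^ 2 * A z|
      _ = |z.1 * A z| * |z.1| := by rw [← abs_mul]; ring_nf
      _ ≤ 1 / 2 * |z.1| := by gcongr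
  exact ⟨⟨abs_lt.1 (by linarith [abs_nonneg z.1]), snd⟩, contracts⟩

theorem InfinitelyRenormalizable.zero_mem_omegaLimit_quadExtension
    (h : InfinitelyRenormalizable c) (hA : Continuous A) (hB : Continuous B) {l r : ℝ}
    (hT : TrappingInterval c 0 l r) {z : ℝ × ℝ}
    (hfst : Tendsto (fun n ↦ ((quadExtension A B c)^[n] z).1) atTop (𝓝 0))
    (hsnd : ∀ n, ((quadExtension A B c)^[n] z).2 ∈ Icc l r)
    (hnot : ∀ j N, ¬Tendsto (fun m ↦ (quadExtension A B c)^[N + m * 2 ^ j] z) atTop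
      (𝓝 (0, (-1) ^ j * renormRadius c (j + 1)))) :
    (0, 0) ∈ omegaLimit atTop (fun n : ℕ ↦ (quadExtension A B c)^[n]) {z} := by
  have pseudo (n : ℕ) : Tendsto (fun k ↦ ((quadExtension A B c)^[k + n] z).2 -
      (quadRenorm c 0)^[n] ((quadExtension A B c)^[k] z).2) atTop (𝓝 0) := by
    have cont : Continuous fun y : ℝ × ℝ ↦
        ((quadExtension A B c)^[n] y).2 - (quadRenorm c 0)^[n] y.2 :=
      ((continuous_quadExtension hA hB).iterate n).snd.sub
        (((continuous_quadRenorm c 0).iterate n).comp continuous_snd)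
    refine (tendsto_uncurry_of_eqOn_isCompact cont (isCompact_Icc (a := l) (b := r))
      (fun x _ ↦ by rw [iterate_quadExtension_zero, sub_self]) hfst hsnd).congr fun k ↦ ?_
    rw [← Function.iterate_add_apply, add_comm n]
  have cluster := h.mapClusterPt_zero hT pseudo
    (fun j N lim ↦ hnot j N ((hfst.comp (tendsto_add_mul_two_pow N j)).prodMk_nhds lim)) hsnd
  rw [mem_omegaLimit_singleton_iff_mapClusterPt]
  rw [mapClusterPt_iff_ultrafilter] at cluster ⊢
  obtain ⟨U, hU, lim⟩ := cluster
  exact ⟨U, hU, (hfst.mono_left hU).prodMk_nhds lim⟩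

theorem forall_iterate_mem_and_tendsto_fst {F : ℝ × ℝ → ℝ × ℝ} {U : Set (ℝ × ℝ)}
    (hF : ∀ z ∈ U, F z ∈ U ∧ |(F z).1| ≤ 1 / 2 * |z.1|) {z : ℝ × ℝ} (hz : z ∈ U) :
    (∀ n, F^[n] z ∈ U) ∧ Tendsto (fun n ↦ (F^[n] z).1) atTop (𝓝 0) := by
  have mem (n : ℕ) : F^[n] z ∈ U := (show MapsTo F U U from fun z hz ↦ (hF z hz).1).iterate n hz
  have bound (n : ℕ) : |(F^[n] z).1| ≤ (1 / 2) ^ n * |z.1| := by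
    induction n with
    | zero => simp
    | succ n ih =>
      rw [Function.iterate_succ_apply', pow_succ', mul_assoc]
      exact (hF _ (mem n)).2.trans (mul_le_mul_of_nonneg_left ih (by norm_num))
  refine ⟨mem, squeeze_zero_norm bound ?_⟩
  simpa using (tendsto_pow_atTop_nhds_zero_of_lt_one (r := (1 / 2 : ℝ)) (by norm_num)
    (by norm_num)).mul_const |z.1|

theorem exists_homeomorph_range_semiconj {X Y : Type*} [TopologicalSpace X] [CompactSpace X]
    [TopologicalSpace Y] [T2Space Y] {J : X → Y} (hJ : Continuous J) (hinj : J.Injective)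
    {σ : X → X} {Φ : Y → Y} (hσ : Function.Semiconj J σ Φ) :
    ∃ e : range J ≃ₜ X, ∀ (y : range J) (hy : Φ y ∈ range J), e ⟨Φ y, hy⟩ = σ (e y) := by
  let e := (hJ.isClosedEmbedding hinj).isEmbedding.toHomeomorph
  refine ⟨e.symm, ?_⟩
  rintro ⟨_, a, rfl⟩ hy
  rw [show (⟨Φ (J a), hy⟩ : range J) = e (σ a) from Subtype.ext (hσ a).symm,
    show (⟨J a, a, rfl⟩ : range J) = e a from rfl, e.symm_apply_apply, e.symm_apply_apply]

theorem InfinitelyRenormalizable.exists_isPDCantorAttractor_quadExtension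
    (h : InfinitelyRenormalizable c) (hA : ContDiff ℝ 1 A) (hB : ContDiff ℝ 1 B)
    (hqmp : Measure.QuasiMeasurePreserving (quadExtension A B c)) :
    ∃ S, IsPDCantorAttractor (quadExtension A B c) S := by
  set J : ℤ_[2] → ℝ × ℝ := fun a ↦ (0, h.cantorPoint a)
  have J_cont : Continuous J := continuous_const.prodMk h.continuous_cantorPoint
  have J_inj : J.Injective := fun a b hab ↦ h.injective_cantorPoint (Prod.mk.inj hab).2
  have semiconj : Function.Semiconj J (· + 1) (quadExtension A B c) := fun a ↦
    (by simp [J, h.map_cantorPoint] : J (a + 1) = _).trans (iterate_quadExtension_zero 1 _).symm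
  obtain ⟨_, ⟨a₀, rfl⟩, hmin⟩ :=
    (isCompact_range h.continuous_cantorPoint).exists_isLeast (range_nonempty _)
  have abs_lt_radius (a : ℤ_[2]) := h.abs_cantorPoint_lt (dyadicResidue_zero_right a)
  obtain ⟨l, r, hl, hT⟩ := h.exists_trappingInterval 0 (abs_lt.1 (abs_lt_radius a₀)).1
  obtain ⟨ε, hε, box⟩ := hT.exists_forall_quadExtension_mem hA.continuous hB.continuous
  have J_mem (a : ℤ_[2]) : J a ∈ Ioo (-ε) ε ×ˢ Ioo l r := by
    have le_critValue := (h.map_mem_Icc_of_abs_le (abs_lt_radius (a - 1)).le).2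
    rw [h.map_cantorPoint, sub_add_cancel] at le_critValue
    exact ⟨⟨neg_lt_zero.2 hε, hε⟩, hl.trans_le (hmin ⟨a, rfl⟩),
      le_critValue.trans_lt hT.critValue_lt⟩
  refine ⟨range J, isCompact_range J_cont, ?_, exists_homeomorph_range_semiconj J_cont J_inj
    semiconj, _, isOpen_Ioo.prod isOpen_Ioo, range_subset_iff.2 J_mem, ?_⟩
  · rw [← range_comp, ← semiconj.comp_eq, (add_right_surjective 1).range_comp]
  filter_upwards [h.ae_not_tendsto_quadExtension hA hB hqmp] with z hz hzU
  obtain ⟨mem_box, fst_lim⟩ := forall_iterate_mem_and_tendsto_fst box hzU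
  exact ⟨(0, 0), h.zero_mem_omegaLimit_quadExtension hA.continuous hB.continuous hT fst_lim
    (fun n ↦ Ioo_subset_Icc_self (mem_box n).2) hz, 0, by simp [J, h.cantorPoint_zero]⟩

end PeriodDoublingAttractor

/-! ### Null sets of analytic planar maps -/

section NullSets

open Topology MeasureTheory

theorem ae_ne_zero_of_analyticOnNhd_real {g : ℝ → ℝ} (hg : AnalyticOnNhd ℝ g univ) {x : ℝ}
    (hx : g x ≠ 0) : ∀ᵐ y, g y ≠ 0 := by
  have := ae_restrict_le_codiscreteWithin (μ := (volume : Measure ℝ)) MeasurableSet.univ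
    (hg.preimage_zero_mem_codiscreteWithin hx (mem_univ x) isConnected_univ)
  rwa [Measure.restrict_univ] at this

theorem ae_ne_zero_of_analyticOnNhd_prod {d : ℝ × ℝ → ℝ} (hd : AnalyticOnNhd ℝ d univ)
    {z : ℝ × ℝ} (hz : d z ≠ 0) : ∀ᵐ y, d y ≠ 0 := by
  have hclosed : IsClosed {y | d y = 0} :=
    isClosed_eq (continuousOn_univ.1 hd.continuousOn) continuous_const
  have hzero : volume {y | d y = 0} = 0 := by
    rw [Measure.volume_eq_prod, Measure.measure_prod_null hclosed.measurableSet]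
    have hfst : AnalyticOnNhd ℝ (fun w ↦ d (w, z.2)) univ := fun w _ ↦
      (hd (w, z.2) (mem_univ _)).comp (f := fun w : ℝ ↦ (w, z.2)) (by fun_prop)
    filter_upwards [ae_ne_zero_of_analyticOnNhd_real hfst hz] with w hw
    have hsnd : AnalyticOnNhd ℝ (fun b ↦ d (w, b)) univ := fun b _ ↦
      (hd (w, b) (mem_univ _)).comp (f := fun b : ℝ ↦ (w, b)) (by fun_prop)
    simpa [ae_iff] using ae_ne_zero_of_analyticOnNhd_real hsnd hw
  simpa [ae_iff] using hzero

section FiniteDimensional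

variable {E : Type*} [NormedAddCommGroup E] [NormedSpace ℝ E] [FiniteDimensional ℝ E]
  [MeasurableSpace E] [BorelSpace E] {μ : Measure E} [μ.IsAddHaarMeasure] {f : E → E}

theorem exists_mem_nhds_measure_preimage_inter_eq_zero {y : E} (hf : ContDiffAt ℝ 1 f y)
    (hdet : (fderiv ℝ f y).det ≠ 0) {s : Set E} (hs : μ s = 0) :
    ∃ u ∈ 𝓝 y, μ (f ⁻¹' s ∩ u) = 0 := by
  set L := (fderiv ℝ f y).toContinuousLinearEquivOfDetNeZero hdet
  have hL : HasFDerivAt f (L : E →L[ℝ] E) y := (hf.differentiableAt one_ne_zero).hasFDerivAt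
  set g := hf.localInverse hL one_ne_zero
  have hleft : ∀ᶠ x in 𝓝 y, g (f x) = x :=
    (hf.hasStrictFDerivAt' hL one_ne_zero).eventually_left_inverse
  have hdiff : ∀ᶠ v in 𝓝 (f y), DifferentiableAt ℝ g v :=
    ((hf.to_localInverse hL one_ne_zero).eventually (by simp)).mono fun v hv ↦
      hv.differentiableAt one_ne_zero
  refine ⟨_, hleft.and (hf.continuousAt.eventually hdiff), ?_⟩
  refine measure_mono_null (t := g '' (s ∩ {v | DifferentiableAt ℝ g v})) ?_ ?_
  · rintro x ⟨hxs, hgx, hx⟩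
    exact ⟨f x, ⟨hxs, hx⟩, hgx⟩
  · exact addHaar_image_eq_zero_of_differentiableOn_of_addHaar_eq_zero μ
      (fun v hv ↦ hv.2.differentiableWithinAt) (measure_mono_null inter_subset_left hs)

theorem quasiMeasurePreserving_of_ae_det_fderiv_ne_zero (hf : ContDiff ℝ 1 f)
    (hdet : ∀ᵐ y ∂μ, (fderiv ℝ f y).det ≠ 0) : Measure.QuasiMeasurePreserving f μ μ := by
  refine ⟨hf.continuous.measurable, Measure.AbsolutelyContinuous.mk fun s hsm hs ↦ ?_⟩
  rw [Measure.map_apply hf.continuous.measurable hsm]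
  have hregular : μ (f ⁻¹' s ∩ {y | (fderiv ℝ f y).det ≠ 0}) = 0 := by
    refine measure_null_of_locally_null _ fun y hy ↦ ?_
    obtain ⟨u, hu, hnull⟩ := exists_mem_nhds_measure_preimage_inter_eq_zero hf.contDiffAt hy.2 hs
    exact ⟨f ⁻¹' s ∩ {y | (fderiv ℝ f y).det ≠ 0} ∩ u, inter_mem_nhdsWithin _ hu,
      measure_mono_null (inter_subset_inter_left _ inter_subset_left) hnull⟩
  refine measure_mono_null (fun y hy ↦ ?_) (measure_union_null hregular (ae_iff.1 hdet))
  by_cases h : (fderiv ℝ f y).det = 0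
  · exact Or.inr fun h' ↦ h' h
  · exact Or.inl ⟨hy, h⟩

end FiniteDimensional

theorem det_continuousLinearMap_prod (L : ℝ × ℝ →L[ℝ] ℝ × ℝ) :
    L.det = (L (1, 0)).1 * (L (0, 1)).2 - (L (0, 1)).1 * (L (1, 0)).2 := by
  rw [ContinuousLinearMap.det, ← LinearMap.det_toMatrix (Module.Basis.finTwoProd ℝ),
    Matrix.det_fin_two]
  simp [LinearMap.toMatrix_apply]

theorem quasiMeasurePreserving_of_analyticOnNhd_of_det_ne_zero {f : ℝ × ℝ → ℝ × ℝ}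
    (hf : AnalyticOnNhd ℝ f univ) {z : ℝ × ℝ} (hz : (fderiv ℝ f z).det ≠ 0) :
    Measure.QuasiMeasurePreserving f := by
  have hpartial (v : ℝ × ℝ) : AnalyticOnNhd ℝ (fun y ↦ fderiv ℝ f y v) univ := fun y hy ↦
    ((ContinuousLinearMap.apply ℝ (ℝ × ℝ) v).analyticAt _).comp (hf.fderiv y hy)
  have hdet : AnalyticOnNhd ℝ (fun y ↦ (fderiv ℝ f y).det) univ := by
    simp only [det_continuousLinearMap_prod]
    have hfst v y hy := (analyticAt_fst).comp (hpartial v y hy)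
    have hsnd v y hy := (analyticAt_snd).comp (hpartial v y hy)
    exact fun y hy ↦
      ((hfst _ y hy).mul (hsnd _ y hy)).sub ((hfst _ y hy).mul (hsnd _ y hy))
  exact quasiMeasurePreserving_of_ae_det_fderiv_ne_zero
    (contDiff_iff_contDiffAt.2 fun y ↦ (hf y (mem_univ y)).contDiffAt)
    (ae_ne_zero_of_analyticOnNhd_prod hdet hz)

end NullSets

/-! ### Passage near a saddle -/

section NearIdentity

open Metric

variable {E : Type*} [SeminormedAddCommGroup E]

/-- `F` is close to the identity on `S`: its displacement `F - id` is bounded by `δ` and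
`L`-Lipschitz there. -/
def NearIdOn (δ L : ℝ) (F : E → E) (S : Set E) : Prop :=
  (∀ z ∈ S, ‖F z - z‖ ≤ δ) ∧ ∀ z ∈ S, ∀ z' ∈ S, ‖(F z - z) - (F z' - z')‖ ≤ L * ‖z - z'‖

theorem NearIdOn.mono {δ δ' L L' : ℝ} {F : E → E} {S : Set E} (h : NearIdOn δ L F S)
    (hδ : δ ≤ δ') (hL : L ≤ L') : NearIdOn δ' L' F S :=
  ⟨fun z hz ↦ (h.1 z hz).trans hδ, fun z hz z' hz' ↦ (h.2 z hz z' hz').trans (by gcongr)⟩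

theorem NearIdOn.comp {δ δ' L L' : ℝ} {F G : E → E} {S T : Set E} (hL' : 0 ≤ L')
    (hG : NearIdOn δ' L' G T) (hF : NearIdOn δ L F S) (hFS : MapsTo F S T) :
    NearIdOn (δ + δ') (L + L' * (1 + L)) (G ∘ F) S := by
  refine ⟨fun z hz ↦ ?_, fun z hz z' hz' ↦ ?_⟩
  · calc ‖G (F z) - z‖ = ‖(F z - z) + (G (F z) - F z)‖ := by congr 1; abel
      _ ≤ ‖F z - z‖ + ‖G (F z) - F z‖ := norm_add_le _ _
      _ ≤ δ + δ' := add_le_add (hF.1 z hz) (hG.1 _ (hFS hz))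
  · have hFd : ‖F z - F z'‖ ≤ (1 + L) * ‖z - z'‖ := by
      calc ‖F z - F z'‖ = ‖(z - z') + ((F z - z) - (F z' - z'))‖ := by congr 1; abel
        _ ≤ ‖z - z'‖ + L * ‖z - z'‖ := (norm_add_le _ _).trans (by grw [hF.2 z hz z' hz'])
        _ = (1 + L) * ‖z - z'‖ := by ring
    calc ‖(G (F z) - z) - (G (F z') - z')‖
        = ‖((F z - z) - (F z' - z')) + ((G (F z) - F z) - (G (F z') - F z'))‖ := by
          congr 1; abel
      _ ≤ L * ‖z - z'‖ + L' * ‖F z - F z'‖ :=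
          (norm_add_le _ _).trans (add_le_add (hF.2 z hz z' hz') (hG.2 _ (hFS hz) _ (hFS hz')))
      _ ≤ L * ‖z - z'‖ + L' * ((1 + L) * ‖z - z'‖) := by gcongr
      _ = (L + L' * (1 + L)) * ‖z - z'‖ := by ring

/-- The composition `F (n - 1) ∘ ⋯ ∘ F 1 ∘ F 0`. -/
def seqComp {X : Type*} (F : ℕ → X → X) : ℕ → X → X
  | 0 => id
  | n + 1 => F n ∘ seqComp F n

theorem seqComp_succ' {X : Type*} (F : ℕ → X → X) (n : ℕ) :
    seqComp F (n + 1) = seqComp (fun k ↦ F (k + 1)) n ∘ F 0 := by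
  induction n with
  | zero => rfl
  | succ n ih => rw [seqComp, ih]; rfl

theorem nearIdOn_seqComp {F : ℕ → E → E} {S T : Set E} {τ : ℕ → ℝ} {ε : ℝ} {n : ℕ}
    (hτ : ∀ k, 0 ≤ τ k) (hF : ∀ k < n, NearIdOn (τ k) (2 * τ k) (F k) S)
    (hsum : ∑ k ∈ Finset.range n, τ k ≤ ε) (hε : ε ≤ 1 / 4) (hT : ∀ z ∈ T, closedBall z ε ⊆ S) :
    NearIdOn ε (4 * ε) (seqComp F n) T := by
  suffices H : ∀ k ≤ n, NearIdOn (∑ j ∈ Finset.range k, τ j) (4 * ∑ j ∈ Finset.range k, τ j)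
      (seqComp F k) T from (H n le_rfl).mono hsum (by gcongr)
  intro k
  induction k with
  | zero => simp [NearIdOn, seqComp]
  | succ k ih =>
    intro hk
    have hΦ := ih (by lia)
    have hle : ∑ j ∈ Finset.range k, τ j ≤ ε :=
      (Finset.sum_le_sum_of_subset_of_nonneg (Finset.range_mono (by lia : k ≤ n))
        fun j _ _ ↦ hτ j).trans hsum
    have hmaps : MapsTo (seqComp F k) T S := fun z hz ↦
      hT z hz (mem_closedBall_iff_norm.2 ((hΦ.1 z hz).trans hle))
    have hτk := hτ k
    rw [Finset.sum_range_succ]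
    exact ((hF k (by lia)).comp (by linarith) hΦ hmaps).mono le_rfl (by nlinarith)

end NearIdentity

/-- `g` is Lipschitz on `S` with separate constants `p` and `q` for the two coordinates. -/
def CoordLipOn (p q : ℝ) (g : ℝ × ℝ → ℝ) (S : Set (ℝ × ℝ)) : Prop :=
  ∀ z ∈ S, ∀ z' ∈ S, |g z - g z'| ≤ p * |z.1 - z'.1| + q * |z.2 - z'.2|

theorem abs_mul_sub_mul_le {x x' y y' a b c d : ℝ} (hx : |x - x'| ≤ a) (hy : |y| ≤ b)
    (hx' : |x'| ≤ c) (hyy : |y - y'| ≤ d) : |x * y - x' * y'| ≤ a * b + c * d := by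
  calc |x * y - x' * y'| = |(x - x') * y + x' * (y - y')| := by ring_nf
    _ ≤ |x - x'| * |y| + |x'| * |y - y'| := by
        simpa only [abs_mul] using abs_add_le ((x - x') * y) (x' * (y - y'))
    _ ≤ a * b + c * d := add_le_add
        (mul_le_mul hx hy (abs_nonneg _) ((abs_nonneg _).trans hx))
        (mul_le_mul hx' hyy (abs_nonneg _) ((abs_nonneg _).trans hx'))

/-- A map with a saddle at the origin that preserves both axes, expanding the first and
contracting the second one at the rates `t⁻¹` and `t` when `A 0 = B 0 = 1`. -/
noncomputable def saddleMap (t : ℝ) (A B : ℝ × ℝ → ℝ) (z : ℝ × ℝ) : ℝ × ℝ :=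
  (t⁻¹ * (z.1 * A z), t * (z.2 * B z))

/-- The nonlinear part of a saddle map in coordinates rescaled by `α` and `β`. -/
def rescaledStep (A B : ℝ × ℝ → ℝ) (α β : ℝ) (z : ℝ × ℝ) : ℝ × ℝ :=
  (z.1 * A (α * z.1, β * z.2), z.2 * B (α * z.1, β * z.2))

/-- The passage of length `N` along the saddle, as a map from the entry coordinates
`(t ^ N * z.1, z.2)` to the exit coordinates `(z.1, t ^ N * z.2)`. -/
def passageMap (t : ℝ) (A B : ℝ × ℝ → ℝ) (N : ℕ) : ℝ × ℝ → ℝ × ℝ :=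
  seqComp (fun k ↦ rescaledStep A B (t ^ (N - k)) (t ^ k)) N

theorem iterate_saddleMap {t : ℝ} (ht : t ≠ 0) (A B : ℝ × ℝ → ℝ) (N : ℕ) (z : ℝ × ℝ) :
    (saddleMap t A B)^[N] (t ^ N * z.1, z.2) =
      ((passageMap t A B N z).1, t ^ N * (passageMap t A B N z).2) := by
  set Φ := seqComp fun k ↦ rescaledStep A B (t ^ (N - k)) (t ^ k) with hΦ
  have main : ∀ k ≤ N, (saddleMap t A B)^[k] (t ^ N * z.1, z.2) =
      (t ^ (N - k) * (Φ k z).1, t ^ k * (Φ k z).2) := by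
    intro k
    induction k with
    | zero => simp [hΦ, seqComp]
    | succ k ih =>
      intro hk
      have hpow : t ^ (N - k) = t ^ (N - (k + 1)) * t := by
        rw [← pow_succ]; congr 1; lia
      rw [Function.iterate_succ_apply', ih (by lia)]
      simp only [hΦ, seqComp, Function.comp_apply, saddleMap, rescaledStep]
      ext
      · rw [mul_assoc, hpow]; field_simp
      · ring
  simpa [passageMap, hΦ] using main N le_rfl

/-- The estimates that make a passage of `saddleMap t A B` close to linear: on the square
`[0, t] ^ 2` around the saddle, and on the strip where orbits enter it. -/
structure IsSaddlePassage (t C K : ℝ) (A B : ℝ × ℝ → ℝ) : Prop where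
  pos : 0 < t
  one_le : 1 ≤ C
  mul_le : C * t ≤ 1 / 4000
  a_zero : A 0 = 1
  b_zero : B 0 = 1
  a_lip_saddle : CoordLipOn (51 / 100 * t⁻¹) C A (Icc 0 t ×ˢ Icc 0 t)
  b_lip_saddle : CoordLipOn (1 / 100 * t⁻¹) C B (Icc 0 t ×ˢ Icc 0 t)
  a_near_entry : ∀ z ∈ Icc 0 (t ^ 2) ×ˢ Icc (48 / 100) (81 / 100), |A z - 1 / 2| ≤ 1 / 200
  b_near_entry : ∀ z ∈ Icc 0 (t ^ 2) ×ˢ Icc (48 / 100) (81 / 100), |B z - 1| ≤ 1 / 200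
  a_lip_entry : CoordLipOn K (5 / 100) A (Icc 0 (t ^ 2) ×ˢ Icc (48 / 100) (81 / 100))
  b_lip_entry : CoordLipOn K (1 / 100) B (Icc 0 (t ^ 2) ×ˢ Icc (48 / 100) (81 / 100))

/-- The unit square, in which rescaled orbits stay during the passage. -/
abbrev unitSquare : Set (ℝ × ℝ) := Icc 0 1 ×ˢ Icc 0 1

section Rescaled

variable {p C t α β d : ℝ} {A : ℝ × ℝ → ℝ} {z z' : ℝ × ℝ}

theorem smul_mem_Icc_prod (hα : α ∈ Icc 0 t) (hβ : β ∈ Icc 0 t) (hz : z ∈ unitSquare) :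
    (α * z.1, β * z.2) ∈ Icc 0 t ×ˢ Icc 0 t :=
  ⟨⟨mul_nonneg hα.1 hz.1.1, (mul_le_of_le_one_right hα.1 hz.1.2).trans hα.2⟩,
    ⟨mul_nonneg hβ.1 hz.2.1, (mul_le_of_le_one_right hβ.1 hz.2.2).trans hβ.2⟩⟩

namespace CoordLipOn

theorem abs_rescaled_sub_le (h : CoordLipOn p C A (Icc 0 t ×ˢ Icc 0 t)) (hα : α ∈ Icc 0 t)
    (hβ : β ∈ Icc 0 t) (hz : z ∈ unitSquare) (hz' : z' ∈ unitSquare) :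
    |A (α * z.1, β * z.2) - A (α * z'.1, β * z'.2)| ≤
      p * (α * |z.1 - z'.1|) + C * (β * |z.2 - z'.2|) := by
  refine (h _ (smul_mem_Icc_prod hα hβ hz) _ (smul_mem_Icc_prod hα hβ hz')).trans_eq ?_
  rw [← mul_sub, ← mul_sub, abs_mul, abs_mul, abs_of_nonneg hα.1, abs_of_nonneg hβ.1]

theorem abs_rescaled_sub_one_le (h : CoordLipOn p C A (Icc 0 t ×ˢ Icc 0 t)) (hA : A 0 = 1)
    (hα : α ∈ Icc 0 t) (hβ : β ∈ Icc 0 t) (hz : z ∈ unitSquare) :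
    |A (α * z.1, β * z.2) - 1| ≤ p * (α * z.1) + C * (β * z.2) := by
  have h0 : (0 : ℝ × ℝ) ∈ unitSquare := by simp [Prod.zero_eq_mk]
  simpa [← Prod.zero_eq_mk, hA, abs_of_nonneg hz.1.1, abs_of_nonneg hz.2.1] using
    h.abs_rescaled_sub_le hα hβ hz h0

theorem norm_rescaled_sub_le (h : CoordLipOn (p * t⁻¹) C A (Icc 0 t ×ˢ Icc 0 t))
    (ht : 0 < t) (hp : 0 ≤ p) (hpC : p ≤ C) (hα : α ∈ Icc 0 t) (hβ : β ∈ Icc 0 t)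
    (hz : z ∈ unitSquare) (hz' : z' ∈ unitSquare) :
    |A (α * z.1, β * z.2) - A (α * z'.1, β * z'.2)| ≤ C * (t⁻¹ * α + β) * ‖z - z'‖ := by
  have hα0 := hα.1
  have hβ0 := hβ.1
  calc |A (α * z.1, β * z.2) - A (α * z'.1, β * z'.2)|
      ≤ p * t⁻¹ * (α * |z.1 - z'.1|) + C * (β * |z.2 - z'.2|) :=
        h.abs_rescaled_sub_le hα hβ hz hz'
    _ ≤ C * t⁻¹ * (α * ‖z - z'‖) + C * (β * ‖z - z'‖) := by
        have h1 : |z.1 - z'.1| ≤ ‖z - z'‖ := norm_fst_le (z - z')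
        have h2 : |z.2 - z'.2| ≤ ‖z - z'‖ := norm_snd_le (z - z')
        have hC : 0 ≤ C := hp.trans hpC
        gcongr
    _ = C * (t⁻¹ * α + β) * ‖z - z'‖ := by ring

end CoordLipOn

theorem abs_displacement_mul_sub_le {x x' a a' τ : ℝ} (hx' : |x'| ≤ 1) (ha : |a - 1| ≤ τ)
    (hx : |x - x'| ≤ d) (haa : |a - a'| ≤ τ * d) :
    |(x * a - x) - (x' * a' - x')| ≤ 2 * τ * d := by
  rw [← mul_sub_one, ← mul_sub_one]
  have hsub : |(a - 1) - (a' - 1)| ≤ τ * d := by rwa [sub_sub_sub_cancel_right]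
  exact (abs_mul_sub_mul_le hx ha hx' hsub).trans_eq (by ring)

theorem nearIdOn_rescaledStep {B : ℝ × ℝ → ℝ} {q : ℝ} (ht : 0 < t) (hp : 0 ≤ p) (hpC : p ≤ C)
    (hq : 0 ≤ q) (hqC : q ≤ C) (hA : A 0 = 1) (hB : B 0 = 1)
    (hAlip : CoordLipOn (p * t⁻¹) C A (Icc 0 t ×ˢ Icc 0 t))
    (hBlip : CoordLipOn (q * t⁻¹) C B (Icc 0 t ×ˢ Icc 0 t)) (hα : α ∈ Icc 0 t)
    (hβ : β ∈ Icc 0 t) :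
    NearIdOn (C * (t⁻¹ * α + β)) (2 * (C * (t⁻¹ * α + β))) (rescaledStep A B α β)
      unitSquare := by
  set τ := C * (t⁻¹ * α + β)
  have h0 : (0 : ℝ × ℝ) ∈ unitSquare := by simp [Prod.zero_eq_mk]
  have hτ0 : 0 ≤ τ := mul_nonneg (hp.trans hpC)
    (add_nonneg (mul_nonneg (inv_nonneg.2 ht.le) hα.1) hβ.1)
  have unit : ∀ z ∈ unitSquare, |z.1| ≤ 1 ∧ |z.2| ≤ 1 := fun z hz ↦
    ⟨abs_le.2 ⟨by linarith [hz.1.1], hz.1.2⟩, abs_le.2 ⟨by linarith [hz.2.1], hz.2.2⟩⟩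
  have near_one : ∀ {r : ℝ} {g : ℝ × ℝ → ℝ}, 0 ≤ r → r ≤ C → g 0 = 1 →
      CoordLipOn (r * t⁻¹) C g (Icc 0 t ×ˢ Icc 0 t) →
      ∀ z ∈ unitSquare, |g (α * z.1, β * z.2) - 1| ≤ τ := by
    intro r g hr hrC hg hlip z hz
    have hz1 : ‖z‖ ≤ 1 := norm_prod_le_iff.2 (unit z hz)
    have := hlip.norm_rescaled_sub_le ht hr hrC hα hβ hz h0
    simp only [Prod.fst_zero, Prod.snd_zero, mul_zero, ← Prod.zero_eq_mk, hg, sub_zero] at this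
    exact this.trans (mul_le_of_le_one_right hτ0 hz1)
  have hA1 := near_one hp hpC hA hAlip
  have hB1 := near_one hq hqC hB hBlip
  have disp : ∀ {x a : ℝ}, |x| ≤ 1 → |a - 1| ≤ τ → |x * a - x| ≤ τ := by
    intro x a hx ha
    rw [← mul_sub_one, abs_mul]
    exact (mul_le_of_le_one_left (abs_nonneg _) hx).trans ha
  refine ⟨fun z hz ↦ norm_prod_le_iff.2
      ⟨disp (unit z hz).1 (hA1 z hz), disp (unit z hz).2 (hB1 z hz)⟩,
    fun z hz z' hz' ↦ norm_prod_le_iff.2 ⟨?_, ?_⟩⟩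
  · exact abs_displacement_mul_sub_le (unit z' hz').1 (hA1 z hz) (norm_fst_le (z - z'))
      (hAlip.norm_rescaled_sub_le ht hp hpC hα hβ hz hz')
  · exact abs_displacement_mul_sub_le (unit z' hz').2 (hB1 z hz) (norm_snd_le (z - z'))
      (hBlip.norm_rescaled_sub_le ht hq hqC hα hβ hz hz')

end Rescaled

/-- The coordinates `(w / t ^ N, b)` in which orbits enter the passage of length `N`. -/
abbrev entryBox : Set (ℝ × ℝ) := Icc (46 / 100) (83 / 100) ×ˢ Icc (48 / 100) (81 / 100)

/-- The rescaled coordinates in which orbits make the last step of the passage. -/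
abbrev exitBox : Set (ℝ × ℝ) := Icc (226 / 1000) (4202 / 10000) ×ˢ Icc (476 / 1000) (8151 / 10000)

/-- The middle part of `passageMap t A B (n + 2)`, without its first and last step. -/
def transitMap (t : ℝ) (A B : ℝ × ℝ → ℝ) (n : ℕ) : ℝ × ℝ → ℝ × ℝ :=
  seqComp (fun k ↦ rescaledStep A B (t ^ (n + 1 - k)) (t ^ (k + 1))) n

theorem passageMap_add_two (t : ℝ) (A B : ℝ × ℝ → ℝ) (n : ℕ) :
    passageMap t A B (n + 2) =
      rescaledStep A B t (t ^ (n + 1)) ∘ transitMap t A B n ∘ rescaledStep A B (t ^ (n + 2)) 1 := by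
  have hsub : n + 2 - (n + 1) = 1 := by lia
  rw [passageMap, seqComp, seqComp_succ', transitMap]
  simp [hsub]

theorem sum_range_pow_sub_add_pow_le {t : ℝ} (ht : 0 ≤ t) (ht2 : t ≤ 1 / 2) (n : ℕ) :
    ∑ k ∈ Finset.range n, (t ^ (n - k) + t ^ (k + 1)) ≤ 4 * t := by
  have hreflect : ∑ k ∈ Finset.range n, t ^ (n - k) = ∑ k ∈ Finset.range n, t ^ (k + 1) := by
    rw [← Finset.sum_range_reflect]
    exact Finset.sum_congr rfl fun k hk ↦ by
      congr 1; have := Finset.mem_range.1 hk; lia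
  have hgeom : ∑ k ∈ Finset.range n, t ^ k ≤ 2 := by
    nlinarith [geom_sum_mul t n, pow_nonneg ht n,
      Finset.sum_nonneg fun k (_ : k ∈ Finset.range n) ↦ pow_nonneg ht k]
  rw [Finset.sum_add_distrib, hreflect]
  simp only [pow_succ, ← Finset.sum_mul]
  nlinarith

namespace IsSaddlePassage

variable {t C K α M : ℝ} {A B : ℝ × ℝ → ℝ} {n : ℕ} {z z' : ℝ × ℝ}

theorem le_one (h : IsSaddlePassage t C K A B) : t ≤ 1 := by
  nlinarith [h.mul_le, h.one_le, h.pos]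

theorem pow_succ_mem (h : IsSaddlePassage t C K A B) (k : ℕ) : t ^ (k + 1) ∈ Icc 0 t :=
  ⟨by have := h.pos; positivity, pow_le_of_le_one h.pos.le h.le_one (by lia)⟩

theorem pow_add_two_mem (h : IsSaddlePassage t C K A B) (k : ℕ) : t ^ (k + 2) ∈ Icc 0 (t ^ 2) :=
  ⟨by have := h.pos; positivity, pow_le_pow_of_le_one h.pos.le h.le_one (by lia)⟩

theorem entry_mem (hα : α ∈ Icc 0 (t ^ 2)) (hz : z ∈ entryBox) :
    (α * z.1, 1 * z.2) ∈ Icc 0 (t ^ 2) ×ˢ Icc (48 / 100) (81 / 100) := by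
  refine ⟨⟨mul_nonneg hα.1 (by linarith [hz.1.1]), ?_⟩, by simpa using hz.2⟩
  exact (mul_le_of_le_one_right hα.1 (by linarith [hz.1.2])).trans hα.2

theorem rescaledStep_entry_mem (h : IsSaddlePassage t C K A B) (hα : α ∈ Icc 0 (t ^ 2))
    (hz : z ∈ entryBox) :
    rescaledStep A B α 1 z ∈
      Icc (227 / 1000) (4192 / 10000) ×ˢ Icc (477 / 1000) (8141 / 10000) := by
  have hA := abs_le.1 (h.a_near_entry _ (entry_mem hα hz))
  have hB := abs_le.1 (h.b_near_entry _ (entry_mem hα hz))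
  obtain ⟨⟨q_ge, q_le⟩, b_ge, b_le⟩ := hz
  refine ⟨⟨?_, ?_⟩, ?_, ?_⟩ <;> simp only [rescaledStep] <;> nlinarith

theorem abs_rescaledStep_entry_sub_le (h : IsSaddlePassage t C K A B) (hα : α ∈ Icc 0 (t ^ 2))
    (hK : K * α ≤ 1 / 2000)
    (hz : z ∈ entryBox) (hz' : z' ∈ entryBox)
    (hq : |z.1 - z'.1| ≤ 20 / 17 * M) (hb : |z.2 - z'.2| ≤ M) :
    |(rescaledStep A B α 1 z).1 - (rescaledStep A B α 1 z').1| ≤ 637 / 1000 * M ∧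
      |(rescaledStep A B α 1 z).2 - (rescaledStep A B α 1 z').2| ≤ 1014 / 1000 * M := by
  have hM : 0 ≤ M := (abs_nonneg _).trans hb
  have hw : K * |α * z.1 - α * z'.1| ≤ M / 1000 := by
    rw [← mul_sub, abs_mul, abs_of_nonneg hα.1, ← mul_assoc]
    nlinarith [mul_le_mul hK hq (abs_nonneg _) (by norm_num)]
  have hdb : |1 * z.2 - 1 * z'.2| ≤ M := by simpa using hb
  have hAd := h.a_lip_entry _ (entry_mem hα hz) _ (entry_mem hα hz')
  have hBd := h.b_lip_entry _ (entry_mem hα hz) _ (entry_mem hα hz')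
  have hA := abs_le.1 (h.a_near_entry _ (entry_mem hα hz))
  have hB := abs_le.1 (h.b_near_entry _ (entry_mem hα hz))
  have hAle : |A (α * z.1, 1 * z.2)| ≤ 505 / 1000 := abs_le.2 ⟨by linarith, by linarith⟩
  have hBle : |B (α * z.1, 1 * z.2)| ≤ 1005 / 1000 := abs_le.2 ⟨by linarith, by linarith⟩
  have hq' : |z'.1| ≤ 83 / 100 := abs_le.2 ⟨by linarith [hz'.1.1], hz'.1.2⟩
  have hb' : |z'.2| ≤ 81 / 100 := abs_le.2 ⟨by linarith [hz'.2.1], hz'.2.2⟩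
  exact ⟨(abs_mul_sub_mul_le hq hAle hq' hAd).trans (by dsimp only; linarith),
    (abs_mul_sub_mul_le hb hBle hb' hBd).trans (by dsimp only; linarith)⟩

theorem nearIdOn_transitMap (h : IsSaddlePassage t C K A B) (n : ℕ) :
    NearIdOn (1 / 1000) (4 * (1 / 1000)) (transitMap t A B n)
      (Icc (1 / 10) (9 / 10) ×ˢ Icc (1 / 10) (9 / 10)) := by
  have ht := h.pos
  have hC := h.one_le
  have hpow : ∀ k < n, t⁻¹ * t ^ (n + 1 - k) = t ^ (n - k) := by
    intro k hk
    rw [show n + 1 - k = n - k + 1 by lia, pow_succ]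
    field_simp
  refine nearIdOn_seqComp (S := unitSquare)
    (τ := fun k ↦ C * (t⁻¹ * t ^ (n + 1 - k) + t ^ (k + 1))) (fun k ↦ by positivity)
    (fun k hk ↦ ?_) ?_ (by norm_num) (fun z hz x hx ↦ ?_)
  · rw [show n + 1 - k = n - k + 1 by lia]
    exact nearIdOn_rescaledStep ht (by norm_num) (by linarith) (by norm_num) (by linarith)
      h.a_zero h.b_zero h.a_lip_saddle h.b_lip_saddle (h.pow_succ_mem _) (h.pow_succ_mem _)
  · rw [← Finset.mul_sum, Finset.sum_congr rfl fun k hk ↦ by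
      rw [hpow k (Finset.mem_range.1 hk)]]
    have hsum := sum_range_pow_sub_add_pow_le ht.le (by nlinarith [h.mul_le]) n
    nlinarith [h.mul_le]
  · rw [mem_closedBall_iff_norm, norm_prod_le_iff] at hx
    have h1 := abs_le.1 hx.1
    have h2 := abs_le.1 hx.2
    simp only [Prod.fst_sub, Prod.snd_sub] at h1 h2
    obtain ⟨⟨_, _⟩, _, _⟩ := hz
    exact ⟨⟨by linarith, by linarith⟩, by linarith, by linarith⟩

theorem abs_exit_sub_one_le {p : ℝ} {g : ℝ × ℝ → ℝ} (h : IsSaddlePassage t C K A B)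
    (hg : CoordLipOn (p * t⁻¹) C g (Icc 0 t ×ˢ Icc 0 t)) (hg0 : g 0 = 1)
    (hz : z ∈ unitSquare) :
    |g (t * z.1, t ^ (n + 1) * z.2) - 1| ≤ p * z.1 + 1 / 4000 := by
  have ht := h.pos
  have hpow := h.pow_succ_mem n
  refine (hg.abs_rescaled_sub_one_le hg0 ⟨ht.le, le_rfl⟩ hpow hz).trans ?_
  have hy : t ^ (n + 1) * z.2 ≤ t := (mul_le_of_le_one_right hpow.1 hz.2.2).trans hpow.2
  rw [show p * t⁻¹ * (t * z.1) = p * z.1 by field_simp]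
  nlinarith [h.mul_le, h.one_le]

theorem abs_exit_sub_le {p : ℝ} {g : ℝ × ℝ → ℝ} (h : IsSaddlePassage t C K A B)
    (hg : CoordLipOn (p * t⁻¹) C g (Icc 0 t ×ˢ Icc 0 t)) (hz : z ∈ unitSquare)
    (hz' : z' ∈ unitSquare) :
    |g (t * z.1, t ^ (n + 1) * z.2) - g (t * z'.1, t ^ (n + 1) * z'.2)| ≤
      p * |z.1 - z'.1| + 1 / 4000 * |z.2 - z'.2| := by
  have ht := h.pos
  have hpow := h.pow_succ_mem n
  refine (hg.abs_rescaled_sub_le ⟨ht.le, le_rfl⟩ hpow hz hz').trans ?_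
  rw [show p * t⁻¹ * (t * |z.1 - z'.1|) = p * |z.1 - z'.1| by field_simp, ← mul_assoc C]
  have hCpow : C * t ^ (n + 1) ≤ 1 / 4000 := by nlinarith [h.mul_le, h.one_le, hpow.2]
  gcongr

theorem mem_unitSquare_of_mem_exitBox (hz : z ∈ exitBox) : z ∈ unitSquare := by
  obtain ⟨⟨_, _⟩, _, _⟩ := hz
  exact ⟨⟨by linarith, by linarith⟩, by linarith, by linarith⟩

theorem rescaledStep_exit_mem (h : IsSaddlePassage t C K A B)
    (hz : z ∈ exitBox) :
    rescaledStep A B t (t ^ (n + 1)) z ∈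
      Ioo (19 / 100) (52 / 100) ×ˢ Ioo (46 / 100) (83 / 100) := by
  have hA := abs_le.1 (h.abs_exit_sub_one_le (n := n) h.a_lip_saddle h.a_zero
    (mem_unitSquare_of_mem_exitBox hz))
  have hB := abs_le.1 (h.abs_exit_sub_one_le (n := n) h.b_lip_saddle h.b_zero
    (mem_unitSquare_of_mem_exitBox hz))
  obtain ⟨⟨x_ge, x_le⟩, y_ge, y_le⟩ := hz
  refine ⟨⟨?_, ?_⟩, ?_, ?_⟩ <;> simp only [rescaledStep] <;> nlinarith

theorem abs_rescaledStep_exit_sub_le (h : IsSaddlePassage t C K A B)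
    (hz : z ∈ exitBox) (hz' : z' ∈ exitBox)
    (hx : |z.1 - z'.1| ≤ 642 / 1000 * M) (hy : |z.2 - z'.2| ≤ 1019 / 1000 * M) :
    |(rescaledStep A B t (t ^ (n + 1)) z).1 - (rescaledStep A B t (t ^ (n + 1)) z').1| ≤
        19 / 20 * M ∧
      |(rescaledStep A B t (t ^ (n + 1)) z).2 - (rescaledStep A B t (t ^ (n + 1)) z').2| ≤
        19 / 17 * M := by
  have hsq := mem_unitSquare_of_mem_exitBox hz
  have hsq' := mem_unitSquare_of_mem_exitBox hz'
  have hA := abs_le.1 (h.abs_exit_sub_one_le (n := n) h.a_lip_saddle h.a_zero hsq)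
  have hB := abs_le.1 (h.abs_exit_sub_one_le (n := n) h.b_lip_saddle h.b_zero hsq)
  have hAd := h.abs_exit_sub_le (n := n) h.a_lip_saddle hsq hsq'
  have hBd := h.abs_exit_sub_le (n := n) h.b_lip_saddle hsq hsq'
  have hM : 0 ≤ M := by linarith [abs_nonneg (z.1 - z'.1)]
  obtain ⟨⟨_, x_le⟩, _, _⟩ := hz
  obtain ⟨⟨_, x_le'⟩, _, y_le'⟩ := hz'
  have hAle : |A (t * z.1, t ^ (n + 1) * z.2)| ≤ 1215 / 1000 :=
    abs_le.2 ⟨by linarith, by linarith⟩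
  have hBle : |B (t * z.1, t ^ (n + 1) * z.2)| ≤ 1005 / 1000 :=
    abs_le.2 ⟨by linarith, by linarith⟩
  have hx' : |z'.1| ≤ 4202 / 10000 := abs_le.2 ⟨by linarith, x_le'⟩
  have hy' : |z'.2| ≤ 8151 / 10000 := abs_le.2 ⟨by linarith, y_le'⟩
  exact ⟨(abs_mul_sub_mul_le hx hAle hx' hAd).trans (by linarith),
    (abs_mul_sub_mul_le hy hBle hy' hBd).trans (by linarith)⟩

theorem transitMap_mem (h : IsSaddlePassage t C K A B)
    (hz : z ∈ Icc (227 / 1000 : ℝ) (4192 / 10000) ×ˢ Icc (477 / 1000 : ℝ) (8141 / 10000)) :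
    transitMap t A B n z ∈ exitBox := by
  obtain ⟨⟨_, _⟩, _, _⟩ := hz
  have hdisp := norm_prod_le_iff.1 ((h.nearIdOn_transitMap n).1 z
    ⟨⟨by linarith, by linarith⟩, by linarith, by linarith⟩)
  have h1 := abs_le.1 hdisp.1
  have h2 := abs_le.1 hdisp.2
  simp only [Prod.fst_sub, Prod.snd_sub] at h1 h2
  exact ⟨⟨by linarith, by linarith⟩, by linarith, by linarith⟩

theorem abs_transitMap_sub_le (h : IsSaddlePassage t C K A B)
    (hz : z ∈ Icc (227 / 1000 : ℝ) (4192 / 10000) ×ˢ Icc (477 / 1000 : ℝ) (8141 / 10000))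
    (hz' : z' ∈ Icc (227 / 1000 : ℝ) (4192 / 10000) ×ˢ Icc (477 / 1000 : ℝ) (8141 / 10000))
    (hx : |z.1 - z'.1| ≤ 637 / 1000 * M) (hy : |z.2 - z'.2| ≤ 1014 / 1000 * M) :
    |(transitMap t A B n z).1 - (transitMap t A B n z').1| ≤ 642 / 1000 * M ∧
      |(transitMap t A B n z).2 - (transitMap t A B n z').2| ≤ 1019 / 1000 * M := by
  obtain ⟨⟨_, _⟩, _, _⟩ := hz
  obtain ⟨⟨_, _⟩, _, _⟩ := hz'
  have hdisp := (h.nearIdOn_transitMap n).2 z ⟨⟨by linarith, by linarith⟩, by linarith, by linarith⟩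
    z' ⟨⟨by linarith, by linarith⟩, by linarith, by linarith⟩
  have hM : 0 ≤ M := by linarith [abs_nonneg (z.1 - z'.1)]
  have hnorm : ‖z - z'‖ ≤ 1014 / 1000 * M := norm_prod_le_iff.2 ⟨hx.trans (by linarith), hy⟩
  have h1 := abs_le.1 ((norm_fst_le _).trans hdisp)
  have h2 := abs_le.1 ((norm_snd_le _).trans hdisp)
  simp only [Prod.fst_sub, Prod.snd_sub] at h1 h2
  have hx := abs_le.1 hx
  have hy := abs_le.1 hy
  exact ⟨abs_le.2 ⟨by linarith, by linarith⟩, abs_le.2 ⟨by linarith, by linarith⟩⟩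

theorem passageMap_mem (h : IsSaddlePassage t C K A B) (hz : z ∈ entryBox) :
    passageMap t A B (n + 2) z ∈ Ioo (19 / 100) (52 / 100) ×ˢ Ioo (46 / 100) (83 / 100) := by
  rw [passageMap_add_two]
  exact h.rescaledStep_exit_mem
    (h.transitMap_mem (h.rescaledStep_entry_mem (h.pow_add_two_mem n) hz))

theorem abs_passageMap_sub_le (h : IsSaddlePassage t C K A B) (hK : K * t ^ (n + 2) ≤ 1 / 2000)
    (hz : z ∈ entryBox) (hz' : z' ∈ entryBox) (hq : |z.1 - z'.1| ≤ 20 / 17 * M)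
    (hb : |z.2 - z'.2| ≤ M) :
    |(passageMap t A B (n + 2) z).1 - (passageMap t A B (n + 2) z').1| ≤ 19 / 20 * M ∧
      |(passageMap t A B (n + 2) z).2 - (passageMap t A B (n + 2) z').2| ≤ 19 / 17 * M := by
  have hα := h.pow_add_two_mem n
  have hentry := h.rescaledStep_entry_mem hα hz
  have hentry' := h.rescaledStep_entry_mem hα hz'
  obtain ⟨hX, hY⟩ := h.abs_rescaledStep_entry_sub_le hα hK hz hz' hq hb
  obtain ⟨hx, hy⟩ := h.abs_transitMap_sub_le (n := n) hentry hentry' hX hY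
  rw [passageMap_add_two]
  exact h.abs_rescaledStep_exit_sub_le (h.transitMap_mem hentry) (h.transitMap_mem hentry') hx hy

end IsSaddlePassage

/-! ### Sinks from contracting return maps -/

section Sinks

open Topology
open scoped NNReal Fin.CommRing

variable {f : ℝ × ℝ → ℝ × ℝ}

theorem exists_isSink_of_semiconj {T : ℝ × ℝ → ℝ × ℝ} {S : Set (ℝ × ℝ)} {m : ℕ} {K : ℝ≥0}
    (Ψ : (ℝ × ℝ) ≃ₜ (ℝ × ℝ)) (hm : 1 ≤ m) (hΨ : Function.Semiconj Ψ T f^[m])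
    (hS : IsComplete S) (hne : S.Nonempty) (hT : MapsTo T S (interior S)) (hK : K < 1)
    (hlip : LipschitzOnWith K T S) : ∃ x ∈ interior S, IsSink f (Ψ x) m := by
  have hTS : MapsTo T S S := hT.mono_right interior_subset
  have hcontr : ContractingWith K (hTS.restrict T S S) := ⟨hK, hlip.mapsToRestrict hTS⟩
  have : CompleteSpace S := hS.completeSpace_coe
  have : Nonempty S := hne.to_subtype
  set x := ContractingWith.fixedPoint _ hcontr
  have hx : T x = x := congrArg Subtype.val hcontr.fixedPoint_isFixedPt
  have hlim : ∀ y ∈ S, Tendsto (fun k ↦ T^[k] y) atTop (𝓝 x) := by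
    intro y hy
    have := (continuous_subtype_val.tendsto x).comp (hcontr.tendsto_iterate_fixedPoint ⟨y, hy⟩)
    refine this.congr fun k ↦ ?_
    simp only [Function.comp_apply, hTS.iterate_restrict]
    rfl
  have hx_int : (x : ℝ × ℝ) ∈ interior S := hx ▸ hT x.2
  refine ⟨x, hx_int, hm, by rw [← hΨ.eq, hx], Ψ '' interior S,
    Ψ.isOpenMap _ isOpen_interior, mem_image_of_mem _ hx_int, ?_⟩
  rintro _ ⟨y, hy, rfl⟩
  have hiter : ∀ k, f^[k * m] (Ψ y) = Ψ (T^[k] y) := fun k ↦ by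
    rw [mul_comm, Function.iterate_mul, (hΨ.iterate_right k).eq]
  simp only [hiter]
  exact (Ψ.continuous.tendsto x).comp (hlim y (interior_subset hy))

/-- The rotation by a quarter turn about the centre of the unit square. -/
def quarterTurn (z : ℝ × ℝ) : ℝ × ℝ := (z.2, 1 - z.1)

theorem iterate_quarterTurn_four (z : ℝ × ℝ) : quarterTurn^[4] z = z := by
  simp [quarterTurn]

/-- The chart of the strip in which orbits enter a passage, with `v = t ^ N` for a passage of
length `N`. The factor `20 / 17` makes the return maps contract the sup metric. -/
noncomputable def returnChart (v : ℝ) (hv : v ≠ 0) : (ℝ × ℝ) ≃ₜ (ℝ × ℝ) where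
  toFun z := (v * (20 / 17 * z.2), 1 - z.1)
  invFun z := (1 - z.2, 17 / 20 * (z.1 / v))
  left_inv z := by ext <;> simp; field_simp
  right_inv z := by ext <;> simp; field_simp
  continuous_toFun := by fun_prop
  continuous_invFun := by fun_prop

theorem returnChart_apply {v : ℝ} (hv : v ≠ 0) (z : ℝ × ℝ) :
    returnChart v hv z = (v * (20 / 17 * z.2), 1 - z.1) := rfl

/-- The domain, in the coordinates of `returnChart`, of the return maps. -/
def returnBox : Set (ℝ × ℝ) := Icc (19 / 100) (52 / 100) ×ˢ Icc (391 / 1000) (7055 / 10000)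

theorem interior_returnBox :
    interior returnBox = Ioo (19 / 100) (52 / 100) ×ˢ Ioo (391 / 1000) (7055 / 10000) := by
  rw [returnBox, interior_prod_eq, interior_Icc, interior_Icc]

/-- The passage of length `N` followed by a quarter turn, in the coordinates of
`returnChart (t ^ N)`. -/
noncomputable def returnMap (t : ℝ) (A B : ℝ × ℝ → ℝ) (N : ℕ) (z : ℝ × ℝ) : ℝ × ℝ :=
  ((passageMap t A B N (20 / 17 * z.2, 1 - z.1)).1,
    17 / 20 * (passageMap t A B N (20 / 17 * z.2, 1 - z.1)).2)

section Return

variable {t C K : ℝ} {A B : ℝ × ℝ → ℝ} {n : ℕ}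

theorem returnChart_returnMap (ht : t ≠ 0) (A B : ℝ × ℝ → ℝ) (N : ℕ) (z : ℝ × ℝ) :
    returnChart (t ^ N) (pow_ne_zero N ht) (returnMap t A B N z) =
      quarterTurn ((saddleMap t A B)^[N] (returnChart (t ^ N) (pow_ne_zero N ht) z)) := by
  have hiter := iterate_saddleMap ht A B N (20 / 17 * z.2, 1 - z.1)
  simp only [returnChart_apply, hiter, quarterTurn, returnMap]
  ext
  · ring
  · rfl

theorem mem_entryBox_of_mem_returnBox {z : ℝ × ℝ} (hz : z ∈ returnBox) :
    (20 / 17 * z.2, 1 - z.1) ∈ entryBox := by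
  obtain ⟨⟨_, _⟩, _, _⟩ := hz
  refine ⟨⟨?_, ?_⟩, ?_, ?_⟩ <;> dsimp only <;> linarith

theorem IsSaddlePassage.mapsTo_returnMap (h : IsSaddlePassage t C K A B) :
    MapsTo (returnMap t A B (n + 2)) returnBox (interior returnBox) := by
  intro z hz
  obtain ⟨h1, h2, h3⟩ := h.passageMap_mem (n := n) (mem_entryBox_of_mem_returnBox hz)
  rw [interior_returnBox]
  refine ⟨h1, ?_, ?_⟩ <;> dsimp only [returnMap] <;> linarith

theorem IsSaddlePassage.lipschitzOnWith_returnMap (h : IsSaddlePassage t C K A B)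
    (hK : K * t ^ (n + 2) ≤ 1 / 2000) :
    LipschitzOnWith (19 / 20) (returnMap t A B (n + 2)) returnBox := by
  refine LipschitzOnWith.of_dist_le_mul fun z hz z' hz' ↦ ?_
  have hq : |20 / 17 * z.2 - 20 / 17 * z'.2| ≤ 20 / 17 * dist z z' := by
    rw [← mul_sub, abs_mul, abs_of_pos (by norm_num)]
    gcongr
    exact le_max_right _ _
  have hb : |(1 - z.1) - (1 - z'.1)| ≤ dist z z' := by
    rw [sub_sub_sub_cancel_left, abs_sub_comm]
    exact le_max_left _ _
  obtain ⟨h1, h2⟩ := h.abs_passageMap_sub_le hK (mem_entryBox_of_mem_returnBox hz)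
    (mem_entryBox_of_mem_returnBox hz') hq hb
  have hcoe : ((19 / 20 : ℝ≥0) : ℝ) = 19 / 20 := by norm_num
  rw [hcoe, Prod.dist_eq]
  refine max_le h1 ?_
  simp only [returnMap, Real.dist_eq]
  rw [← mul_sub, abs_mul, abs_of_pos (by norm_num)]
  linarith

end Return

theorem mapsTo_seqComp {X : Type*} {F : ℕ → X → X} {S : Set X} (h : ∀ k, MapsTo (F k) S S)
    (n : ℕ) : MapsTo (seqComp F n) S S := by
  induction n with
  | zero => exact mapsTo_id S
  | succ n ih => exact (h n).comp ih

theorem lipschitzOnWith_seqComp {X : Type*} [PseudoEMetricSpace X] {F : ℕ → X → X} {S : Set X}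
    {K : ℝ≥0} (h : ∀ k, MapsTo (F k) S S) (hF : ∀ k, LipschitzOnWith K (F k) S) (n : ℕ) :
    LipschitzOnWith (K ^ n) (seqComp F n) S := by
  induction n with
  | zero => simpa [seqComp] using LipschitzWith.id.lipschitzOnWith
  | succ n ih => rw [pow_succ']; exact (hF n).comp ih (mapsTo_seqComp h n)

section FourFold

variable {t C K : ℝ} {A B : Fin 4 → ℝ × ℝ → ℝ}

theorem returnChart_seqComp_returnMap (ht : t ≠ 0)
    (hρ : ∀ i, Function.Semiconj quarterTurn (saddleMap t (A i) (B i))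
      (saddleMap t (A (i + 1)) (B (i + 1)))) (N k : ℕ) (z : ℝ × ℝ) :
    returnChart (t ^ N) (pow_ne_zero N ht) (seqComp (fun j ↦ returnMap t (A j) (B j) N) k z) =
      quarterTurn^[k] ((saddleMap t (A 0) (B 0))^[k * N]
        (returnChart (t ^ N) (pow_ne_zero N ht) z)) := by
  have hρk : ∀ k : ℕ, Function.Semiconj quarterTurn^[k] (saddleMap t (A 0) (B 0))
      (saddleMap t (A k) (B k)) := by
    intro k
    induction k with
    | zero => exact fun _ ↦ rfl
    | succ k ih =>
      rw [Function.iterate_succ', Nat.cast_succ]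
      exact (hρ k).comp_left ih
  induction k with
  | zero => simp [seqComp]
  | succ k ih =>
    rw [seqComp, Function.comp_apply, returnChart_returnMap ht, ih,
      ← ((hρk k).iterate_right N).eq, Function.iterate_succ_apply', add_one_mul, add_comm,
      Function.iterate_add_apply]

theorem exists_isSink_of_isSaddlePassage (L : (ℝ × ℝ) ≃ₜ (ℝ × ℝ)) (ht : t ≠ 0)
    (hL : Function.Semiconj L (saddleMap t (A 0) (B 0)) f)
    (hρ : ∀ i, Function.Semiconj quarterTurn (saddleMap t (A i) (B i))
      (saddleMap t (A (i + 1)) (B (i + 1))))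
    (h : ∀ i, IsSaddlePassage t C K (A i) (B i)) {n : ℕ} (hK : K * t ^ (n + 2) ≤ 1 / 2000) :
    ∃ x ∈ interior returnBox, IsSink f
      (L (returnChart (t ^ (n + 2)) (pow_ne_zero _ ht) x)) (4 * (n + 2)) := by
  have hmaps : ∀ k : ℕ, MapsTo (returnMap t (A k) (B k) (n + 2)) returnBox (interior returnBox) :=
    fun k ↦ (h k).mapsTo_returnMap
  have hmaps' := fun k ↦ (hmaps k).mono_right interior_subset
  set T := seqComp (fun j ↦ returnMap t (A j) (B j) (n + 2)) 4
  have hconj : Function.Semiconj ((returnChart (t ^ (n + 2)) (pow_ne_zero _ ht)).trans L) T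
      f^[4 * (n + 2)] := by
    intro z
    rw [Homeomorph.trans_apply, returnChart_seqComp_returnMap ht hρ, iterate_quarterTurn_four,
      (hL.iterate_right _).eq, Homeomorph.trans_apply]
  refine exists_isSink_of_semiconj _ (by lia) hconj
    (isCompact_Icc.prod isCompact_Icc).isComplete ⟨(3 / 10, 1 / 2), by norm_num [returnBox]⟩
    ((hmaps 3).comp (mapsTo_seqComp hmaps' 3)) (K := (19 / 20) ^ 4) (pow_lt_one₀ (by simp)
      (by rw [div_lt_one (by norm_num)]; norm_num) (by simp))
    (lipschitzOnWith_seqComp hmaps' (fun k ↦ (h k).lipschitzOnWith_returnMap hK) 4)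

end FourFold

theorem IsSink.finite_fwdOrbit {p : ℝ × ℝ} {n : ℕ} (h : IsSink f p n) : (fwdOrbit f p).Finite := by
  have hper : Function.IsPeriodicPt f n p := h.2.1
  refine ((Set.finite_Iio n).image fun k ↦ f^[k] p).subset ?_
  rintro _ ⟨k, rfl⟩
  exact ⟨k % n, Nat.mod_lt _ h.1, hper.iterate_mod_apply k⟩

theorem IsSink.mem_fwdOrbit_of_not_disjoint {p q : ℝ × ℝ} {n : ℕ} (h : IsSink f q n)
    (hpq : ¬Disjoint (fwdOrbit f p) (fwdOrbit f q)) : q ∈ fwdOrbit f p := by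
  obtain ⟨_, ⟨k, rfl⟩, l, hl⟩ := Set.not_disjoint_iff.1 hpq
  have hper : Function.IsPeriodicPt f n q := h.2.1
  refine ⟨(n * l - l) + k, ?_⟩
  have hle : l ≤ n * l := Nat.le_mul_of_pos_left l h.1
  simp only at hl ⊢
  rw [Function.iterate_add_apply, ← hl, ← Function.iterate_add_apply, Nat.sub_add_cancel hle]
  exact hper.mul_const l

theorem hasInfinitelyManySinks_of_injective {p : ℕ → ℝ × ℝ} {n : ℕ → ℕ}
    (hs : ∀ i, IsSink f (p i) (n i)) (hp : Function.Injective p) : HasInfinitelyManySinks f := by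
  obtain ⟨g, -, hg⟩ := exists_seq_of_forall_finset_exists (fun _ : ℕ ↦ True)
    (fun i j ↦ Disjoint (fwdOrbit f (p i)) (fwdOrbit f (p j))) fun S _ ↦ by
      have hfin : (⋃ i ∈ S, fwdOrbit f (p i)).Finite :=
        S.finite_toSet.biUnion fun i _ ↦ (hs i).finite_fwdOrbit
      obtain ⟨_, ⟨j, rfl⟩, hj⟩ := (Set.infinite_range_of_injective hp).exists_notMem_finite hfin
      refine ⟨j, trivial, fun i hi ↦ ?_⟩
      by_contra hdisj
      exact hj (mem_biUnion hi ((hs j).mem_fwdOrbit_of_not_disjoint hdisj))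
  refine ⟨p ∘ g, n ∘ g, fun i ↦ hs _, fun i j hij ↦ ?_⟩
  rcases lt_or_gt_of_ne hij with h | h
  · exact hg i j h
  · exact (hg j i h).symm

theorem hasInfinitelyManySinks_of_isSaddlePassage {t C K : ℝ} {A B : Fin 4 → ℝ × ℝ → ℝ}
    (L : (ℝ × ℝ) ≃ₜ (ℝ × ℝ)) (hL : Function.Semiconj L (saddleMap t (A 0) (B 0)) f)
    (hρ : ∀ i, Function.Semiconj quarterTurn (saddleMap t (A i) (B i))
      (saddleMap t (A (i + 1)) (B (i + 1))))
    (h : ∀ i, IsSaddlePassage t C K (A i) (B i)) : HasInfinitelyManySinks f := by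
  have ht := (h 0).pos
  have ht4 : t ≤ 1 / 4 := by nlinarith [(h 0).mul_le, (h 0).one_le]
  have hlim : Tendsto (fun n : ℕ ↦ K * t ^ (n + 2)) atTop (𝓝 0) := by
    simpa using ((tendsto_add_atTop_iff_nat 2).2
      (tendsto_pow_atTop_nhds_zero_of_lt_one ht.le (by linarith : t < 1))).const_mul K
  obtain ⟨n₀, hn₀⟩ :=
    eventually_atTop.1 (hlim.eventually_le_const (by norm_num : (0 : ℝ) < 1 / 2000))
  choose x hx hsink using fun n ↦
    exists_isSink_of_isSaddlePassage L ht.ne' hL hρ h (hn₀ (n₀ + n) (by lia))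
  refine hasInfinitelyManySinks_of_injective hsink fun i j hij ↦ ?_
  have hanti : StrictAnti fun n ↦ t ^ (n₀ + n + 2) * (20 / 17 * (x n).2) := by
    refine strictAnti_nat_of_succ_lt fun n ↦ ?_
    have hxn_gt := (interior_returnBox ▸ hx n).2.1
    have hxn_lt := (interior_returnBox ▸ hx (n + 1)).2.2
    rw [show n₀ + (n + 1) + 2 = n₀ + n + 2 + 1 by lia, pow_succ, mul_assoc]
    have : t * (20 / 17 * (x (n + 1)).2) < 20 / 17 * (x n).2 := by nlinarith
    gcongr
  exact hanti.injective (congrArg Prod.fst (L.injective hij))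

end Sinks

/-! ### Factors blending two saddles -/

/-- Lipschitz continuity of a real function on a set, with a real constant of any sign. -/
def LipOn {X : Type*} [PseudoMetricSpace X] (K : ℝ) (g : X → ℝ) (S : Set X) : Prop :=
  ∀ x ∈ S, ∀ y ∈ S, |g x - g y| ≤ K * dist x y

theorem LipOn.mono {X : Type*} [PseudoMetricSpace X] {K K' : ℝ} {g : X → ℝ} {S T : Set X}
    (h : LipOn K g S) (hK : K ≤ K') (hTS : T ⊆ S) : LipOn K' g T := fun x hx y hy ↦
  (h x (hTS hx) y (hTS hy)).trans (mul_le_mul_of_nonneg_right hK dist_nonneg)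

theorem LipOn.coordLipOn {K : ℝ} {g : ℝ × ℝ → ℝ} {S : Set (ℝ × ℝ)} (h : LipOn K g S)
    (hK : 0 ≤ K) : CoordLipOn K K g S := fun z hz z' hz' ↦ by
  refine (h z hz z' hz').trans ?_
  rw [← mul_add]
  exact mul_le_mul_of_nonneg_left (max_le_add_of_nonneg (abs_nonneg _) (abs_nonneg _)) hK

section CoordLip

variable {p q p' q' k : ℝ} {g h : ℝ × ℝ → ℝ} {S T : Set (ℝ × ℝ)}

theorem CoordLipOn.mono (hg : CoordLipOn p q g S) (hp : p ≤ p') (hq : q ≤ q') (hTS : T ⊆ S) :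
    CoordLipOn p' q' g T := fun z hz z' hz' ↦
  (hg z (hTS hz) z' (hTS hz')).trans (by gcongr)

theorem CoordLipOn.add (hg : CoordLipOn p q g S) (hh : CoordLipOn p' q' h S) :
    CoordLipOn (p + p') (q + q') (fun z ↦ g z + h z) S := fun z hz z' hz' ↦ by
  have habs := abs_add_le (g z - g z') (h z - h z')
  rw [← add_sub_add_comm] at habs
  linarith [hg z hz z' hz', hh z hz z' hz']

theorem CoordLipOn.const_mul (hg : CoordLipOn p q g S) (hk : 0 ≤ k) :
    CoordLipOn (k * p) (k * q) (fun z ↦ k * g z) S := fun z hz z' hz' ↦ by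
  rw [← mul_sub, abs_mul, abs_of_nonneg hk, mul_assoc, mul_assoc, ← mul_add]
  exact mul_le_mul_of_nonneg_left (hg z hz z' hz') hk

theorem CoordLipOn.comp_swap {I J : Set ℝ} (hg : CoordLipOn p q g (I ×ˢ J)) :
    CoordLipOn q p (fun z ↦ g z.swap) (J ×ˢ I) := fun z hz z' hz' ↦ by
  rw [add_comm]
  exact hg _ hz.symm _ hz'.symm

end CoordLip

/-- The interpolation between `p z.1` and `q z.1` with weight `χ z.2`. -/
def crossfade (χ p q : ℝ → ℝ) (z : ℝ × ℝ) : ℝ := (1 - χ z.2) * p z.1 + χ z.2 * q z.1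

theorem coordLipOn_crossfade {χ p q : ℝ → ℝ} {I J : Set ℝ} {P Q X m s : ℝ}
    (hχ : ∀ y ∈ J, χ y ∈ Icc 0 m) (hm : m ≤ 1) (hχ_lip : LipOn X χ J) (hp : LipOn P p I)
    (hq : LipOn Q q I) (hps : ∀ x ∈ I, p x ∈ Icc 0 s) (hqs : ∀ x ∈ I, q x ∈ Icc 0 s) :
    CoordLipOn (P + m * Q) (X * s) (crossfade χ p q) (I ×ˢ J) := by
  rintro ⟨x, y⟩ ⟨hx, hy⟩ ⟨x', y'⟩ ⟨hx', hy'⟩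
  have hχy := hχ y hy
  have hdiff : |q x' - p x'| ≤ s := abs_sub_le_of_nonneg_of_le (hqs x' hx').1 (hqs x' hx').2
    (hps x' hx').1 (hps x' hx').2
  have h1 : |(1 - χ y) * (p x - p x')| ≤ 1 * (P * |x - x'|) := by
    rw [abs_mul, abs_of_nonneg (by linarith [hχy.2])]
    exact mul_le_mul (by linarith [hχy.1]) (hp x hx x' hx') (abs_nonneg _) zero_le_one
  have h2 : |χ y * (q x - q x')| ≤ m * (Q * |x - x'|) := by
    rw [abs_mul, abs_of_nonneg hχy.1]
    exact mul_le_mul hχy.2 (hq x hx x' hx') (abs_nonneg _) (hχy.1.trans hχy.2)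
  have h3 : |(χ y - χ y') * (q x' - p x')| ≤ X * |y - y'| * s := by
    rw [abs_mul]
    exact mul_le_mul (hχ_lip y hy y' hy') hdiff (abs_nonneg _)
      ((abs_nonneg _).trans (hχ_lip y hy y' hy'))
  calc |crossfade χ p q (x, y) - crossfade χ p q (x', y')|
      = |(1 - χ y) * (p x - p x') + χ y * (q x - q x') + (χ y - χ y') * (q x' - p x')| := by
        simp only [crossfade]; ring_nf
    _ ≤ 1 * (P * |x - x'|) + m * (Q * |x - x'|) + X * |y - y'| * s :=
        (abs_add_three _ _ _).trans (add_le_add_three h1 h2 h3)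
    _ = (P + m * Q) * |x - x'| + X * s * |y - y'| := by ring

/-- Weights and rates whose crossfades are the factors of a saddle map with a controlled passage:
the weight `χ` is quadratically flat at `0` and almost constantly `1 / 2` on the entry interval,
and the rates `e₀` and `e₁` take the values `t` and `t⁻¹` at `0`. -/
structure IsSaddleProfile (t C : ℝ) (χ e₀ e₁ : ℝ → ℝ) : Prop where
  pos : 0 < t
  one_le : 1 ≤ C
  mul_le : C * t ≤ 1 / 4000
  χ_zero : χ 0 = 0
  χ_mem : ∀ x ∈ Icc (0 : ℝ) 1, χ x ∈ Icc (0 : ℝ) 1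
  χ_lip : ∀ m ∈ Icc (0 : ℝ) 1, LipOn (C * m ^ 2) χ (Icc 0 m)
  χ_near_entry : ∀ x ∈ Icc (48 / 100 : ℝ) (81 / 100), |χ x - 1 / 2| ≤ 1 / 1000
  χ_lip_entry : LipOn (4 / 100) χ (Icc (48 / 100) (81 / 100))
  e₀_zero : e₀ 0 = t
  e₁_zero : e₁ 0 = t⁻¹
  e₀_mem : ∀ x ∈ Icc (0 : ℝ) 1, e₀ x ∈ Icc 0 t⁻¹
  e₁_mem : ∀ x ∈ Icc (0 : ℝ) 1, e₁ x ∈ Icc 0 t⁻¹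
  e₀_lip : LipOn (t / 10000) e₀ (Icc 0 (81 / 100))
  e₁_lip : LipOn (t⁻¹ ^ 2 / 2) e₁ (Icc 0 1)

/-- The factor `A` of the expanding coordinate of a saddle map, perturbed by `Z`. -/
noncomputable def expandingFactor (t : ℝ) (χ e₀ e₁ : ℝ → ℝ) (Z : ℝ × ℝ → ℝ) (z : ℝ × ℝ) : ℝ :=
  t * (crossfade χ e₁ e₀ z + Z z)

/-- The factor `B` of the contracting coordinate of a saddle map, perturbed by `Z`. -/
noncomputable def contractingFactor (t : ℝ) (χ e₀ e₁ : ℝ → ℝ) (Z : ℝ × ℝ → ℝ) (z : ℝ × ℝ) : ℝ :=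
  t⁻¹ * (crossfade χ e₀ e₁ z.swap + Z z)

namespace IsSaddleProfile

variable {t C : ℝ} {χ e₀ e₁ : ℝ → ℝ} {Z : ℝ × ℝ → ℝ}

theorem le (h : IsSaddleProfile t C χ e₀ e₁) : t ≤ 1 / 4000 :=
  (le_mul_of_one_le_left h.pos.le h.one_le).trans h.mul_le

theorem χ_mem_Icc (h : IsSaddleProfile t C χ e₀ e₁) {m : ℝ} (hm : m ∈ Icc (0 : ℝ) 1) {x : ℝ}
    (hx : x ∈ Icc 0 m) : χ x ∈ Icc 0 (C * m ^ 3) := by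
  have hC := h.one_le
  have hflat := h.χ_lip m hm x hx 0 ⟨le_rfl, hm.1⟩
  rw [h.χ_zero, sub_zero, Real.dist_eq, sub_zero, abs_of_nonneg hx.1] at hflat
  refine ⟨(h.χ_mem x ⟨hx.1, hx.2.trans hm.2⟩).1, (le_abs_self _).trans (hflat.trans ?_)⟩
  calc C * m ^ 2 * x ≤ C * m ^ 2 * m := by gcongr; exact hx.2
    _ = C * m ^ 3 := by ring

theorem coordLipOn_expandingFactor (h : IsSaddleProfile t C χ e₀ e₁)
    (hZ : LipOn (t / 10000) Z unitSquare) {I J : Set ℝ} (hI : I ⊆ Icc 0 (81 / 100))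
    (hJ : J ⊆ Icc 0 1) {X : ℝ} (hX : LipOn X χ J) :
    CoordLipOn (51 / 100 * t⁻¹) (X + 1 / 1000) (expandingFactor t χ e₀ e₁ Z) (I ×ˢ J) := by
  have ht := h.pos
  have ht_le := h.le
  have hI' : I ⊆ Icc 0 1 := hI.trans (Icc_subset_Icc_right (by norm_num))
  have hinv : 4000 ≤ t⁻¹ := by
    rw [le_inv_comm₀ (by norm_num) ht]; linarith
  refine (((coordLipOn_crossfade (fun y hy ↦ h.χ_mem y (hJ hy)) le_rfl hX
    (h.e₁_lip.mono le_rfl hI') (h.e₀_lip.mono le_rfl hI) (fun x hx ↦ h.e₁_mem x (hI' hx))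
    (fun x hx ↦ h.e₀_mem x (hI' hx))).add ((hZ.coordLipOn (by positivity)).mono le_rfl le_rfl
      (prod_mono hI' hJ))).const_mul ht.le).mono ?_ ?_ Subset.rfl
  · calc t * (t⁻¹ ^ 2 / 2 + 1 * (t / 10000) + t / 10000) = t⁻¹ / 2 + t ^ 2 / 5000 := by
          field_simp; ring
      _ ≤ 51 / 100 * t⁻¹ := by nlinarith
  · calc t * (X * t⁻¹ + t / 10000) = X + t ^ 2 / 10000 := by field_simp
      _ ≤ X + 1 / 1000 := by nlinarith

theorem coordLipOn_contractingFactor (h : IsSaddleProfile t C χ e₀ e₁)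
    (hZ : LipOn (t / 10000) Z unitSquare) {I : Set ℝ} (hI : I ⊆ Icc 0 (81 / 100)) {m : ℝ}
    (hm : 0 ≤ m) (hmt : m ≤ t) : CoordLipOn (1 / 100 * t⁻¹) (1 / 1000 + C / 2 * (m / t) ^ 3)
      (contractingFactor t χ e₀ e₁ Z) (Icc 0 m ×ˢ I) := by
  have ht := h.pos
  have hC := h.one_le
  have ht_le := h.le
  have hm1 : m ∈ Icc (0 : ℝ) 1 := ⟨hm, by linarith⟩
  have hI' : I ⊆ Icc 0 1 := hI.trans (Icc_subset_Icc_right (by norm_num))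
  have hCinv : 4000 * C ≤ t⁻¹ := by
    rw [← one_div, le_div_iff₀ ht]; linarith [h.mul_le]
  have hsmall : C * m ^ 3 ≤ 1 := by
    have hm3 : m ^ 3 ≤ t := (pow_le_of_le_one hm hm1.2 (by norm_num)).trans hmt
    nlinarith [h.mul_le]
  refine (((coordLipOn_crossfade (fun y ↦ h.χ_mem_Icc hm1) hsmall (h.χ_lip m hm1)
    (h.e₀_lip.mono le_rfl hI) (h.e₁_lip.mono le_rfl hI') (fun x hx ↦ h.e₀_mem x (hI' hx))
    (fun x hx ↦ h.e₁_mem x (hI' hx))).comp_swap.add ((hZ.coordLipOn (by positivity)).mono le_rfl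
      le_rfl (prod_mono (Icc_subset_Icc_right hm1.2) hI'))).const_mul
        (inv_nonneg.2 ht.le)).mono ?_ ?_ Subset.rfl
  · calc t⁻¹ * (C * m ^ 2 * t⁻¹ + t / 10000) = C * (m / t) ^ 2 + 1 / 10000 := by field_simp
      _ ≤ C * 1 + 1 / 10000 := by
        gcongr
        exact pow_le_one₀ (by positivity) ((div_le_one ht).2 hmt)
      _ ≤ 1 / 100 * t⁻¹ := by linarith
  · calc t⁻¹ * (t / 10000 + C * m ^ 3 * (t⁻¹ ^ 2 / 2) + t / 10000)
        = 1 / 5000 + C / 2 * (m / t) ^ 3 := by field_simp; ring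
      _ ≤ 1 / 1000 + C / 2 * (m / t) ^ 3 := by linarith

theorem expandingFactor_zero (h : IsSaddleProfile t C χ e₀ e₁) (hZ : Z 0 = 0) :
    expandingFactor t χ e₀ e₁ Z 0 = 1 := by
  simp [expandingFactor, crossfade, h.χ_zero, h.e₁_zero, hZ, h.pos.ne']

theorem contractingFactor_zero (h : IsSaddleProfile t C χ e₀ e₁) (hZ : Z 0 = 0) :
    contractingFactor t χ e₀ e₁ Z 0 = 1 := by
  simp [contractingFactor, crossfade, h.χ_zero, h.e₀_zero, hZ, h.pos.ne']

theorem abs_perturbation_le (h : IsSaddleProfile t C χ e₀ e₁) (hZ0 : Z 0 = 0)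
    (hZ : LipOn (t / 10000) Z unitSquare) {z : ℝ × ℝ} (hz : z ∈ unitSquare) :
    |Z z| ≤ t / 10000 := by
  have hdist : dist z 0 ≤ 1 := by
    rw [dist_zero_right, Prod.norm_def, Real.norm_of_nonneg hz.1.1, Real.norm_of_nonneg hz.2.1]
    exact max_le hz.1.2 hz.2.2
  have hlip := hZ z hz 0 ⟨by simp, by simp⟩
  rw [hZ0, sub_zero] at hlip
  exact hlip.trans (mul_le_of_le_one_right (by linarith [h.pos]) hdist)

theorem abs_expandingFactor_sub_le (h : IsSaddleProfile t C χ e₀ e₁) (hZ0 : Z 0 = 0)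
    (hZ : LipOn (t / 10000) Z unitSquare) {z : ℝ × ℝ}
    (hz : z ∈ Icc 0 (t ^ 2) ×ˢ Icc (48 / 100) (81 / 100)) :
    |expandingFactor t χ e₀ e₁ Z z - 1 / 2| ≤ 1 / 200 := by
  obtain ⟨w, b⟩ := z
  obtain ⟨hw, hb⟩ := hz
  have ht := h.pos
  have ht_le := h.le
  have hb' : b ∈ Icc (0 : ℝ) 1 := ⟨by linarith [hb.1], by linarith [hb.2]⟩
  have h0w : (0 : ℝ) ∈ Icc 0 (t ^ 2) := ⟨le_rfl, by positivity⟩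
  have hlip := h.coordLipOn_expandingFactor hZ (I := Icc 0 (t ^ 2))
    (Icc_subset_Icc_right (by nlinarith)) (Icc_subset_Icc (by norm_num) (by norm_num))
    h.χ_lip_entry (w, b) ⟨hw, hb⟩ (0, b) ⟨h0w, hb⟩
  simp only [sub_zero, sub_self, abs_zero, mul_zero, add_zero, abs_of_nonneg hw.1] at hlip
  have hlip_le : 51 / 100 * t⁻¹ * w ≤ t := by
    calc 51 / 100 * t⁻¹ * w ≤ 51 / 100 * t⁻¹ * t ^ 2 := by gcongr; exact hw.2
      _ = 51 / 100 * t := by field_simp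
      _ ≤ t := by linarith
  have haxis : expandingFactor t χ e₀ e₁ Z (0, b) - 1 / 2 =
      (1 / 2 - χ b) + χ b * t ^ 2 + t * Z (0, b) := by
    simp only [expandingFactor, crossfade, h.e₀_zero, h.e₁_zero]
    field_simp
    ring
  have hZb := abs_le.1 (h.abs_perturbation_le hZ0 hZ (z := (0, b)) ⟨by simp, hb'⟩)
  have hχ := abs_le.1 (h.χ_near_entry b hb)
  have hlip' := abs_le.1 hlip
  rw [abs_le]
  constructor <;> nlinarith

theorem abs_contractingFactor_sub_le (h : IsSaddleProfile t C χ e₀ e₁) (hZ0 : Z 0 = 0)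
    (hZ : LipOn (t / 10000) Z unitSquare) {z : ℝ × ℝ}
    (hz : z ∈ Icc 0 (t ^ 2) ×ˢ Icc (48 / 100) (81 / 100)) :
    |contractingFactor t χ e₀ e₁ Z z - 1| ≤ 1 / 200 := by
  obtain ⟨w, b⟩ := z
  obtain ⟨hw, hb⟩ := hz
  have ht := h.pos
  have ht_le := h.le
  have hb' : b ∈ Icc (0 : ℝ) (81 / 100) := ⟨by linarith [hb.1], hb.2⟩
  have h0w : (0 : ℝ) ∈ Icc 0 (t ^ 2) := ⟨le_rfl, by positivity⟩
  have hlip := h.coordLipOn_contractingFactor hZ Subset.rfl (sq_nonneg t) (by nlinarith)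
    (w, b) ⟨hw, hb'⟩ (0, b) ⟨h0w, hb'⟩
  simp only [sub_zero, sub_self, abs_zero, mul_zero, add_zero, abs_of_nonneg hw.1] at hlip
  have hlip_le : 1 / 100 * t⁻¹ * w ≤ t := by
    calc 1 / 100 * t⁻¹ * w ≤ 1 / 100 * t⁻¹ * t ^ 2 := by gcongr; exact hw.2
      _ = 1 / 100 * t := by field_simp
      _ ≤ t := by linarith
  have haxis : contractingFactor t χ e₀ e₁ Z (0, b) - 1 = t⁻¹ * ((e₀ b - t) + Z (0, b)) := by
    simp only [contractingFactor, crossfade, Prod.swap, h.χ_zero]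
    field_simp
    ring
  have he := h.e₀_lip b hb' 0 ⟨le_rfl, by norm_num⟩
  rw [h.e₀_zero, Real.dist_eq, sub_zero, abs_of_nonneg hb'.1] at he
  have hZb := h.abs_perturbation_le hZ0 hZ (z := (0, b)) ⟨by simp, hb'.1, by linarith [hb.2]⟩
  have haxis_le : |contractingFactor t χ e₀ e₁ Z (0, b) - 1| ≤ 1 / 1000 := by
    rw [haxis, abs_mul, abs_of_pos (inv_pos.2 ht), inv_mul_le_iff₀ ht]
    refine (abs_add_le _ _).trans ?_
    nlinarith [hb.2]
  calc _ ≤ _ := abs_sub_le _ (contractingFactor t χ e₀ e₁ Z (0, b)) _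
    _ ≤ 1 / 200 := by linarith

theorem isSaddlePassage (h : IsSaddleProfile t C χ e₀ e₁) {Z' : ℝ × ℝ → ℝ} (hZ0 : Z 0 = 0)
    (hZ : LipOn (t / 10000) Z unitSquare) (hZ0' : Z' 0 = 0)
    (hZ' : LipOn (t / 10000) Z' unitSquare) :
    IsSaddlePassage t C t⁻¹ (expandingFactor t χ e₀ e₁ Z) (contractingFactor t χ e₀ e₁ Z') := by
  have ht := h.pos
  have ht_le := h.le
  have hC := h.one_le
  have htI : Icc 0 t ⊆ Icc 0 (81 / 100) := Icc_subset_Icc_right (by linarith)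
  have htt : t ^ 2 ≤ t := by nlinarith
  have hCt : C * t ^ 2 ≤ 1 / 4000 := by nlinarith [h.mul_le]
  have hinv : 0 < t⁻¹ := inv_pos.2 ht
  exact
  { pos := ht
    one_le := hC
    mul_le := h.mul_le
    a_zero := h.expandingFactor_zero hZ0
    b_zero := h.contractingFactor_zero hZ0'
    a_lip_saddle := (h.coordLipOn_expandingFactor hZ htI (htI.trans (Icc_subset_Icc_right
      (by norm_num))) (h.χ_lip t ⟨ht.le, by linarith⟩)).mono le_rfl (by linarith) Subset.rfl
    b_lip_saddle := (h.coordLipOn_contractingFactor hZ' htI ht.le le_rfl).mono le_rfl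
      (by rw [div_self ht.ne']; linarith) Subset.rfl
    a_near_entry := fun z ↦ h.abs_expandingFactor_sub_le hZ0 hZ
    b_near_entry := fun z ↦ h.abs_contractingFactor_sub_le hZ0' hZ'
    a_lip_entry := (h.coordLipOn_expandingFactor hZ ((Icc_subset_Icc_right htt).trans htI)
      (Icc_subset_Icc (by norm_num) (by norm_num)) h.χ_lip_entry).mono (by linarith)
      (by norm_num) Subset.rfl
    b_lip_entry := (h.coordLipOn_contractingFactor hZ' (Icc_subset_Icc_left (by norm_num))
      (sq_nonneg t) htt).mono (by linarith)
      (by rw [sq, mul_div_cancel_right₀ t ht.ne']; nlinarith) Subset.rfl }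

end IsSaddleProfile

/-! ### A polynomial saddle profile -/

section Profile

open Topology

section LipOn

variable {X : Type*} [PseudoMetricSpace X] {K m : ℝ} {g : X → ℝ} {S : Set X}

theorem lipOn_id (S : Set ℝ) : LipOn 1 (fun x ↦ x) S := fun x _ y _ ↦ by
  rw [one_mul, Real.dist_eq]

theorem LipOn.const_add_mul (hg : LipOn K g S) (a k : ℝ) :
    LipOn (|k| * K) (fun x ↦ a + k * g x) S := fun x hx y hy ↦ by
  rw [add_sub_add_left_eq_sub, ← mul_sub, abs_mul, mul_assoc]
  exact mul_le_mul_of_nonneg_left (hg x hx y hy) (abs_nonneg k)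

theorem LipOn.pow (hg : LipOn K g S) (hm : ∀ x ∈ S, |g x| ≤ m) (n : ℕ) :
    LipOn (K * (n * m ^ (n - 1))) (fun x ↦ g x ^ n) S := fun x hx y hy ↦ by
  calc |g x ^ n - g y ^ n| ≤ |g x - g y| * n * max |g x| |g y| ^ (n - 1) :=
        abs_pow_sub_pow_le _ _ _
    _ ≤ K * dist x y * n * m ^ (n - 1) := by
        gcongr
        · exact mul_nonneg ((abs_nonneg _).trans (hg x hx y hy)) n.cast_nonneg
        · exact hg x hx y hy
        · exact max_le (hm x hx) (hm y hy)
    _ = K * (n * m ^ (n - 1)) * dist x y := by ring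

theorem LipOn.sum {ι : Type*} {s : Finset ι} {K : ι → ℝ} {g : ι → X → ℝ}
    (hg : ∀ i ∈ s, LipOn (K i) (g i) S) :
    LipOn (∑ i ∈ s, K i) (fun x ↦ ∑ i ∈ s, g i x) S := fun x hx y hy ↦ by
  rw [← Finset.sum_sub_distrib, Finset.sum_mul]
  exact (Finset.abs_sum_le_sum_abs _ _).trans (Finset.sum_le_sum fun i hi ↦ hg i hi x hx y hy)

theorem lipOn_of_hasDerivAt {g g' : ℝ → ℝ} {S : Set ℝ} (hS : Convex ℝ S)
    (hg : ∀ x ∈ S, HasDerivAt g (g' x) x) (hg' : ∀ x ∈ S, |g' x| ≤ K) : LipOn K g S :=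
  fun _ hx _ hy ↦ hS.norm_image_sub_le_of_norm_hasDerivWithin_le
    (fun z hz ↦ (hg z hz).hasDerivWithinAt) hg' hy hx

end LipOn

/-- The quintic smoothstep, decreasing from `1` at `-1` to `0` at `1` with two vanishing
derivatives at both ends. -/
noncomputable def smoothstep (θ : ℝ) : ℝ := (1 - θ) ^ 3 * (8 + 9 * θ + 3 * θ ^ 2) / 16

theorem smoothstep_neg (θ : ℝ) : smoothstep (-θ) = 1 - smoothstep θ := by
  unfold smoothstep; ring

theorem hasDerivAt_smoothstep (θ : ℝ) :
    HasDerivAt smoothstep (-(15 / 16) * (1 - θ ^ 2) ^ 2) θ := by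
  have h := (((hasDerivAt_id θ).const_sub 1).pow 3).mul
    ((((hasDerivAt_id θ).const_mul 9).const_add 8).add (((hasDerivAt_id θ).pow 2).const_mul 3))
  refine (h.div_const 16).congr_deriv ?_
  simp
  ring

theorem smoothstep_nonneg {θ : ℝ} (hθ : θ ≤ 1) : 0 ≤ smoothstep θ := by
  have h : 0 ≤ 8 + 9 * θ + 3 * θ ^ 2 := by nlinarith [sq_nonneg (2 * θ + 3)]
  exact div_nonneg (mul_nonneg (pow_nonneg (sub_nonneg.2 hθ) 3) h) (by norm_num)

theorem smoothstep_mem_Icc {θ : ℝ} (hθ : |θ| ≤ 1) : smoothstep θ ∈ Icc 0 1 := by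
  have h := smoothstep_nonneg (neg_le.1 (neg_le_of_abs_le hθ))
  rw [smoothstep_neg] at h
  exact ⟨smoothstep_nonneg (le_of_abs_le hθ), by linarith⟩

theorem abs_smoothstep_sub_half_le {θ : ℝ} (hθ : |θ| ≤ 1) : |smoothstep θ - 1 / 2| ≤ |θ| := by
  have hlip : LipOn 1 smoothstep (Icc (-1) 1) := by
    refine lipOn_of_hasDerivAt (convex_Icc _ _) (fun x _ ↦ hasDerivAt_smoothstep x) fun x hx ↦ ?_
    have hx2 : x ^ 2 ≤ 1 := sq_le_one_iff_abs_le_one x |>.2 (abs_le.2 hx)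
    rw [abs_mul, abs_neg, abs_of_nonneg (by norm_num), abs_of_nonneg (sq_nonneg (1 - x ^ 2))]
    nlinarith [sq_nonneg x]
  have h := hlip θ (abs_le.1 hθ) 0 (by norm_num)
  have h0 : smoothstep 0 = 1 / 2 := by norm_num [smoothstep]
  rwa [h0, one_mul, Real.dist_eq, sub_zero] at h

/-- The weight of a saddle profile: a smoothstep in `(1 - 2 * b) ^ 15`, hence almost constant
around `1 / 2`. -/
noncomputable def entryWeight (b : ℝ) : ℝ := smoothstep ((1 - 2 * b) ^ 15)

theorem entryWeight_one_sub (b : ℝ) : entryWeight (1 - b) = 1 - entryWeight b := by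
  rw [entryWeight, entryWeight, ← smoothstep_neg]
  ring_nf

theorem entryWeight_zero : entryWeight 0 = 0 := by norm_num [entryWeight, smoothstep]

theorem hasDerivAt_entryWeight (b : ℝ) :
    HasDerivAt entryWeight (225 / 8 * (1 - (1 - 2 * b) ^ 30) ^ 2 * (1 - 2 * b) ^ 14) b := by
  have h1 : HasDerivAt (fun b : ℝ ↦ 1 - 2 * b) (-2) b := by
    simpa using ((hasDerivAt_id b).const_mul 2).const_sub 1
  refine ((hasDerivAt_smoothstep _).comp b (h1.fun_pow 15)).congr_deriv ?_
  push_cast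
  ring

theorem lipOn_entryWeight {m D r : ℝ} {S : Set ℝ} (hS : Convex ℝ S)
    (hr : ∀ x ∈ S, |1 - 2 * x| ≤ r) (hr1 : r ≤ 1) (hD : ∀ x ∈ S, 1 - (1 - 2 * x) ^ 30 ≤ D)
    (hm : 225 / 8 * D ^ 2 * r ^ 14 ≤ m) : LipOn m entryWeight S := by
  refine lipOn_of_hasDerivAt hS (fun x _ ↦ hasDerivAt_entryWeight x) fun x hx ↦ ?_
  have h14 : (1 - 2 * x) ^ 14 ≤ r ^ 14 := by
    rw [← Even.pow_abs (by decide)]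
    exact pow_le_pow_left₀ (abs_nonneg _) (hr x hx) 14
  have h30 : 0 ≤ 1 - (1 - 2 * x) ^ 30 := by
    rw [sub_nonneg, ← Even.pow_abs (by decide)]
    exact pow_le_one₀ (abs_nonneg _) ((hr x hx).trans hr1)
  rw [abs_of_nonneg (mul_nonneg (by positivity) (Even.pow_nonneg (n := 14) (by decide) _))]
  refine le_trans ?_ hm
  gcongr
  exact hD x hx

theorem lipOn_entryWeight_Icc_zero {m : ℝ} (hm : m ∈ Icc (0 : ℝ) 1) :
    LipOn (110000 * m ^ 2) entryWeight (Icc 0 m) := by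
  refine lipOn_entryWeight (convex_Icc _ _) (r := 1) (D := 60 * m) (fun x hx ↦ ?_) le_rfl
    (fun x hx ↦ ?_) (by nlinarith [sq_nonneg m])
  · rw [abs_le]; constructor <;> linarith [hx.1, hx.2, hm.2]
  · have h := one_add_mul_le_pow (a := -(2 * x)) (by linarith [hx.2, hm.2]) 30
    rw [← sub_eq_add_neg] at h
    push_cast at h
    linarith [hx.2]

theorem abs_one_sub_two_mul_le {x : ℝ} (hx : x ∈ Icc (48 / 100 : ℝ) (81 / 100)) :
    |1 - 2 * x| ≤ 62 / 100 := by
  rw [abs_le]; constructor <;> linarith [hx.1, hx.2]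

theorem lipOn_entryWeight_entry : LipOn (4 / 100) entryWeight (Icc (48 / 100) (81 / 100)) :=
  lipOn_entryWeight (convex_Icc _ _) (r := 62 / 100) (D := 1) (fun _ ↦ abs_one_sub_two_mul_le)
    (by norm_num) (fun _ _ ↦ sub_le_self _ (Even.pow_nonneg (by decide) _)) (by norm_num)

theorem entryWeight_mem_Icc {x : ℝ} (hx : x ∈ Icc (0 : ℝ) 1) : entryWeight x ∈ Icc 0 1 := by
  refine smoothstep_mem_Icc ?_
  rw [abs_pow]
  refine pow_le_one₀ (abs_nonneg _) ?_
  rw [abs_le]; constructor <;> linarith [hx.1, hx.2]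

theorem abs_entryWeight_sub_half_le {x : ℝ} (hx : x ∈ Icc (48 / 100 : ℝ) (81 / 100)) :
    |entryWeight x - 1 / 2| ≤ 1 / 1000 := by
  have hθ : |(1 - 2 * x) ^ 15| ≤ 1 / 1000 := by
    rw [abs_pow]
    exact (pow_le_pow_left₀ (abs_nonneg _) (abs_one_sub_two_mul_le hx) 15).trans (by norm_num)
  exact (abs_smoothstep_sub_half_le (hθ.trans (by norm_num))).trans hθ

/-- The rate `e₀` of a saddle profile with `t = n⁻¹`. -/
noncomputable def contractingRate (n : ℕ) (w : ℝ) : ℝ := (n : ℝ)⁻¹ + (1 - (n : ℝ)⁻¹) * w ^ n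

/-- The rate `e₁` of a saddle profile with `t = n⁻¹`: it makes `w ↦ w * expandingRate n w` the
conjugate of `w ↦ w * contractingRate n w` by `w ↦ 1 - w`. -/
noncomputable def expandingRate (n : ℕ) (w : ℝ) : ℝ :=
  (n : ℝ)⁻¹ + (1 - (n : ℝ)⁻¹) * ∑ i ∈ Finset.range (n + 1), (1 - w) ^ i

theorem mul_expandingRate (n : ℕ) (w : ℝ) :
    w * expandingRate n w = 1 - (1 - w) * contractingRate n (1 - w) := by
  have h := mul_neg_geom_sum (1 - w) (n + 1)
  rw [sub_sub_cancel] at h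
  unfold expandingRate contractingRate
  linear_combination (1 - (n : ℝ)⁻¹) * h

section Rates

variable {n : ℕ}

theorem one_sub_natCast_inv_mem_Icc (n : ℕ) : 1 - (n : ℝ)⁻¹ ∈ Icc (0 : ℝ) 1 :=
  ⟨sub_nonneg.2 n.cast_inv_le_one, sub_le_self _ (by positivity)⟩

theorem contractingRate_zero (hn : n ≠ 0) : contractingRate n 0 = (n : ℝ)⁻¹ := by
  simp [contractingRate, hn]

theorem expandingRate_zero (hn : n ≠ 0) : expandingRate n 0 = n := by
  simp only [expandingRate, sub_zero, one_pow, Finset.sum_const, Finset.card_range, nsmul_eq_mul]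
  push_cast
  field_simp
  ring

theorem contractingRate_mem_Icc (hn : n ≠ 0) {x : ℝ} (hx : x ∈ Icc (0 : ℝ) 1) :
    contractingRate n x ∈ Icc (0 : ℝ) n := by
  obtain ⟨h0, -⟩ := one_sub_natCast_inv_mem_Icc n
  have hx0 : 0 ≤ x ^ n := pow_nonneg hx.1 n
  have hx1 : x ^ n ≤ 1 := pow_le_one₀ hx.1 hx.2
  have hn1 : (1 : ℝ) ≤ n := Nat.one_le_cast.2 (Nat.one_le_iff_ne_zero.2 hn)
  refine ⟨by unfold contractingRate; positivity, ?_⟩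
  calc contractingRate n x ≤ (n : ℝ)⁻¹ + (1 - (n : ℝ)⁻¹) * 1 := by unfold contractingRate; gcongr
    _ ≤ n := by linarith

theorem expandingRate_mem_Icc (hn : n ≠ 0) {x : ℝ} (hx : x ∈ Icc (0 : ℝ) 1) :
    expandingRate n x ∈ Icc (0 : ℝ) n := by
  obtain ⟨h0, -⟩ := one_sub_natCast_inv_mem_Icc n
  have hx0 : 0 ≤ 1 - x := sub_nonneg.2 hx.2
  refine ⟨by unfold expandingRate; positivity, ?_⟩
  calc expandingRate n x ≤ expandingRate n 0 := by
        unfold expandingRate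
        gcongr
        exact hx.1
    _ = n := expandingRate_zero hn

theorem lipOn_contractingRate (n : ℕ) {m : ℝ} (hm : 0 ≤ m) :
    LipOn (n * m ^ (n - 1)) (contractingRate n) (Icc 0 m) := by
  obtain ⟨h0, h1⟩ := one_sub_natCast_inv_mem_Icc n
  refine (((lipOn_id _).pow (m := m) (fun x hx ↦ ?_) n).const_add_mul _ _).mono ?_ Subset.rfl
  · rw [abs_of_nonneg hx.1]; exact hx.2
  · rw [one_mul, abs_of_nonneg h0]
    exact mul_le_of_le_one_left (by positivity) h1

theorem lipOn_expandingRate (hn : n ≠ 0) :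
    LipOn ((n : ℝ) ^ 2 / 2) (expandingRate n) (Icc 0 1) := by
  obtain ⟨h0, -⟩ := one_sub_natCast_inv_mem_Icc n
  have hpow : ∀ i ∈ Finset.range (n + 1), LipOn (i : ℝ) (fun x ↦ (1 - x) ^ i) (Icc 0 1) := by
    intro i _
    have h := (((lipOn_id (Icc 0 1)).const_add_mul 1 (-1)).pow (m := 1) (fun x hx ↦ ?_) i)
    · simpa [← sub_eq_add_neg] using h
    · rw [abs_le]; constructor <;> linarith [hx.1, hx.2]
  refine ((LipOn.sum hpow).const_add_mul _ _).mono ?_ Subset.rfl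
  have hsum : (∑ i ∈ Finset.range (n + 1), (i : ℝ)) * 2 = (n + 1) * n := by
    simpa using congrArg (Nat.cast (R := ℝ)) (Finset.sum_range_id_mul_two (n + 1))
  rw [abs_of_nonneg h0, (eq_div_of_mul_eq two_ne_zero hsum)]
  calc (1 - (n : ℝ)⁻¹) * ((n + 1) * n / 2) = (n : ℝ) ^ 2 / 2 - 1 / 2 := by field_simp; ring
    _ ≤ (n : ℝ) ^ 2 / 2 := by linarith

end Rates

theorem isSaddleProfile_entryWeight {n : ℕ} (hn : (440000000 : ℝ) ≤ n)
    (hpow : (n : ℝ) ^ 2 * (81 / 100) ^ n ≤ 81 / 1000000) :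
    IsSaddleProfile (n : ℝ)⁻¹ 110000 entryWeight (contractingRate n) (expandingRate n) := by
  have hn_pos : (0 : ℝ) < n := by linarith
  have hn0 : n ≠ 0 := Nat.cast_pos.1 hn_pos |>.ne'
  have hlip : (n : ℝ) * (81 / 100) ^ (n - 1) ≤ (n : ℝ)⁻¹ / 10000 := by
    rw [← pow_sub_one_mul hn0] at hpow
    rw [← mul_one_div ((n : ℝ)⁻¹), le_inv_mul_iff₀ hn_pos]
    linarith
  exact
  { pos := inv_pos.2 hn_pos
    one_le := by norm_num
    mul_le := by rw [mul_inv_le_iff₀ hn_pos]; linarith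
    χ_zero := entryWeight_zero
    χ_mem := fun x ↦ entryWeight_mem_Icc
    χ_lip := fun m ↦ lipOn_entryWeight_Icc_zero
    χ_near_entry := fun x ↦ abs_entryWeight_sub_half_le
    χ_lip_entry := lipOn_entryWeight_entry
    e₀_zero := contractingRate_zero hn0
    e₁_zero := by rw [expandingRate_zero hn0, inv_inv]
    e₀_mem := fun x ↦ by rw [inv_inv]; exact contractingRate_mem_Icc hn0
    e₁_mem := fun x ↦ by rw [inv_inv]; exact expandingRate_mem_Icc hn0
    e₀_lip := (lipOn_contractingRate n (by norm_num)).mono hlip Subset.rfl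
    e₁_lip := by rw [inv_inv]; exact lipOn_expandingRate hn0 }

theorem exists_isSaddleProfile : ∃ n : ℕ, n ≠ 0 ∧
    IsSaddleProfile (n : ℝ)⁻¹ 110000 entryWeight (contractingRate n) (expandingRate n) := by
  have hlim := tendsto_pow_const_mul_const_pow_of_abs_lt_one 2 (r := (81 / 100 : ℝ))
    (by rw [abs_of_pos] <;> norm_num)
  obtain ⟨n, hpow, hn⟩ := ((hlim.eventually_le_const (by norm_num : (0 : ℝ) < 81 / 1000000)).and
    (tendsto_natCast_atTop_atTop.eventually_ge_atTop (440000000 : ℝ))).exists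
  exact ⟨n, by rintro rfl; norm_num at hn, isSaddleProfile_entryWeight hn hpow⟩

end Profile

/-! ### Polynomial functions on the plane -/

section PlanarPolynomials

open Topology

/-- The algebra of polynomial functions on `ℝ × ℝ`. -/
def planarPolynomials : Subalgebra ℝ (ℝ × ℝ → ℝ) := Algebra.adjoin ℝ {Prod.fst, Prod.snd}

namespace planarPolynomials

variable {g φ ψ : ℝ × ℝ → ℝ}

theorem const_mem (a : ℝ) : (fun _ ↦ a) ∈ planarPolynomials := algebraMap_mem _ a

theorem fst_mem : (fun z ↦ z.1) ∈ planarPolynomials := Algebra.subset_adjoin (by simp)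

theorem snd_mem : (fun z ↦ z.2) ∈ planarPolynomials := Algebra.subset_adjoin (by simp)

theorem comp_mem (hg : g ∈ planarPolynomials) (hφ : φ ∈ planarPolynomials)
    (hψ : ψ ∈ planarPolynomials) : (fun z ↦ g (φ z, ψ z)) ∈ planarPolynomials := by
  induction hg using Algebra.adjoin_induction with
  | mem g hg => rcases hg with rfl | rfl; exacts [hφ, hψ]
  | algebraMap a => exact const_mem a
  | add g h _ _ hg hh => exact add_mem hg hh
  | mul g h _ _ hg hh => exact mul_mem hg hh

theorem analyticOnNhd (hg : g ∈ planarPolynomials) : AnalyticOnNhd ℝ g univ := by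
  induction hg using Algebra.adjoin_induction with
  | mem g hg => rcases hg with rfl | rfl; exacts [analyticOnNhd_fst, analyticOnNhd_snd]
  | algebraMap a => exact analyticOnNhd_const
  | add g h _ _ hg hh => exact hg.add hh
  | mul g h _ _ hg hh => exact hg.mul hh

theorem contDiff {n : WithTop ℕ∞} (hg : g ∈ planarPolynomials) : ContDiff ℝ n g :=
  (analyticOnNhd hg).contDiff

theorem exists_eval_eq (hg : g ∈ planarPolynomials) :
    ∃ P : MvPolynomial (Fin 2) ℝ, ∀ z, g z = MvPolynomial.eval ![z.1, z.2] P := by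
  induction hg using Algebra.adjoin_induction with
  | mem g hg =>
    rcases hg with rfl | rfl
    exacts [⟨MvPolynomial.X 0, by simp⟩, ⟨MvPolynomial.X 1, by simp⟩]
  | algebraMap a => exact ⟨MvPolynomial.C a, by simp⟩
  | add g h _ _ hg hh =>
    obtain ⟨⟨P, hP⟩, ⟨Q, hQ⟩⟩ := And.intro hg hh
    exact ⟨P + Q, by simp [hP, hQ]⟩
  | mul g h _ _ hg hh =>
    obtain ⟨⟨P, hP⟩, ⟨Q, hQ⟩⟩ := And.intro hg hh
    exact ⟨P * Q, by simp [hP, hQ]⟩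

theorem exists_abs_le_and_lipOn (hg : g ∈ planarPolynomials) {S : Set (ℝ × ℝ)}
    (hS : IsCompact S) : ∃ b K, (∀ z ∈ S, |g z| ≤ b) ∧ LipOn K g S := by
  have hg1 : ContDiff ℝ 1 g := contDiff hg
  obtain ⟨b, hb⟩ := hS.exists_bound_of_continuousOn hg1.continuous.continuousOn
  obtain ⟨K, hK⟩ :=
    hg1.locallyLipschitz.locallyLipschitzOn.exists_lipschitzOnWith_of_compact hS
  exact ⟨b, K, hb, fun x hx y hy ↦ hK.dist_le_mul x hx y hy⟩

end planarPolynomials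

section LipOn

variable {X : Type*} [PseudoMetricSpace X] {K L a b r : ℝ} {f g : X → ℝ} {S : Set X}

theorem LipOn.add (hf : LipOn K f S) (hg : LipOn L g S) :
    LipOn (K + L) (fun x ↦ f x + g x) S := fun x hx y hy ↦ by
  rw [add_sub_add_comm, add_mul]
  exact (abs_add_le _ _).trans (add_le_add (hf x hx y hy) (hg x hx y hy))

theorem LipOn.mul (hf : LipOn K f S) (hg : LipOn L g S) (hfa : ∀ x ∈ S, |f x| ≤ a)
    (hgb : ∀ x ∈ S, |g x| ≤ b) : LipOn (K * b + a * L) (fun x ↦ f x * g x) S :=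
  fun x hx y hy ↦ by
    refine (abs_mul_sub_mul_le (hf x hx y hy) (hgb x hx) (hfa y hy) (hg x hx y hy)).trans_eq ?_
    ring

theorem eventually_lipOn_pow_mul (hr : 0 < r) (hr1 : r < 1) (hf : LipOn K f S)
    (hfr : ∀ x ∈ S, |f x| ≤ r) (hg : LipOn L g S) (hgb : ∀ x ∈ S, |g x| ≤ b) {ε : ℝ}
    (hε : 0 < ε) : ∀ᶠ k : ℕ in atTop, LipOn ε (fun x ↦ f x ^ k * g x) S := by
  have hlim : Tendsto (fun k : ℕ ↦ K * (k * r ^ (k - 1)) * b + r ^ k * L) atTop (𝓝 0) := by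
    have hpow : Tendsto (fun k : ℕ ↦ k * r ^ (k - 1)) atTop (𝓝 0) := by
      have h := (tendsto_self_mul_const_pow_of_lt_one hr.le hr1).mul_const r⁻¹
      rw [zero_mul] at h
      refine h.congr fun k ↦ ?_
      cases k <;> simp [pow_succ, hr.ne', mul_assoc]
    simpa using ((hpow.const_mul K).mul_const b).add
      ((tendsto_pow_atTop_nhds_zero_of_lt_one hr.le hr1).mul_const L)
  filter_upwards [hlim.eventually_le_const hε] with k hk
  refine ((hf.pow hfr k).mul hg (fun x hx ↦ ?_) hgb).mono hk Subset.rfl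
  rw [abs_pow]
  exact pow_le_pow_left₀ (abs_nonneg _) (hfr x hx) k

end LipOn

end PlanarPolynomials

/-! ### A polynomial weight with prescribed zeros -/

/-- The quadratic polynomial vanishing at `0` and `1` and equal to `1` at `2`. -/
noncomputable def dip (w : ℝ) : ℝ := w * (w - 1) / 2

/-- A weight vanishing at `0` and `1`, small between them, and equal to `1` at `2` to second
order. -/
noncomputable def dipWeight (M : ℕ) (w : ℝ) : ℝ := 1 - (1 - dip w ^ (M + 2)) ^ 2

/-- The quotient of `dipWeight M w` by `w`. -/
noncomputable def dipQuotient (M : ℕ) (w : ℝ) : ℝ :=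
  (w - 1) / 2 * (dip w ^ (M + 1) * (2 - dip w ^ (M + 2)))

/-- The quotient of `1 - dip (v + 2) ^ (M + 2)` by `-v`. -/
noncomputable def dipCofactor (M : ℕ) (v : ℝ) : ℝ :=
  (v + 3) / 2 * ∑ i ∈ Finset.range (M + 2), dip (v + 2) ^ i

theorem dip_one_sub (w : ℝ) : dip (1 - w) = dip w := by
  unfold dip; ring

theorem dipWeight_one_sub (M : ℕ) (w : ℝ) : dipWeight M (1 - w) = dipWeight M w := by
  rw [dipWeight, dipWeight, dip_one_sub]

theorem mul_dipQuotient (M : ℕ) (w : ℝ) : w * dipQuotient M w = dipWeight M w := by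
  unfold dipQuotient dipWeight
  have h : w * ((w - 1) / 2) = dip w := by unfold dip; ring
  linear_combination dip w ^ (M + 1) * (2 - dip w ^ (M + 2)) * h

theorem one_sub_dipWeight (M : ℕ) (v : ℝ) :
    1 - dipWeight M (v + 2) = (v * dipCofactor M v) ^ 2 := by
  have hgeom := mul_neg_geom_sum (dip (v + 2)) (M + 2)
  have hdip : 1 - dip (v + 2) = -(v * ((v + 3) / 2)) := by unfold dip; ring
  have hneg : v * dipCofactor M v = -(1 - dip (v + 2) ^ (M + 2)) := by
    rw [← hgeom, hdip, dipCofactor]; ring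
  rw [hneg, dipWeight, neg_sq, sub_sub_cancel]

theorem dipQuotient_zero (M : ℕ) : dipQuotient M 0 = 0 := by simp [dipQuotient, dip]

theorem abs_dip_le {w : ℝ} (hw : w ∈ Icc (0 : ℝ) 1) : |dip w| ≤ 1 / 8 := by
  unfold dip
  rw [abs_le]
  constructor <;> nlinarith [hw.1, hw.2, sq_nonneg (w - 1 / 2)]

open planarPolynomials in
theorem eventually_lipOn_dipQuotient_mul {φ R : ℝ × ℝ → ℝ} (hφ : φ ∈ planarPolynomials)
    (hR : R ∈ planarPolynomials) {S : Set (ℝ × ℝ)} (hS : IsCompact S)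
    (hφS : ∀ z ∈ S, φ z ∈ Icc (0 : ℝ) 1) {ε : ℝ} (hε : 0 < ε) :
    ∀ᶠ M in atTop, LipOn ε (fun z ↦ dipQuotient M (φ z) * R z) S := by
  have hdip : (fun z ↦ dip (φ z)) ∈ planarPolynomials :=
    mul_mem (mul_mem hφ (sub_mem hφ (const_mem 1))) (const_mem 2⁻¹)
  obtain ⟨-, K, -, hK⟩ := exists_abs_le_and_lipOn hdip hS
  have hpow {g : ℝ × ℝ → ℝ} (hg : g ∈ planarPolynomials) :
      ∀ᶠ k : ℕ in atTop, LipOn (ε / 2) (fun z ↦ dip (φ z) ^ k * g z) S := by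
    obtain ⟨b, L, hb, hL⟩ := exists_abs_le_and_lipOn hg hS
    exact eventually_lipOn_pow_mul (by norm_num) (by norm_num) hK
      (fun z hz ↦ abs_dip_le (hφS z hz)) hL hb (half_pos hε)
  have h1 := hpow (mul_mem (sub_mem hφ (const_mem 1)) hR)
  have h2 := hpow (mul_mem (mul_mem (sub_mem hφ (const_mem 1)) (const_mem (-1 / 2))) hR)
  have hM1 : Tendsto (fun M : ℕ ↦ M + 1) atTop atTop := tendsto_add_atTop_nat 1
  have hM2 : Tendsto (fun M : ℕ ↦ (M + 1) + (M + 2)) atTop atTop :=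
    hM1.atTop_add_atTop (tendsto_add_atTop_nat 2)
  filter_upwards [hM1.eventually h1, hM2.eventually h2] with M hM1 hM2
  convert (hM1.add hM2).mono (add_halves ε).le Subset.rfl using 2 with z
  simp only [dipQuotient, Pi.mul_apply, Pi.sub_apply]
  ring

/-! ### The heteroclinic square -/

/-- The growth rate of the first coordinate under `squareMap`. -/
noncomputable def squareRate (n : ℕ) : ℝ × ℝ → ℝ :=
  crossfade entryWeight (expandingRate n) (contractingRate n)

/-- A polynomial map with a heteroclinic cycle along the boundary of the unit square, commuting
with the quarter turn of the square. -/
noncomputable def squareMap (n : ℕ) (z : ℝ × ℝ) : ℝ × ℝ :=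
  (z.1 * squareRate n z, z.2 * squareRate n (quarterTurn z))

/-- The quadratic polynomial with fixed points `0` and `1` and slope `1 - σ` at `1`. -/
def fixingLogistic (σ x : ℝ) : ℝ := x * (1 + σ * (1 - x))

/-- The square map, replaced by `z ↦ (κ, fixingLogistic σ z.2)` on the line `z.1 = 2`, to second
order. -/
noncomputable def patchFst (n M : ℕ) (κ σ : ℝ) (z : ℝ × ℝ) : ℝ × ℝ :=
  (1 - dipWeight M z.1) • squareMap n z + dipWeight M z.1 • (κ, fixingLogistic σ z.2)

/-- The square map, replaced by `z ↦ (fixingLogistic σ z.1, κ)` on the line `z.2 = 2`, to second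
order. -/
noncomputable def patchSnd (n M : ℕ) (κ σ : ℝ) (z : ℝ × ℝ) : ℝ × ℝ :=
  (1 - dipWeight M z.2) • squareMap n z + dipWeight M z.2 • (fixingLogistic σ z.1, κ)

theorem one_sub_fixingLogistic (σ x : ℝ) :
    1 - fixingLogistic σ x = fixingLogistic (-σ) (1 - x) := by
  unfold fixingLogistic; ring

theorem crossfade_swap_eq_squareRate (n : ℕ) (z : ℝ × ℝ) :
    crossfade entryWeight (contractingRate n) (expandingRate n) z.swap =
      squareRate n (quarterTurn z) := by
  simp only [squareRate, crossfade, quarterTurn, Prod.fst_swap, Prod.snd_swap,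
    entryWeight_one_sub]
  ring

theorem one_sub_mul_squareRate (n : ℕ) (z : ℝ × ℝ) :
    (1 - z.1) * squareRate n (quarterTurn (quarterTurn z)) = 1 - z.1 * squareRate n z := by
  have h := mul_expandingRate n (1 - z.1)
  rw [sub_sub_cancel] at h
  simp only [squareRate, crossfade, quarterTurn, entryWeight_one_sub]
  linear_combination entryWeight z.2 * h + (1 - entryWeight z.2) * mul_expandingRate n z.1

theorem semiconj_quarterTurn_squareMap (n : ℕ) :
    Function.Semiconj quarterTurn (squareMap n) (squareMap n) := fun z ↦
  Prod.ext rfl (one_sub_mul_squareRate n z).symm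

theorem quarterTurn_blend (s : ℝ) (z z' : ℝ × ℝ) :
    quarterTurn ((1 - s) • z + s • z') = (1 - s) • quarterTurn z + s • quarterTurn z' := by
  ext <;> simp [quarterTurn]; ring

theorem semiconj_quarterTurn_patchFst (n M : ℕ) (κ σ : ℝ) :
    Function.Semiconj quarterTurn (patchFst n M κ σ) (patchSnd n M (1 - κ) σ) := fun z ↦ by
  rw [patchFst, patchSnd, quarterTurn_blend, (semiconj_quarterTurn_squareMap n).eq]
  simp only [quarterTurn, dipWeight_one_sub]

theorem semiconj_quarterTurn_patchSnd (n M : ℕ) (κ σ : ℝ) :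
    Function.Semiconj quarterTurn (patchSnd n M κ σ) (patchFst n M κ (-σ)) := fun z ↦ by
  rw [patchFst, patchSnd, quarterTurn_blend, (semiconj_quarterTurn_squareMap n).eq]
  simp only [quarterTurn, one_sub_fixingLogistic]

theorem patchFst_eq_mul (n M : ℕ) (κ σ : ℝ) (z : ℝ × ℝ) :
    patchFst n M κ σ z =
      (z.1 * (squareRate n z + dipQuotient M z.1 * (κ - z.1 * squareRate n z)),
        z.2 * (squareRate n (quarterTurn z) +
          dipQuotient M z.1 * (z.1 * (1 + σ * (1 - z.2) - squareRate n (quarterTurn z))))) := by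
  simp only [patchFst, squareMap, fixingLogistic, ← mul_dipQuotient, Prod.smul_mk, Prod.mk_add_mk,
    smul_eq_mul]
  ring_nf

theorem patchSnd_eq_mul (n M : ℕ) (κ σ : ℝ) (z : ℝ × ℝ) :
    patchSnd n M κ σ z =
      (z.1 * (squareRate n z +
          dipQuotient M z.2 * (z.2 * (1 + σ * (1 - z.1) - squareRate n z))),
        z.2 * (squareRate n (quarterTurn z) +
          dipQuotient M z.2 * (κ - z.2 * squareRate n (quarterTurn z)))) := by
  simp only [patchSnd, squareMap, fixingLogistic, ← mul_dipQuotient, Prod.smul_mk, Prod.mk_add_mk,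
    smul_eq_mul]
  ring_nf

open planarPolynomials in
theorem entryWeight_comp_mem_planarPolynomials {g : ℝ × ℝ → ℝ} (hg : g ∈ planarPolynomials) :
    (fun z ↦ entryWeight (g z)) ∈ planarPolynomials := by
  have hθ : (fun z ↦ (1 - 2 * g z) ^ 15) ∈ planarPolynomials :=
    pow_mem (sub_mem (const_mem 1) (mul_mem (const_mem 2) hg)) 15
  exact mul_mem (mul_mem (pow_mem (sub_mem (const_mem 1) hθ) 3)
    (add_mem (add_mem (const_mem 8) (mul_mem (const_mem 9) hθ))
      (mul_mem (const_mem 3) (pow_mem hθ 2)))) (const_mem 16⁻¹)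

open planarPolynomials in
theorem squareRate_mem_planarPolynomials (n : ℕ) : squareRate n ∈ planarPolynomials := by
  have hsum : (fun z : ℝ × ℝ ↦ ∑ i ∈ Finset.range (n + 1), (1 - z.1) ^ i) ∈ planarPolynomials := by
    rw [← Finset.sum_fn]
    exact sum_mem fun i _ ↦ pow_mem (sub_mem (const_mem 1) fst_mem) i
  have hχ := entryWeight_comp_mem_planarPolynomials snd_mem
  exact add_mem
    (mul_mem (sub_mem (const_mem 1) hχ) (add_mem (const_mem _) (mul_mem (const_mem _) hsum)))
    (mul_mem hχ (add_mem (const_mem _) (mul_mem (const_mem _) (pow_mem fst_mem n))))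

open planarPolynomials in
theorem squareRate_quarterTurn_mem_planarPolynomials (n : ℕ) :
    (fun z ↦ squareRate n (quarterTurn z)) ∈ planarPolynomials :=
  comp_mem (squareRate_mem_planarPolynomials n) snd_mem (sub_mem (const_mem 1) fst_mem)

section Passage

open planarPolynomials

variable {n : ℕ} {C : ℝ}

theorem eventually_isSaddlePassage_dipQuotient
    (h : IsSaddleProfile (n : ℝ)⁻¹ C entryWeight (contractingRate n) (expandingRate n))
    {φ R R' : ℝ × ℝ → ℝ} (hφ : φ ∈ planarPolynomials) (hφ0 : φ 0 = 0)
    (hφS : ∀ z ∈ unitSquare, φ z ∈ Icc (0 : ℝ) 1)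
    (hR : R ∈ planarPolynomials) (hR' : R' ∈ planarPolynomials) :
    ∀ᶠ M in atTop, ∃ A B, IsSaddlePassage (n : ℝ)⁻¹ C n A B ∧ ∀ z, saddleMap (n : ℝ)⁻¹ A B z =
      (z.1 * (squareRate n z + dipQuotient M (φ z) * R z),
        z.2 * (squareRate n (quarterTurn z) + dipQuotient M (φ z) * R' z)) := by
  have hcompact : IsCompact unitSquare := isCompact_Icc.prod isCompact_Icc
  have hε : 0 < (n : ℝ)⁻¹ / 10000 := div_pos h.pos (by norm_num)
  filter_upwards [eventually_lipOn_dipQuotient_mul hφ hR hcompact hφS hε,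
    eventually_lipOn_dipQuotient_mul hφ hR' hcompact hφS hε] with M hZ hZ'
  have hpassage := h.isSaddlePassage (by simp [hφ0, dipQuotient_zero]) hZ
    (by simp [hφ0, dipQuotient_zero]) hZ'
  rw [inv_inv] at hpassage
  refine ⟨_, _, hpassage, fun z ↦ ?_⟩
  have hn : (n : ℝ) ≠ 0 := (inv_pos.1 h.pos).ne'
  simp only [saddleMap, expandingFactor, contractingFactor, crossfade_swap_eq_squareRate, inv_inv,
    squareRate]
  field_simp

theorem eventually_isSaddlePassage_patchFst
    (h : IsSaddleProfile (n : ℝ)⁻¹ C entryWeight (contractingRate n) (expandingRate n))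
    (κ σ : ℝ) : ∀ᶠ M in atTop, ∃ A B,
      IsSaddlePassage (n : ℝ)⁻¹ C n A B ∧ saddleMap (n : ℝ)⁻¹ A B = patchFst n M κ σ := by
  have hrate := squareRate_mem_planarPolynomials n
  have hrate' := squareRate_quarterTurn_mem_planarPolynomials n
  have hR := sub_mem (const_mem κ) (mul_mem fst_mem hrate)
  have hR' := mul_mem fst_mem (sub_mem (add_mem (const_mem 1)
    (mul_mem (const_mem σ) (sub_mem (const_mem 1) snd_mem))) hrate')
  filter_upwards [eventually_isSaddlePassage_dipQuotient h fst_mem rfl (fun _ hz ↦ hz.1) hR hR']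
    with M ⟨A, B, hAB, heq⟩
  exact ⟨A, B, hAB, funext fun z ↦ (heq z).trans (patchFst_eq_mul n M κ σ z).symm⟩

theorem eventually_isSaddlePassage_patchSnd
    (h : IsSaddleProfile (n : ℝ)⁻¹ C entryWeight (contractingRate n) (expandingRate n))
    (κ σ : ℝ) : ∀ᶠ M in atTop, ∃ A B,
      IsSaddlePassage (n : ℝ)⁻¹ C n A B ∧ saddleMap (n : ℝ)⁻¹ A B = patchSnd n M κ σ := by
  have hrate := squareRate_mem_planarPolynomials n
  have hrate' := squareRate_quarterTurn_mem_planarPolynomials n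
  have hR := mul_mem snd_mem (sub_mem (add_mem (const_mem 1)
    (mul_mem (const_mem σ) (sub_mem (const_mem 1) fst_mem))) hrate)
  have hR' := sub_mem (const_mem κ) (mul_mem snd_mem hrate')
  filter_upwards [eventually_isSaddlePassage_dipQuotient h snd_mem rfl (fun _ hz ↦ hz.2) hR hR']
    with M ⟨A, B, hAB, heq⟩
  exact ⟨A, B, hAB, funext fun z ↦ (heq z).trans (patchSnd_eq_mul n M κ σ z).symm⟩

end Passage

/-! ### The quadratic extension carrying the square -/

section Chart

open MeasureTheory planarPolynomials

/-- The affine chart carrying the heteroclinic square into the plane of the quadratic extension.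
It moves the line `z.1 = 2`, on which `patchFst n M 2 S` is a quadratic polynomial, to the line
`z.1 = 0`, and it conjugates that polynomial to `x ↦ c - x ^ 2` when `x₀` is a fixed point of the
latter with multiplier `1 + S`. -/
noncomputable def squareChart (S x₀ : ℝ) (hS : S ≠ 0) : (ℝ × ℝ) ≃ₜ (ℝ × ℝ) :=
  (Homeomorph.subRight 2).prodCongr ((Homeomorph.mulLeft₀ S hS).trans (Homeomorph.addRight x₀))

theorem squareChart_apply (S x₀ : ℝ) (hS : S ≠ 0) (z : ℝ × ℝ) :
    squareChart S x₀ hS z = (z.1 - 2, S * z.2 + x₀) := rfl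

theorem squareChart_symm_apply (S x₀ : ℝ) (hS : S ≠ 0) (z : ℝ × ℝ) :
    (squareChart S x₀ hS).symm z = (z.1 + 2, S⁻¹ * (z.2 - x₀)) := by
  rw [Homeomorph.symm_apply_eq, squareChart_apply]
  ext
  · simp
  · simp [mul_inv_cancel_left₀ hS]

theorem dip_comp_mem_planarPolynomials {g : ℝ × ℝ → ℝ} (hg : g ∈ planarPolynomials) :
    (fun z ↦ dip (g z)) ∈ planarPolynomials :=
  mul_mem (mul_mem hg (sub_mem hg (const_mem 1))) (const_mem 2⁻¹)

theorem dipQuotient_fst_mem_planarPolynomials (M : ℕ) :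
    (fun z ↦ dipQuotient M z.1) ∈ planarPolynomials := by
  have hdip := dip_comp_mem_planarPolynomials fst_mem
  exact mul_mem (mul_mem (sub_mem fst_mem (const_mem 1)) (const_mem 2⁻¹))
    (mul_mem (pow_mem hdip (M + 1)) (sub_mem (const_mem 2) (pow_mem hdip (M + 2))))

theorem dipCofactor_fst_mem_planarPolynomials (M : ℕ) :
    (fun z ↦ dipCofactor M z.1) ∈ planarPolynomials := by
  have hdip := dip_comp_mem_planarPolynomials (add_mem fst_mem (const_mem 2))
  have hsum : (fun z ↦ ∑ i ∈ Finset.range (M + 2), dip (z.1 + 2) ^ i) ∈ planarPolynomials := by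
    rw [← Finset.sum_fn]
    exact sum_mem fun i _ ↦ pow_mem hdip i
  exact mul_mem (mul_mem (add_mem fst_mem (const_mem 3)) (const_mem 2⁻¹)) hsum

theorem comp_squareChart_symm_mem_planarPolynomials {g : ℝ × ℝ → ℝ}
    (hg : g ∈ planarPolynomials) (S x₀ : ℝ) (hS : S ≠ 0) :
    (fun z ↦ g ((squareChart S x₀ hS).symm z)) ∈ planarPolynomials := by
  simp only [squareChart_symm_apply]
  exact comp_mem hg (add_mem fst_mem (const_mem 2))
    (mul_mem (const_mem S⁻¹) (sub_mem snd_mem (const_mem x₀)))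

theorem exists_semiconj_squareChart_quadExtension (n M : ℕ) {c S x₀ : ℝ} (hS : S ≠ 0)
    (hfix : c - x₀ ^ 2 = x₀) (hslope : -2 * x₀ = 1 + S) :
    ∃ A ∈ planarPolynomials, ∃ B ∈ planarPolynomials,
      Function.Semiconj (squareChart S x₀ hS) (patchFst n M 2 S) (quadExtension A B c) := by
  have hA : (fun z ↦ (squareMap n z).1 - 2) ∈ planarPolynomials :=
    sub_mem (mul_mem fst_mem (squareRate_mem_planarPolynomials n)) (const_mem 2)
  have hB : (fun z ↦ S * ((squareMap n z).2 - fixingLogistic S z.2)) ∈ planarPolynomials :=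
    mul_mem (const_mem S) (sub_mem
      (mul_mem snd_mem (squareRate_quarterTurn_mem_planarPolynomials n))
      (mul_mem snd_mem (add_mem (const_mem 1)
        (mul_mem (const_mem S) (sub_mem (const_mem 1) snd_mem)))))
  have hcof := pow_mem (dipCofactor_fst_mem_planarPolynomials M) 2
  refine ⟨_, mul_mem hcof (comp_squareChart_symm_mem_planarPolynomials hA S x₀ hS),
    _, mul_mem hcof (comp_squareChart_symm_mem_planarPolynomials hB S x₀ hS), fun z ↦ ?_⟩
  have hweight := one_sub_dipWeight M (z.1 - 2)
  rw [sub_add_cancel] at hweight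
  simp only [quadExtension, quadRenorm_zero, Pi.mul_apply, Pi.pow_apply,
    Homeomorph.symm_apply_apply]
  simp only [squareChart_apply, patchFst, fixingLogistic, Prod.smul_mk, Prod.fst_add, Prod.snd_add,
    Prod.smul_fst, Prod.smul_snd, smul_eq_mul, Prod.mk.injEq]
  constructor
  · linear_combination ((squareMap n z).1 - 2) * hweight
  · linear_combination S * ((squareMap n z).2 - z.2 * (1 + S * (1 - z.2))) * hweight
      - hfix - S * z.2 * hslope

theorem quasiMeasurePreserving_of_mul_analytic {a b : ℝ × ℝ → ℝ} (ha : AnalyticOnNhd ℝ a univ)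
    (hb : AnalyticOnNhd ℝ b univ) (ha0 : a 0 ≠ 0) (hb0 : b 0 ≠ 0) (p q : ℝ) :
    Measure.QuasiMeasurePreserving fun z : ℝ × ℝ ↦ (z.1 * a z + p, z.2 * b z + q) := by
  have hderiv : HasFDerivAt (fun z : ℝ × ℝ ↦ (z.1 * a z + p, z.2 * b z + q))
      ((a 0 • ContinuousLinearMap.fst ℝ ℝ ℝ).prod (b 0 • ContinuousLinearMap.snd ℝ ℝ ℝ)) 0 := by
    have hfst := (hasFDerivAt_fst (𝕜 := ℝ) (p := (0 : ℝ × ℝ))).mul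
      (ha 0 (mem_univ _)).differentiableAt.hasFDerivAt
    have hsnd := (hasFDerivAt_snd (𝕜 := ℝ) (p := (0 : ℝ × ℝ))).mul
      (hb 0 (mem_univ _)).differentiableAt.hasFDerivAt
    simpa using (hfst.add_const p).prodMk (hsnd.add_const q)
  refine quasiMeasurePreserving_of_analyticOnNhd_of_det_ne_zero (z := 0)
    (((analyticOnNhd_fst.mul ha).add analyticOnNhd_const).prod
      ((analyticOnNhd_snd.mul hb).add analyticOnNhd_const)) ?_
  rw [hderiv.fderiv, det_continuousLinearMap_prod]
  simp [ha0, hb0]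

theorem quasiMeasurePreserving_patchFst {n : ℕ} (hn : n ≠ 0) (M : ℕ) (κ σ : ℝ) :
    Measure.QuasiMeasurePreserving (patchFst n M κ σ) := by
  have hrate := squareRate_mem_planarPolynomials n
  have hrate' := squareRate_quarterTurn_mem_planarPolynomials n
  have hquot := dipQuotient_fst_mem_planarPolynomials M
  have hone := entryWeight_one_sub 0
  simp only [sub_zero, entryWeight_zero] at hone
  have hA := add_mem hrate (mul_mem hquot (sub_mem (const_mem κ) (mul_mem fst_mem hrate)))
  have hB := add_mem hrate' (mul_mem hquot (mul_mem fst_mem (sub_mem (add_mem (const_mem 1)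
    (mul_mem (const_mem σ) (sub_mem (const_mem 1) snd_mem))) hrate')))
  convert quasiMeasurePreserving_of_mul_analytic (analyticOnNhd hA) (analyticOnNhd hB)
    ?_ ?_ 0 0 using 2 with z
  · simpa using patchFst_eq_mul n M κ σ z
  · simpa [dipQuotient_zero, squareRate, crossfade, entryWeight_zero,
      expandingRate_zero hn] using hn
  · simpa [dipQuotient_zero, squareRate, crossfade, quarterTurn, hone,
      contractingRate_zero hn] using hn

theorem quasiMeasurePreserving_squareChart {S : ℝ} (hS : S ≠ 0) (x₀ : ℝ) :
    Measure.QuasiMeasurePreserving (squareChart S x₀ hS) := by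
  convert quasiMeasurePreserving_of_mul_analytic (a := fun _ ↦ 1) (b := fun _ ↦ S)
    analyticOnNhd_const analyticOnNhd_const one_ne_zero hS (-2) x₀ using 2 with z
  rw [squareChart_apply]
  ext <;> ring

theorem quasiMeasurePreserving_squareChart_symm {S : ℝ} (hS : S ≠ 0) (x₀ : ℝ) :
    Measure.QuasiMeasurePreserving (squareChart S x₀ hS).symm := by
  convert quasiMeasurePreserving_of_mul_analytic (a := fun _ ↦ 1) (b := fun _ ↦ S⁻¹)
    analyticOnNhd_const analyticOnNhd_const one_ne_zero (inv_ne_zero hS) 2 (-(S⁻¹ * x₀))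
    using 2 with z
  rw [squareChart_symm_apply]
  ext <;> ring

theorem quasiMeasurePreserving_of_semiconj_squareChart {n : ℕ} (hn : n ≠ 0) {M : ℕ}
    {κ σ S x₀ : ℝ} {hS : S ≠ 0} {f : ℝ × ℝ → ℝ × ℝ}
    (h : Function.Semiconj (squareChart S x₀ hS) (patchFst n M κ σ) f) :
    Measure.QuasiMeasurePreserving f := by
  have hf : f = squareChart S x₀ hS ∘ patchFst n M κ σ ∘ (squareChart S x₀ hS).symm := by
    ext1 z
    simp [h.eq]
  rw [hf]
  exact (quasiMeasurePreserving_squareChart hS x₀).comp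
    ((quasiMeasurePreserving_patchFst hn M κ σ).comp
      (quasiMeasurePreserving_squareChart_symm hS x₀))

end Chart

theorem natDegree_le_totalDegree_of_eval_eq {p : Polynomial ℝ} {Q : MvPolynomial (Fin 2) ℝ}
    (h : ∀ x, MvPolynomial.eval ![0, x] Q = p.eval x) : p.natDegree ≤ Q.totalDegree := by
  have hp : MvPolynomial.aeval ![0, Polynomial.X] Q = p := by
    refine Polynomial.funext fun x ↦ ?_
    rw [← h, ← Polynomial.coe_aeval_eq_eval, MvPolynomial.comp_aeval_apply,
      ← MvPolynomial.coe_aeval_eq_eval]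
    refine congrArg (MvPolynomial.aeval · Q) (funext fun i ↦ ?_)
    fin_cases i <;> simp
  have hdeg := MvPolynomial.aeval_natDegree_le (n := 1) Q le_rfl ![0, Polynomial.X] fun i ↦ by
    fin_cases i <;> simp
  rwa [hp, mul_one] at hdeg

open planarPolynomials in
theorem isPolyMapDegTwo_quadExtension {A B : ℝ × ℝ → ℝ} (hA : A ∈ planarPolynomials)
    (hB : B ∈ planarPolynomials) (c : ℝ) : IsPolyMapDegTwo (quadExtension A B c) := by
  obtain ⟨P, hP⟩ := exists_eval_eq (mul_mem (pow_mem fst_mem 2) hA)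
  obtain ⟨Q, hQ⟩ := exists_eval_eq
    (add_mem (sub_mem (const_mem c) (pow_mem snd_mem 2)) (mul_mem (pow_mem fst_mem 2) hB))
  refine ⟨P, Q, le_max_of_le_right ?_, fun z ↦ ?_⟩
  · have hdeg : (Polynomial.C c - Polynomial.X ^ 2).natDegree ≤ Q.totalDegree :=
      natDegree_le_totalDegree_of_eval_eq fun x ↦ by simp [← hQ (0, x)]
    rwa [Polynomial.natDegree_sub_eq_right_of_natDegree_lt (by simp),
      Polynomial.natDegree_X_pow] at hdeg
  · rw [← hP, ← hQ, quadExtension, quadRenorm_zero]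
    rfl

theorem exists_forall_semiconj_hasInfinitelyManySinks {n : ℕ} {C : ℝ}
    (h : IsSaddleProfile (n : ℝ)⁻¹ C entryWeight (contractingRate n) (expandingRate n)) (S : ℝ) :
    ∃ M, ∀ (L : (ℝ × ℝ) ≃ₜ (ℝ × ℝ)) (f : ℝ × ℝ → ℝ × ℝ),
      Function.Semiconj L (patchFst n M 2 S) f → HasInfinitelyManySinks f := by
  obtain ⟨M, ⟨A₀, B₀, h₀, e₀⟩, ⟨A₁, B₁, h₁, e₁⟩, ⟨A₂, B₂, h₂, e₂⟩, A₃, B₃, h₃, e₃⟩ :=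
    ((eventually_isSaddlePassage_patchFst h 2 S).and
      ((eventually_isSaddlePassage_patchSnd h (1 - 2) S).and
        ((eventually_isSaddlePassage_patchFst h (1 - 2) (-S)).and
          (eventually_isSaddlePassage_patchSnd h 2 (-S))))).exists
  have hturn₀ := semiconj_quarterTurn_patchFst n M 2 S
  have hturn₁ := semiconj_quarterTurn_patchSnd n M (1 - 2) S
  have hturn₂ := semiconj_quarterTurn_patchFst n M (1 - 2) (-S)
  have hturn₃ := semiconj_quarterTurn_patchSnd n M 2 (-S)
  rw [← e₀, ← e₁] at hturn₀
  rw [← e₁, ← e₂] at hturn₁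
  rw [sub_sub_cancel, ← e₂, ← e₃] at hturn₂
  rw [neg_neg, ← e₃, ← e₀] at hturn₃
  refine ⟨M, fun L f hL ↦ hasInfinitelyManySinks_of_isSaddlePassage
    (A := ![A₀, A₁, A₂, A₃]) (B := ![B₀, B₁, B₂, B₃]) L (e₀ ▸ hL) (fun i ↦ ?_)
    (Fin.forall_fin_succ.2 ⟨h₀, Fin.forall_fin_succ.2 ⟨h₁, Fin.forall_fin_two.2 ⟨h₂, h₃⟩⟩⟩)⟩
  fin_cases i
  exacts [hturn₀, hturn₁, hturn₂, hturn₃]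

/-- There exists a polynomial map `f : ℝ² → ℝ²` of degree at least 2 having infinitely many
distinct sinks and a period doubling Cantor attractor. -/
theorem exists_polyMap_with_infinitely_many_sinks_and_PD_attractor :
    ∃ f : ℝ × ℝ → ℝ × ℝ, IsPolyMapDegTwo f ∧ HasInfinitelyManySinks f ∧
      ∃ A : Set (ℝ × ℝ), IsPDCantorAttractor f A := by
  obtain ⟨c, hc⟩ := exists_infinitelyRenormalizable
  obtain ⟨n, hn, hprofile⟩ := exists_isSaddleProfile
  have hcpos : 0 < c := by simpa [quadRenorm_zero] using hc.critValue_pos 0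
  obtain ⟨S, hSpos, hS⟩ : ∃ S > 0, S ^ 2 = 1 + 4 * c :=
    ⟨√(1 + 4 * c), Real.sqrt_pos.2 (by positivity), Real.sq_sqrt (by positivity)⟩
  obtain ⟨M, hM⟩ := exists_forall_semiconj_hasInfinitelyManySinks hprofile S
  obtain ⟨A, hA, B, hB, hconj⟩ := exists_semiconj_squareChart_quadExtension n M hSpos.ne'
    (c := c) (x₀ := (-1 - S) / 2) (by linear_combination -hS / 4) (by ring)
  exact ⟨quadExtension A B c, isPolyMapDegTwo_quadExtension hA hB c, hM _ _ hconj,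
    hc.exists_isPDCantorAttractor_quadExtension
      (planarPolynomials.contDiff hA) (planarPolynomials.contDiff hB)
      (quasiMeasurePreserving_of_semiconj_squareChart hn hconj)⟩
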